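/- arXiv:1605.06660 — 7 statements merged into one kernel-verified Lean document; each statement's English description precedes it below -/
import Mathlib

section
/- Let p be a fixed nonnegative integer, λ ∈ {-1, 0}, and let (α_n)_{n≥1} be a sequence of reals with α_n ≥ 0 for all n and sup_n n·α_n < ∞. Then there exist a constant A₂ > 0 and an integer N ≥ 1 such that for all n ≥ N and all x ∈ I, the fourth central moment satisfies Σ_k w_{n,k}^{(α_n)}(x)·(k/n - x)⁴ ≤ A₂·(1+x²)²/n. -/
/-!
The weights are Pólya-urn probabilities: with `m = n + p`, the case `λ = -1` is the number of
successes in `m` draws (beta-binomial law) and `λ = 0` is the number of failures before the `m`-th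
success (inverse Pólya law).  Both families are put into a form with free initial parameters `a`
and `b` in place of `x` and `1 + λ x`.

Shifting the parameters absorbs a factor `k`: `k W_{m,a,b}(k)` is a multiple of `W(k - 1)` with
shifted `m, a, b`.  Iterating gives the factorial moments as `S * ∏_{i<r} (n fᵢ)`, where
`S` is the total mass and every `fᵢ` equals `x + O((1 + x) / n)`
(`hasSum_descFactorial_mul_polya` and `hasSum_descFactorial_mul_invPolya`).
Only `0 ≤ S ≤ 1` is used.  For `λ = -1` the sums are finite and conditioning on the first draw gives
`S = 1`.  For `λ = 0` the same conditioning bounds the partial sums by `1`, and a telescoping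
identity for the ratio `W(k+1) / W(k)` shows that the mass is invariant under the parameter shift.

Finally (`fourth_moment_le`), the fourth central moment is expanded in factorial moments.  Up to
an error `O((1 + x)^4 / n)` it equals `S (x^4 - 4 x^4 + 6 x^4 - 4 x^4 + x^4) = 0`, and
`(1 + x)^4 ≤ 4 (1 + x^2)^2`.
-/

/-- The weights `w_{n,k}^{(α)}(x)` of the generalized positive linear operator,
for the parameter `lam`(= λ) which is `-1` or `0`.  Empty products equal `1`;
for `lam = -1` and `k > n + p` the binomial coefficient vanishes, so these
weights vanish and summing over all `k : ℕ` is the same as summing over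
`0 ≤ k ≤ n + p`. -/
noncomputable def w (n p : ℕ) (lam : ℤ) (α x : ℝ) (k : ℕ) : ℝ :=
  (((n : ℝ) + p) / ((n : ℝ) + p + ((lam : ℝ) + 1) * k)) *
    (Nat.choose ((n : ℤ) + p + (lam + 1) * k).toNat k : ℝ) *
    (∏ i ∈ Finset.range k, (x + (i : ℝ) * α)) *
    (∏ i ∈ Finset.range ((n : ℤ) + p + lam * k).toNat,
        (1 + (lam : ℝ) * x + (i : ℝ) * α)) /
    (∏ i ∈ Finset.range ((n : ℤ) + p + (lam + 1) * k).toNat,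
        (1 + ((lam : ℝ) + 1) * x + (i : ℝ) * α))

/-- The interval `I`: `[0,1]` when `λ = -1` and `[0,∞)` when `λ = 0`. -/
noncomputable def Iset (lam : ℤ) : Set ℝ :=
  if lam = -1 then Set.Icc (0 : ℝ) 1 else Set.Ici (0 : ℝ)

open Finset Filter Topology

/-- The rising factorial with step `α`: `x (x + α) ⋯ (x + (n - 1) α)`. -/
noncomputable def rise (α x : ℝ) (n : ℕ) : ℝ := ∏ i ∈ range n, (x + (i : ℝ) * α)

lemma rise_zero (α x : ℝ) : rise α x 0 = 1 := by simp [rise]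

lemma rise_succ (α x : ℝ) (n : ℕ) : rise α x (n + 1) = rise α x n * (x + n * α) := by
  simp [rise, prod_range_succ]

lemma rise_succ' (α x : ℝ) (n : ℕ) : rise α x (n + 1) = x * rise α (x + α) n := by
  unfold rise
  rw [prod_range_succ', mul_comm]
  simp only [Nat.cast_zero, zero_mul, add_zero, Nat.cast_add, Nat.cast_one]
  congr 1
  exact prod_congr rfl fun i _ => by ring

lemma rise_pos {α x : ℝ} (hα : 0 ≤ α) (hx : 0 < x) (n : ℕ) : 0 < rise α x n :=
  prod_pos fun i _ => by positivity

lemma rise_nonneg {α x : ℝ} (hα : 0 ≤ α) (hx : 0 ≤ x) (n : ℕ) : 0 ≤ rise α x n :=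
  prod_nonneg fun i _ => by positivity

/-- If `k W(k)` is `c` times the shifted `W'(k - 1)`, factorial moments of `W` come from `W'`. -/
lemma hasSum_descFactorial_succ {W W' : ℕ → ℝ} {c s : ℝ} {r : ℕ}
    (hshift : ∀ k : ℕ, ((k : ℝ) + 1) * W (k + 1) = c * W' k)
    (h : HasSum (fun k : ℕ => (k.descFactorial r : ℝ) * W' k) s) :
    HasSum (fun k : ℕ => (k.descFactorial (r + 1) : ℝ) * W k) (c * s) := by
  rw [← hasSum_nat_add_iff' 1]
  simp only [sum_range_one, Nat.zero_descFactorial_succ, Nat.cast_zero, zero_mul, sub_zero]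
  refine (h.mul_left c).congr_fun ?_
  intro k
  simp only [Nat.succ_descFactorial_succ]
  push_cast
  linear_combination (k.descFactorial r : ℝ) * hshift k

/-! ### The Pólya (beta-binomial) weights -/

/-- The probability of `k` successes in `m` draws from a Pólya urn with parameters `a`, `b`, `α`. -/
noncomputable def polya (α : ℝ) (m : ℕ) (a b : ℝ) (k : ℕ) : ℝ :=
  (m.choose k : ℝ) * rise α a k * rise α b (m - k) / rise α (a + b) m

/-- The total mass is `1`, by conditioning on the first draw. -/
lemma hasSum_polya {α : ℝ} (hα : 0 ≤ α) (m : ℕ) :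
    ∀ a b : ℝ, 0 < a + b → HasSum (polya α m a b) 1 := by
  induction m with
  | zero =>
    intro a b _
    convert hasSum_ite_eq (0 : ℕ) (1 : ℝ) using 1
    ext k
    cases k <;> simp [polya, rise_zero]
  | succ m ih =>
    intro a b hab
    have h1 := ih (a + α) b (by linarith)
    have h2 := ih a (b + α) (by linarith)
    rw [← hasSum_nat_add_iff' 1] at h2 ⊢
    have h3 := (h1.mul_left (a / (a + b))).add (h2.mul_left (b / (a + b)))
    have hR := (rise_pos hα (show 0 < a + b + α by linarith) m).ne'
    have e1 : a + α + b = a + b + α := by ring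
    have e2 : a + (b + α) = a + b + α := by ring
    have hval : 1 - ∑ i ∈ range 1, polya α (m + 1) a b i
        = a / (a + b) * 1 + b / (a + b) * (1 - ∑ i ∈ range 1, polya α m a (b + α) i) := by
      simp only [sum_range_one, polya, Nat.choose_zero_right, Nat.sub_zero, rise_zero, e2,
        rise_succ' α b, rise_succ' α (a + b)]
      field_simp
      ring
    rw [hval]
    refine h3.congr_fun fun k => ?_
    simp only [polya, Nat.choose_succ_succ, Nat.add_sub_add_right, e1, e2]
    rw [rise_succ' α a, rise_succ' α (a + b)]
    rcases Nat.lt_or_ge k m with hk | hk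
    · obtain ⟨j, rfl⟩ := Nat.exists_eq_add_of_lt hk
      rw [show k + j + 1 - k = j + 1 by omega, show k + j + 1 - (k + 1) = j by omega,
        rise_succ' α b]
      push_cast
      field_simp
    · rw [Nat.choose_eq_zero_of_lt (show m < k + 1 by omega)]
      push_cast
      field_simp
      ring

lemma polya_shift {α : ℝ} (m : ℕ) (a b : ℝ) (k : ℕ) :
    ((k : ℝ) + 1) * polya α m a b (k + 1)
      = (m * a / (a + b)) * polya α (m - 1) (a + α) b k := by
  cases m with
  | zero => simp [polya]
  | succ m =>
    have h : ((m : ℝ) + 1) * m.choose k = (m + 1).choose (k + 1) * ((k : ℝ) + 1) := by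
      exact_mod_cast Nat.add_one_mul_choose_eq m k
    simp only [polya, Nat.add_sub_add_right, Nat.add_sub_cancel]
    rw [rise_succ' α a, rise_succ' α (a + b), show a + α + b = a + b + α by ring]
    push_cast
    rw [div_mul_div_comm, ← mul_div_assoc]
    congr 1
    linear_combination -(a * rise α (a + α) k * rise α b (m - k)) * h

lemma hasSum_descFactorial_mul_polya {α : ℝ} (hα : 0 ≤ α) (r : ℕ) :
    ∀ (m : ℕ) (a b : ℝ), 0 < a + b →
      HasSum (fun k : ℕ => (k.descFactorial r : ℝ) * polya α m a b k)
        (∏ i ∈ range r, (((m : ℝ) - i) * (a + i * α) / (a + b + i * α))) := by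
  induction r with
  | zero => intro m a b hab; simpa using hasSum_polya hα m a b hab
  | succ r ih =>
    intro m a b hab
    have h := hasSum_descFactorial_succ (polya_shift m a b)
      (ih (m - 1) (a + α) b (by linarith))
    convert h using 1
    rw [prod_range_succ', mul_comm]
    cases m with
    | zero => simp
    | succ m =>
      congr 1
      · simp
      · refine prod_congr rfl fun i _ => ?_
        simp only [Nat.add_sub_cancel]
        push_cast
        congr 1 <;> ring

/-! ### The inverse Pólya weights -/

/-- The probability of `k` failures before the `m`-th success in a Pólya urn, where `a` and `b` are
the initial weights of failure and success. -/
noncomputable def invPolya (α : ℝ) (m : ℕ) (a b : ℝ) (k : ℕ) : ℝ :=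
  (m.multichoose k : ℝ) * rise α a k * rise α b m / rise α (a + b) (m + k)

lemma invPolya_nonneg {α : ℝ} (hα : 0 ≤ α) (m : ℕ) {a b : ℝ} (ha : 0 ≤ a) (hb : 0 < b) (k : ℕ) :
    0 ≤ invPolya α m a b k := by
  have := rise_nonneg hα ha k
  have := rise_pos hα hb m
  have := rise_pos hα (show 0 < a + b by linarith) (m + k)
  unfold invPolya
  positivity

/-- Partial sums are at most `1`, by conditioning on the first draw. -/
lemma sum_invPolya_le {α : ℝ} (hα : 0 ≤ α) (K : ℕ) :
    ∀ (m : ℕ) (a b : ℝ), 0 ≤ a → 0 < b → ∑ k ∈ range K, invPolya α m a b k ≤ 1 := by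
  induction K with
  | zero => intros; simp
  | succ K ihK =>
    intro m
    induction m with
    | zero =>
      intro a b ha hb
      rw [sum_range_succ']
      simp [invPolya, rise_zero, Nat.multichoose_zero_succ]
    | succ m ihm =>
      intro a b ha hb
      have h1 := ihK (m + 1) (a + α) b (by linarith) hb
      have h2 := ihm a (b + α) ha (by linarith)
      have hab : 0 < a + b := by linarith
      have hne := hab.ne'
      have hR := fun j => (rise_pos hα (show 0 < a + b + α by linarith) j).ne'
      have e1 : a + α + b = a + b + α := by ring
      have e2 : a + (b + α) = a + b + α := by ring
      have key : ∑ k ∈ range (K + 1), invPolya α (m + 1) a b k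
          = a / (a + b) * ∑ k ∈ range K, invPolya α (m + 1) (a + α) b k
            + b / (a + b) * ∑ k ∈ range (K + 1), invPolya α m a (b + α) k := by
        rw [sum_range_succ', sum_range_succ' _ K, mul_add, mul_sum, mul_sum, ← add_assoc,
          ← sum_add_distrib]
        congr 1
        · refine sum_congr rfl fun k _ => ?_
          simp only [invPolya, Nat.multichoose_succ_succ, e1, e2]
          rw [show m + 1 + (k + 1) = (m + k + 1) + 1 by ring, show m + 1 + k = m + k + 1 by ring,
            show m + (k + 1) = m + k + 1 by ring, rise_succ' α (a + b), rise_succ' α b,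
            rise_succ' α a]
          have := hR (m + k + 1)
          push_cast
          field_simp
          ring
        · simp only [invPolya, Nat.multichoose_zero_right, rise_zero, add_zero, e2]
          rw [rise_succ' α (a + b), rise_succ' α b]
          have := hR m
          field_simp
      rw [key]
      calc _ ≤ a / (a + b) * 1 + b / (a + b) * 1 := by gcongr
        _ = 1 := by field_simp

lemma summable_invPolya {α : ℝ} (hα : 0 ≤ α) (m : ℕ) {a b : ℝ} (ha : 0 ≤ a) (hb : 0 < b) :
    Summable (invPolya α m a b) :=
  summable_of_sum_range_le (invPolya_nonneg hα m ha hb)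
    fun K => sum_invPolya_le hα K m a b ha hb

lemma succ_mul_multichoose_succ (m k : ℕ) :
    (k + 1) * m.multichoose (k + 1) = m * (m + 1).multichoose k := by
  cases m with
  | zero => simp [Nat.multichoose_zero_succ]
  | succ m =>
    rw [Nat.multichoose_eq, Nat.multichoose_eq, show m + 1 + (k + 1) - 1 = m + k + 1 by omega,
      show m + 1 + 1 + k - 1 = m + k + 1 by omega]
    have := Nat.choose_succ_right_eq (m + k + 1) k
    rw [show m + k + 1 - k = m + 1 by omega] at this
    linarith

lemma succ_mul_multichoose_succ' (m k : ℕ) :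
    (k + 1) * m.multichoose (k + 1) = (m + k) * m.multichoose k := by
  cases m with
  | zero => cases k <;> simp [Nat.multichoose_zero_succ]
  | succ m =>
    rw [Nat.multichoose_eq, Nat.multichoose_eq, show m + 1 + (k + 1) - 1 = m + k + 1 by omega,
      show m + 1 + k - 1 = m + k by omega]
    have := Nat.add_one_mul_choose_eq (m + k) k
    linarith

lemma invPolya_shift {α : ℝ} (m : ℕ) (a : ℝ) {b : ℝ} (hb : α < b) (k : ℕ) :
    ((k : ℝ) + 1) * invPolya α m a b (k + 1)
      = (m * a / (b - α)) * invPolya α (m + 1) (a + α) (b - α) k := by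
  have h : ((k : ℝ) + 1) * m.multichoose (k + 1) = m * (m + 1).multichoose k := by
    exact_mod_cast succ_mul_multichoose_succ m k
  have hne : b - α ≠ 0 := by linarith
  simp only [invPolya]
  rw [show a + α + (b - α) = a + b by ring, show m + 1 + k = m + (k + 1) by ring,
    rise_succ' α (b - α), sub_add_cancel, rise_succ' α a, div_mul_div_comm, ← mul_div_assoc,
    mul_comm (b - α) (rise α (a + b) _), ← div_div]
  rw [eq_div_iff hne, div_mul_eq_mul_div]
  congr 1
  linear_combination (a * rise α (a + α) k * rise α b m * (b - α)) * h

/-- The ratio of consecutive weights, with denominators cleared. -/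
lemma invPolya_ratio {α : ℝ} (hα : 0 ≤ α) (m : ℕ) {a b : ℝ} (ha : 0 ≤ a) (hb : 0 < b) (k : ℕ) :
    ((k : ℝ) + 1) * (a + b + (m + k) * α) * invPolya α m a b (k + 1)
      = (m + k) * (a + k * α) * invPolya α m a b k := by
  have h : ((k : ℝ) + 1) * m.multichoose (k + 1) = (m + k) * m.multichoose k := by
    exact_mod_cast succ_mul_multichoose_succ' m k
  have h1 : a + b + (m + k) * α ≠ 0 := by positivity
  have h2 := (rise_pos hα (show 0 < a + b by linarith) (m + k)).ne'
  simp only [invPolya]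
  rw [← add_assoc, rise_succ α (a + b), rise_succ α a]
  push_cast
  field_simp
  linear_combination (rise α a k * rise α b m * (a + k * α)) * h

lemma summable_descFactorial_mul_invPolya {α : ℝ} (hα : 0 ≤ α) (r : ℕ) :
    ∀ (m : ℕ) (a b : ℝ), 0 ≤ a → r * α < b →
      Summable (fun k : ℕ => (k.descFactorial r : ℝ) * invPolya α m a b k) := by
  induction r with
  | zero => intro m a b ha hb; simpa using summable_invPolya hα m ha (by simpa using hb)
  | succ r ih =>
    intro m a b ha hb
    push_cast at hb
    have : 0 ≤ r * α := by positivity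
    exact (hasSum_descFactorial_succ (invPolya_shift m a (by linarith))
      (ih (m + 1) (a + α) (b - α) (by linarith) (by linarith)).hasSum).summable

/-- The first moment in terms of the total mass.  With `V k = k (a + b + (m - 1 + k) α) W k`, the
ratio of consecutive weights gives `V (k + 1) - V k = (m a - (b - α) k) W k`, and `V` tends to `0`
because the second moment is finite. -/
lemma tsum_mul_invPolya {α : ℝ} (hα : 0 ≤ α) (m : ℕ) {a b : ℝ} (ha : 0 ≤ a) (hb : 2 * α < b) :
    m * a * ∑' k, invPolya α m a b k = (b - α) * ∑' k : ℕ, (k : ℝ) * invPolya α m a b k := by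
  have hb0 : 0 < b := by linarith
  have s0 := summable_invPolya hα m ha hb0
  have s1 : Summable (fun k : ℕ => (k : ℝ) * invPolya α m a b k) := by
    simpa using summable_descFactorial_mul_invPolya hα 1 m a b ha (by push_cast; linarith)
  have s2 := summable_descFactorial_mul_invPolya hα 2 m a b ha (by push_cast; linarith)
  let V : ℕ → ℝ := fun k => k * (a + b + ((m : ℝ) - 1 + k) * α) * invPolya α m a b k
  have hV : Summable V := by
    refine ((s1.mul_left (a + b + m * α)).add (s2.mul_left α)).congr fun k => ?_
    cases k with
    | zero => simp [V]
    | succ k =>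
      simp only [V, Nat.succ_descFactorial_succ, Nat.descFactorial_one]
      push_cast
      ring
  have htel : ∀ K, ∑ k ∈ range K, (m * a * invPolya α m a b k
      - (b - α) * ((k : ℝ) * invPolya α m a b k)) = V K := by
    intro K
    induction K with
    | zero => simp [V]
    | succ K ih =>
      rw [sum_range_succ, ih]
      have := invPolya_ratio hα m ha hb0 K
      simp only [V]
      push_cast
      linear_combination -this
  have hs := (s0.hasSum.mul_left (m * a)).sub (s1.hasSum.mul_left (b - α))
  have h1 := hs.tendsto_sum_nat
  simp only [htel] at h1
  have := tendsto_nhds_unique h1 hV.tendsto_atTop_zero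
  linarith

lemma hasSum_descFactorial_mul_invPolya {α : ℝ} (hα : 0 ≤ α) (r : ℕ) :
    ∀ (m : ℕ) (a b : ℝ), 0 ≤ a → (r + 1) * α < b →
      HasSum (fun k : ℕ => (k.descFactorial r : ℝ) * invPolya α m a b k)
        ((∑' k, invPolya α m a b k) *
          ∏ i ∈ range r, (((m : ℝ) + i) * (a + i * α) / (b - (i + 1) * α))) := by
  induction r with
  | zero =>
    intro m a b ha hb
    simpa using (summable_invPolya hα m ha (by push_cast at hb; linarith)).hasSum
  | succ r ih =>
    intro m a b ha hb
    push_cast at hb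
    have hr : 0 ≤ r * α := by positivity
    have hb1 : b - α ≠ 0 := by linarith
    have hsh := invPolya_shift m a (show α < b by linarith)
    have h := hasSum_descFactorial_succ hsh (ih (m + 1) (a + α) (b - α) (by linarith) (by linarith))
    -- The mass is invariant under the shift, after multiplication by `m a / (b - α)`.
    have hmass : (m * a / (b - α)) * ∑' k, invPolya α (m + 1) (a + α) (b - α) k
        = (m * a / (b - α)) * ∑' k, invPolya α m a b k := by
      have h0 : HasSum (fun k : ℕ => (Nat.descFactorial k 0 : ℝ)
          * invPolya α (m + 1) (a + α) (b - α) k) (∑' k, invPolya α (m + 1) (a + α) (b - α) k) := by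
        simpa using (summable_invPolya hα (m + 1) (show 0 ≤ a + α by linarith)
          (show 0 < b - α by linarith)).hasSum
      have h1 := (hasSum_descFactorial_succ hsh h0).tsum_eq
      simp only [zero_add, Nat.descFactorial_one] at h1
      have h2 := tsum_mul_invPolya hα m ha (show 2 * α < b by linarith)
      rw [← h1]
      field_simp
      linarith
    convert h using 1
    rw [← mul_assoc, hmass, prod_range_succ', mul_comm (∏ i ∈ range r, _), ← mul_assoc,
      mul_comm (∑' k, _)]
    congr 1
    · simp
    · refine prod_congr rfl fun i _ => ?_
      push_cast
      congr 1 <;> ring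

/-! ### From factorial moments to the fourth central moment -/

/-- A product of `r` factors `x + O((1 + x) / n)` is `x^r + O((1 + x)^r / n)`. -/
lemma exists_prod_bound (B : ℝ) (hB : 0 ≤ B) (r : ℕ) : ∃ E : ℝ, 0 ≤ E ∧
    ∀ (n x : ℝ) (f : ℕ → ℝ), 1 ≤ n → 0 ≤ x → (∀ i < r, |f i - x| ≤ B * (1 + x) / n) →
      |∏ i ∈ range r, f i - x ^ r| ≤ E * (1 + x) ^ r / n := by
  induction r with
  | zero => exact ⟨0, le_rfl, fun n x f _ _ _ => by simp⟩
  | succ r ih =>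
    obtain ⟨E, hE, h⟩ := ih
    refine ⟨E * (1 + B) + B, by positivity, fun n x f hn hx hf => ?_⟩
    have h1 := h n x f hn hx fun i hi => hf i (by omega)
    have h2 := hf r (by omega)
    have hn0 : 0 < n := by linarith
    have h3 : |f r| ≤ (1 + B) * (1 + x) := by
      have : B * (1 + x) / n ≤ B * (1 + x) := div_le_self (by positivity) hn
      have h4 := abs_le.1 (h2.trans this)
      rw [abs_le]
      constructor <;> nlinarith
    have h5 : x ^ r ≤ (1 + x) ^ r := by gcongr; linarith
    rw [prod_range_succ, pow_succ, show (∏ i ∈ range r, f i) * f r - x ^ r * x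
      = (∏ i ∈ range r, f i - x ^ r) * f r + x ^ r * (f r - x) by ring]
    calc _ ≤ |∏ i ∈ range r, f i - x ^ r| * |f r| + x ^ r * |f r - x| := by
            refine (abs_add_le _ _).trans (le_of_eq ?_)
            rw [abs_mul, abs_mul, abs_of_nonneg (pow_nonneg hx r)]
      _ ≤ E * (1 + x) ^ r / n * ((1 + B) * (1 + x)) + (1 + x) ^ r * (B * (1 + x) / n) := by gcongr
      _ = _ := by field_simp; ring

lemma fourth_moment_le (B : ℝ) (hB : 0 ≤ B) : ∃ A > (0 : ℝ),
    ∀ (n x S : ℝ) (W f : ℕ → ℝ), 1 ≤ n → 0 ≤ x → 0 ≤ S → S ≤ 1 →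
      (∀ i < 4, |f i - x| ≤ B * (1 + x) / n) →
      (∀ r ≤ 4, HasSum (fun k : ℕ => (k.descFactorial r : ℝ) * W k)
        (S * ∏ i ∈ range r, (n * f i))) →
      ∑' k : ℕ, W k * ((k : ℝ) / n - x) ^ 4 ≤ A * (1 + x ^ 2) ^ 2 / n := by
  choose E hE hprod using exists_prod_bound B hB
  let D : ℝ := E 1 + E 2 + E 3 + E 4 + 1
  have hD : 0 < D := by have := hE 1; have := hE 2; have := hE 3; have := hE 4; positivity
  refine ⟨87 * D * 4, by positivity, fun n x S W f hn hx hS0 hS1 hf hm => ?_⟩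
  have hn0 : 0 < n := by linarith
  let P : ℕ → ℝ := fun r => ∏ i ∈ range r, f i
  have hm' : ∀ r ≤ 4, HasSum (fun k : ℕ => (k.descFactorial r : ℝ) * W k) (S * (n ^ r * P r)) := by
    intro r hr
    simpa [P, prod_mul_distrib] using hm r hr
  -- The coefficients below come from writing `k ^ j` in falling factorials.
  have hsum := ((((hm' 4 le_rfl).mul_left (1 / n ^ 4)).add
    ((hm' 3 (by norm_num)).mul_left (6 / n ^ 4 - 4 * x / n ^ 3))).add
    ((hm' 2 (by norm_num)).mul_left (7 / n ^ 4 - 12 * x / n ^ 3 + 6 * x ^ 2 / n ^ 2))).add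
    (((hm' 1 (by norm_num)).mul_left
      (1 / n ^ 4 - 4 * x / n ^ 3 + 6 * x ^ 2 / n ^ 2 - 4 * x ^ 3 / n)).add
    ((hm' 0 (by norm_num)).mul_left (x ^ 4)))
  have htsum : ∑' k : ℕ, W k * ((k : ℝ) / n - x) ^ 4
      = S * (P 4 + (6 / n - 4 * x) * P 3 + (7 / n ^ 2 - 12 * x / n + 6 * x ^ 2) * P 2
        + (1 / n ^ 3 - 4 * x / n ^ 2 + 6 * x ^ 2 / n - 4 * x ^ 3) * P 1 + x ^ 4) := by
    have hP0 : P 0 = 1 := by simp [P]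
    rw [hP0] at hsum
    have := hsum.tsum_eq
    convert this using 1
    · refine tsum_congr fun k => ?_
      have d (r : ℕ) : ((k.descFactorial (r + 1) : ℕ) : ℝ) = ((k : ℝ) - r) * k.descFactorial r := by
        rw [Nat.descFactorial_succ]
        rcases Nat.lt_or_ge k r with h | h
        · simp [Nat.descFactorial_of_lt h]
        · push_cast [h]; ring
      rw [d 3, d 2, d 1, d 0, Nat.descFactorial_zero]
      push_cast
      field_simp
      ring
    · field_simp
      ring
  rw [htsum]
  set y := 1 + x with hy
  have hy1 : 1 ≤ y := by linarith
  have hxy : x ≤ y := by linarith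
  have hED : ∀ r ≤ 4, 1 ≤ r → E r ≤ D := by
    intro r hr hr1
    have := hE 1; have := hE 2; have := hE 3; have := hE 4
    interval_cases r <;> simp only [D] <;> linarith
  have hD1 : 1 ≤ D := by
    have := hE 1; have := hE 2; have := hE 3; have := hE 4
    simp only [D]; linarith
  have bd : ∀ r ≤ 4, 1 ≤ r → |P r - x ^ r| ≤ D * y ^ r / n := fun r hr4 hr1 =>
    (hprod r n x f hn hx fun i hi => hf i (by omega)).trans (by have := hED r hr4 hr1; gcongr)
  have main : ∀ r ≤ 4, 1 ≤ r → |x ^ (4 - r) * (P r - x ^ r)| ≤ D * (y ^ 4 / n) := by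
    intro r hr4 hr1
    rw [abs_mul, abs_of_nonneg (pow_nonneg hx _)]
    calc _ ≤ y ^ (4 - r) * (D * y ^ r / n) := by gcongr; exact bd r hr4 hr1
      _ = D * (y ^ (4 - r + r) / n) := by rw [pow_add]; ring
      _ = _ := by rw [Nat.sub_add_cancel hr4]
  have lower : ∀ r ≤ 4, 1 ≤ r → ∀ j s : ℕ, j + r ≤ 4 → 1 ≤ s →
      |x ^ j * P r / n ^ s| ≤ 2 * D * (y ^ 4 / n) := by
    intro r hr4 hr1 j s hj hs
    have hP : |P r| ≤ 2 * D * y ^ r := by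
      have h1 : D * y ^ r / n ≤ D * y ^ r := div_le_self (by positivity) hn
      have h2 := abs_le.1 ((bd r hr4 hr1).trans h1)
      have h3 : x ^ r ≤ y ^ r := by gcongr
      have h4 : 0 ≤ x ^ r := by positivity
      have h5 : y ^ r ≤ D * y ^ r := le_mul_of_one_le_left (by positivity) hD1
      rw [abs_le]
      constructor <;> linarith
    rw [abs_div, abs_mul, abs_of_nonneg (pow_nonneg hx _), abs_of_pos (pow_pos hn0 s)]
    have hns : n ≤ n ^ s := le_self_pow₀ hn (by omega)
    calc _ ≤ y ^ j * (2 * D * y ^ r) / n := by gcongr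
      _ = 2 * D * (y ^ (j + r) / n) := by rw [pow_add]; ring
      _ ≤ _ := by gcongr
  set q := y ^ 4 / n with hq
  have hT : P 4 + (6 / n - 4 * x) * P 3 + (7 / n ^ 2 - 12 * x / n + 6 * x ^ 2) * P 2
        + (1 / n ^ 3 - 4 * x / n ^ 2 + 6 * x ^ 2 / n - 4 * x ^ 3) * P 1 + x ^ 4 ≤ 87 * D * q := by
    have m4 := abs_le.1 (main 4 (by norm_num) (by norm_num))
    have m3 := abs_le.1 (main 3 (by norm_num) (by norm_num))
    have m2 := abs_le.1 (main 2 (by norm_num) (by norm_num))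
    have m1 := abs_le.1 (main 1 (by norm_num) (by norm_num))
    have l1 := abs_le.1 (lower 3 (by norm_num) (by norm_num) 0 1 (by norm_num) (by norm_num))
    have l2 := abs_le.1 (lower 2 (by norm_num) (by norm_num) 0 2 (by norm_num) (by norm_num))
    have l3 := abs_le.1 (lower 2 (by norm_num) (by norm_num) 1 1 (by norm_num) (by norm_num))
    have l4 := abs_le.1 (lower 1 (by norm_num) (by norm_num) 0 3 (by norm_num) (by norm_num))
    have l5 := abs_le.1 (lower 1 (by norm_num) (by norm_num) 1 2 (by norm_num) (by norm_num))
    have l6 := abs_le.1 (lower 1 (by norm_num) (by norm_num) 2 1 (by norm_num) (by norm_num))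
    have e : P 4 + (6 / n - 4 * x) * P 3 + (7 / n ^ 2 - 12 * x / n + 6 * x ^ 2) * P 2
        + (1 / n ^ 3 - 4 * x / n ^ 2 + 6 * x ^ 2 / n - 4 * x ^ 3) * P 1 + x ^ 4
        = x ^ (4 - 4) * (P 4 - x ^ 4) - 4 * (x ^ (4 - 3) * (P 3 - x ^ 3))
          + 6 * (x ^ (4 - 2) * (P 2 - x ^ 2)) - 4 * (x ^ (4 - 1) * (P 1 - x ^ 1))
          + 6 * (x ^ 0 * P 3 / n ^ 1) + 7 * (x ^ 0 * P 2 / n ^ 2) - 12 * (x ^ 1 * P 2 / n ^ 1)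
          + x ^ 0 * P 1 / n ^ 3 - 4 * (x ^ 1 * P 1 / n ^ 2) + 6 * (x ^ 2 * P 1 / n ^ 1) := by
      norm_num
      ring
    rw [e]
    clear e main lower
    generalize x ^ (4 - 4) * (P 4 - x ^ 4) = t1 at m4 m3 m2 m1 l1 l2 l3 l4 l5 l6 ⊢
    generalize x ^ (4 - 3) * (P 3 - x ^ 3) = t2 at m4 m3 m2 m1 l1 l2 l3 l4 l5 l6 ⊢
    generalize x ^ (4 - 2) * (P 2 - x ^ 2) = t3 at m4 m3 m2 m1 l1 l2 l3 l4 l5 l6 ⊢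
    generalize x ^ (4 - 1) * (P 1 - x ^ 1) = t4 at m4 m3 m2 m1 l1 l2 l3 l4 l5 l6 ⊢
    generalize x ^ 0 * P 3 / n ^ 1 = t5 at m4 m3 m2 m1 l1 l2 l3 l4 l5 l6 ⊢
    generalize x ^ 0 * P 2 / n ^ 2 = t6 at m4 m3 m2 m1 l1 l2 l3 l4 l5 l6 ⊢
    generalize x ^ 1 * P 2 / n ^ 1 = t7 at m4 m3 m2 m1 l1 l2 l3 l4 l5 l6 ⊢
    generalize x ^ 0 * P 1 / n ^ 3 = t8 at m4 m3 m2 m1 l1 l2 l3 l4 l5 l6 ⊢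
    generalize x ^ 1 * P 1 / n ^ 2 = t9 at m4 m3 m2 m1 l1 l2 l3 l4 l5 l6 ⊢
    generalize x ^ 2 * P 1 / n ^ 1 = t10 at m4 m3 m2 m1 l1 l2 l3 l4 l5 l6 ⊢
    simp only [mul_assoc] at m4 m3 m2 m1 l1 l2 l3 l4 l5 l6 ⊢
    generalize D * q = u at m4 m3 m2 m1 l1 l2 l3 l4 l5 l6 ⊢
    linarith only [m4, m3, m2, m1, l1, l2, l3, l4, l5, l6]
  have hq0 : 0 ≤ 87 * D * q := by positivity
  have hy4 : y ^ 4 ≤ 4 * (1 + x ^ 2) ^ 2 := by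
    have h2 : y ^ 2 ≤ 2 * (1 + x ^ 2) := by rw [hy]; nlinarith [sq_nonneg (x - 1)]
    calc y ^ 4 = (y ^ 2) ^ 2 := by ring
      _ ≤ (2 * (1 + x ^ 2)) ^ 2 := by gcongr
      _ = _ := by ring
  calc _ ≤ S * (87 * D * q) := by gcongr
    _ ≤ 1 * (87 * D * q) := by gcongr
    _ ≤ 87 * D * (4 * (1 + x ^ 2) ^ 2 / n) := by rw [one_mul, hq]; gcongr
    _ = _ := by ring

/-! ### The weights `w` as Pólya probabilities -/

lemma w_neg_one (n p : ℕ) (hn : 1 ≤ n) (α x : ℝ) (k : ℕ) :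
    w n p (-1) α x k = polya α (n + p) x (1 - x) k := by
  have h1 : ((n : ℤ) + p + (-1 + 1) * k).toNat = n + p := by
    rw [neg_add_cancel, zero_mul, add_zero]; omega
  have h2 : ((n : ℤ) + p + -1 * k).toNat = n + p - k := by omega
  have h3 : (n : ℝ) + p ≠ 0 := by positivity
  unfold w polya rise
  rw [h1, h2]
  push_cast
  simp only [neg_add_cancel, zero_mul, add_zero, div_self h3, one_mul, neg_one_mul,
    ← sub_eq_add_neg, add_sub_cancel]

lemma w_zero (n p : ℕ) (hn : 1 ≤ n) (α x : ℝ) (k : ℕ) :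
    w n p 0 α x k = invPolya α (n + p) x 1 k := by
  have h1 : ((n : ℤ) + p + (0 + 1) * k).toNat = n + p + k := by omega
  have h2 : ((n : ℤ) + p + 0 * k).toNat = n + p := by omega
  have hc : ((n : ℝ) + p) / (n + p + k) * ((n + p + k).choose k : ℝ)
      = ((n + p).multichoose k : ℝ) := by
    obtain ⟨m, hm⟩ : ∃ m, n + p = m + 1 := ⟨n + p - 1, by omega⟩
    have hm' : (n : ℝ) + p = m + 1 := by exact_mod_cast hm
    rw [hm, hm', Nat.multichoose_eq, show m + 1 + k - 1 = m + k by omega]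
    have := Nat.choose_mul_succ_eq (m + k) k
    rw [show m + k + 1 - k = m + 1 by omega, show m + k + 1 = m + 1 + k by ring] at this
    have h : ((m + k).choose k : ℝ) * (m + 1 + k) = (m + 1 + k).choose k * (m + 1) := by
      exact_mod_cast this
    have : (m : ℝ) + 1 + k ≠ 0 := by positivity
    field_simp
    linarith
  unfold w invPolya rise
  rw [h1, h2, ← hc]
  push_cast
  simp only [zero_add, zero_mul, add_zero, one_mul, add_comm x 1]

lemma factor_bound_neg_one {n p C α x : ℝ} (hn : 1 ≤ n) (hp : 0 ≤ p) (hC : 0 ≤ C) (hα : 0 ≤ α)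
    (hnα : n * α ≤ C) (hx : 0 ≤ x) {i : ℝ} (hi0 : 0 ≤ i) (hi : i ≤ 4) :
    |(n + p - i) * (x + i * α) / (x + (1 - x) + i * α) / n - x|
      ≤ (2 * ((p + 4) + 4 * (p + 5) * C + 4 * C)) * (1 + x) / n := by
  have hd : 1 ≤ 1 + i * α := by nlinarith
  have hn0 : 0 < n := by linarith
  have e : (n + p - i) * (x + i * α) / (x + (1 - x) + i * α) / n - x
      = ((p - i) * x + (n + p - i) * α * i - n * α * i * x) / ((1 + i * α) * n) := by
    rw [add_sub_cancel]
    field_simp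
    ring
  have h0 : 0 ≤ n * α := by positivity
  have h1 : |(p - i) * x| ≤ (p + 4) * x := by
    rw [abs_mul, abs_of_nonneg hx]
    gcongr
    rw [abs_le]; constructor <;> linarith
  have h2 : |(n + p - i) * α * i| ≤ 4 * (p + 5) * C := by
    rw [abs_mul, abs_mul, abs_of_nonneg hα, abs_of_nonneg hi0]
    have : |n + p - i| ≤ (p + 5) * n := by
      rw [abs_le]; constructor <;> nlinarith
    calc _ ≤ (p + 5) * n * α * 4 := by gcongr
      _ = 4 * (p + 5) * (n * α) := by ring
      _ ≤ _ := by gcongr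
  have h3 : |n * α * i * x| ≤ 4 * C * x := by
    rw [abs_of_nonneg (by positivity)]
    calc _ ≤ C * 4 * x := by gcongr
      _ = _ := by ring
  have h4 : |(p - i) * x + (n + p - i) * α * i - n * α * i * x|
      ≤ (p + 4) * x + 4 * (p + 5) * C + 4 * C * x := by
    rw [abs_le] at *
    constructor <;> linarith
  rw [e, abs_div, abs_of_pos (show 0 < (1 + i * α) * n by positivity)]
  have hpC : 0 ≤ p * C := by positivity
  have hpx : 0 ≤ p * C * x := by positivity
  have hCx : 0 ≤ C * x := by positivity
  have hpx' : 0 ≤ p * x := by positivity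
  gcongr
  · nlinarith
  · nlinarith

lemma factor_bound_zero {n p C α x : ℝ} (hn : 1 ≤ n) (hp : 0 ≤ p) (hC : 0 ≤ C) (hα : 0 ≤ α)
    (hα10 : α ≤ 1 / 10) (hnα : n * α ≤ C) (hx : 0 ≤ x) {i : ℝ} (hi0 : 0 ≤ i) (hi : i ≤ 4) :
    |(n + p + i) * (x + i * α) / (1 - (i + 1) * α) / n - x|
      ≤ (2 * ((p + 4) + 4 * (p + 5) * C + 5 * C)) * (1 + x) / n := by
  have hd : 1 / 2 ≤ 1 - (i + 1) * α := by nlinarith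
  have hn0 : 0 < n := by linarith
  have hd0 : 1 - (i + 1) * α ≠ 0 := by linarith
  have e : (n + p + i) * (x + i * α) / (1 - (i + 1) * α) / n - x
      = ((p + i) * x + (n + p + i) * α * i + n * α * (i + 1) * x) / ((1 - (i + 1) * α) * n) := by
    rw [div_div, eq_div_iff (mul_ne_zero hd0 hn0.ne'), sub_mul,
      div_mul_cancel₀ _ (mul_ne_zero hd0 hn0.ne')]
    ring
  have h0 : 0 ≤ n * α := by positivity
  have h1 : (p + i) * x ≤ (p + 4) * x := by gcongr
  have h2 : (n + p + i) * α * i ≤ 4 * (p + 5) * C := by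
    have : n + p + i ≤ (p + 5) * n := by nlinarith
    calc _ ≤ (p + 5) * n * α * 4 := by gcongr
      _ = 4 * (p + 5) * (n * α) := by ring
      _ ≤ _ := by gcongr
  have h3 : n * α * (i + 1) * x ≤ 5 * C * x := by
    calc _ ≤ C * (4 + 1) * x := by gcongr
      _ = _ := by ring
  have hden : 1 / 2 * n ≤ (1 - (i + 1) * α) * n := by gcongr
  have hpos : 0 < (1 - (i + 1) * α) * n := by linarith
  rw [e, abs_of_nonneg (div_nonneg (by positivity) hpos.le)]
  have hpC : 0 ≤ p * C * x := by positivity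
  have hCx : 0 ≤ C * x := by positivity
  calc _ ≤ ((p + 4) + 4 * (p + 5) * C + 5 * C) * (1 + x) / (1 / 2 * n) := by
        gcongr
        nlinarith
    _ = _ := by field_simp

/-- for a sequence `α_n ≥ 0` with `sup_n n·α_n < ∞`, there are
`A₂ > 0` and `N ≥ 1` with `L_n^{(α_n)}((t-x)⁴; x) ≤ A₂(1+x²)²/n` for all `n ≥ N`, `x ∈ I`. -/
theorem fourth_central_moment_bound (p : ℕ) (lam : ℤ) (hlam : lam = -1 ∨ lam = 0)
    (α : ℕ → ℝ) (hα : ∀ n, 0 ≤ α n) (hbd : ∃ C : ℝ, ∀ n : ℕ, (n : ℝ) * α n ≤ C) :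
    ∃ A₂ > (0 : ℝ), ∃ N : ℕ, 1 ≤ N ∧ ∀ n ≥ N, ∀ x ∈ Iset lam,
      ∑' k : ℕ, w n p lam (α n) x k * ((k : ℝ) / n - x) ^ 4 ≤ A₂ * (1 + x ^ 2) ^ 2 / n := by
  obtain ⟨C, hC⟩ := hbd
  have hC0 : 0 ≤ C := by simpa using hC 0
  have hp : (0 : ℝ) ≤ p := p.cast_nonneg
  rcases hlam with rfl | rfl
  · obtain ⟨A, hA, h⟩ := fourth_moment_le (2 * ((p + 4) + 4 * (p + 5) * C + 4 * C)) (by positivity)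
    refine ⟨A, hA, 1, le_rfl, fun n hn x hx => ?_⟩
    have hx0 : 0 ≤ x := by simp [Iset] at hx; exact hx.1
    have hn1 : (1 : ℝ) ≤ n := by exact_mod_cast hn
    simp only [w_neg_one n p hn]
    refine h n x 1 _
      (fun i => ((n : ℝ) + p - i) * (x + i * α n) / (x + (1 - x) + i * α n) / n)
      hn1 hx0 zero_le_one le_rfl ?_ ?_
    · intro i hi
      exact factor_bound_neg_one hn1 hp hC0 (hα n) (hC n) hx0 i.cast_nonneg
        (by exact_mod_cast hi.le)
    · intro r _
      convert hasSum_descFactorial_mul_polya (hα n) r (n + p) x (1 - x) (by norm_num) using 1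
      rw [one_mul]
      refine prod_congr rfl fun i _ => ?_
      rw [mul_div_cancel₀ _ (by positivity)]
      push_cast
      rfl
  · obtain ⟨A, hA, h⟩ := fourth_moment_le (2 * ((p + 4) + 4 * (p + 5) * C + 5 * C)) (by positivity)
    -- For `n ≥ 10 C` one has `α n ≤ 1 / 10`, so that the first four moments exist.
    refine ⟨A, hA, ⌈10 * C⌉₊ + 1, by omega, fun n hn x hx => ?_⟩
    have hx0 : 0 ≤ x := by simpa [Iset] using hx
    have hn1' : 1 ≤ n := by omega
    have hn1 : (1 : ℝ) ≤ n := by exact_mod_cast hn1'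
    have hnC : 10 * C ≤ n := (Nat.le_ceil _).trans (by exact_mod_cast (by omega))
    have hα10 : α n ≤ 1 / 10 := by
      have := hC n
      by_contra! hlt
      nlinarith
    simp only [w_zero n p hn1']
    refine h n x (∑' k, invPolya (α n) (n + p) x 1 k) _
      (fun i => ((n : ℝ) + p + i) * (x + i * α n) / (1 - (i + 1) * α n) / n)
      hn1 hx0 (tsum_nonneg (invPolya_nonneg (hα n) _ hx0 one_pos))
      (Real.tsum_le_of_sum_range_le (invPolya_nonneg (hα n) _ hx0 one_pos)
        fun K => sum_invPolya_le (hα n) K _ x 1 hx0 one_pos) ?_ ?_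
    · intro i hi
      exact factor_bound_zero hn1 hp hC0 (hα n) hα10 (hC n) hx0 i.cast_nonneg
        (by exact_mod_cast hi.le)
    · intro r hr
      have hr' : (r : ℝ) ≤ 4 := by exact_mod_cast hr
      have := hα n
      convert hasSum_descFactorial_mul_invPolya (hα n) r (n + p) x 1 hx0 (by nlinarith) using 2
      refine prod_congr rfl fun i _ => ?_
      rw [mul_div_cancel₀ _ (by positivity)]
      push_cast
      rfl
end

section
/- Fix an integer n ≥ 1, a nonnegative integer p and a real α with 0 ≤ α < 1/2. Let g : [0,∞) → ℝ be twice differentiable with g, g' and g'' continuous and bounded. Define the auxiliary operator L̂_n^{(α)}(g;x) = L_n^{(α)}(g;x) + g(x) - g((n+p)x/(n(1-α))). Then for every x ≥ 0, |L̂_n^{(α)}(g;x) - g(x)| ≤ ψ_n^{(α)}(x) · sup_{u ≥ 0}|g''(u)|, where ψ_n^{(α)}(x) = Σ_{k=0}^{∞} w_{n,k}^{(α)}(x)·(k/n - x)² + ( x(p + nα)/(n(1-α)) )². -/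
/-!
Write `N = n + p`, `m = N x / (n (1 - α))`, and `S = sup_{u ≥ 0} |g''(u)|`. The weights `w_k` are
nonnegative, sum to `1`, and satisfy `∑ w_k k = N x / (1 - α)`; that is, they form a probability
distribution on the nodes `k / n` with mean `m`. Taylor's formula at `x` has a remainder
`ρ(t) = g(t) - g(x) - g'(x) (t - x)` with `|ρ(t)| ≤ S (t - x)²` (`taylor_remainder_le`). Since the
affine parts cancel, `L g(x) - g(m) = ∑ w_k ρ(k / n) - ρ(m)`, which gives the claim because
`m - x = x (p + n α) / (n (1 - α))`.

The moments come from the ratio `(k+1)(1+x+(N+k)α) w_{k+1} = (N+k)(x+kα) w_k` by telescoping.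
* With `b_k = k² (1+x+(N+k-1)α) w_k`, the increment `b_{k+1} - b_k` equals `w_k` times a polynomial
  in `k` with leading term `-(1-2α)k²`. As `α < 1/2`, this yields summability of `k² w_k`
  (`summable_sq_mul_weight`), hence decay of all boundary terms below.
* With `b_k = k (1+x+(N+k-1)α) w_k`, the increment is `(N x - (1-α) k) w_k`, so the total of the
  latter vanishes (`hasSum_mul_weight`).
* The difference of the weights for `N` and `N + 1` is the increment of `k w_k / N`, so the total
  mass does not depend on `N`; for `N = 1` it is a telescoping series (`hasSum_weight`).
-/

/-- The weights of the generalized positive linear operator with λ = 0 (IPED case). -/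
noncomputable def w0 (n p : ℕ) (α x : ℝ) (k : ℕ) : ℝ :=
  (Nat.choose (n + p + k - 1) k : ℝ) * (∏ i ∈ Finset.range k, (x + (i : ℝ) * α)) *
    (∏ i ∈ Finset.range (n + p), (1 + (i : ℝ) * α)) /
    (∏ i ∈ Finset.range (n + p + k), (1 + x + (i : ℝ) * α))

/-! ### The weights and their recurrences -/

/-- The weights `w0` with `n + p = M + 1`; the shift by one avoids truncated subtraction in the
binomial coefficient. -/
noncomputable def weight (M : ℕ) (α x : ℝ) (k : ℕ) : ℝ :=
  (Nat.choose (M + k) k : ℝ) * (∏ i ∈ Finset.range k, (x + (i : ℝ) * α)) *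
    (∏ i ∈ Finset.range (M + 1), (1 + (i : ℝ) * α)) /
    (∏ i ∈ Finset.range (M + 1 + k), (1 + x + (i : ℝ) * α))

lemma w0_eq_weight {n p M : ℕ} (h : n + p = M + 1) (α x : ℝ) (k : ℕ) :
    w0 n p α x k = weight M α x k := by
  have h2 : M + 1 + k - 1 = M + k := by omega
  simp only [w0, weight, h, h2]

lemma denom_pos {α x : ℝ} (hα : 0 ≤ α) (hx : 0 ≤ x) (j : ℕ) :
    0 < ∏ i ∈ Finset.range j, (1 + x + (i : ℝ) * α) :=
  Finset.prod_pos fun i _ => by positivity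

lemma weight_nonneg {α x : ℝ} (hα : 0 ≤ α) (hx : 0 ≤ x) (M k : ℕ) : 0 ≤ weight M α x k := by
  unfold weight
  have h1 : 0 ≤ ∏ i ∈ Finset.range k, (x + (i : ℝ) * α) :=
    Finset.prod_nonneg fun i _ => by positivity
  have h2 : 0 ≤ ∏ i ∈ Finset.range (M + 1), (1 + (i : ℝ) * α) :=
    Finset.prod_nonneg fun i _ => by positivity
  have h3 := denom_pos hα hx (M + 1 + k)
  positivity

lemma weight_succ {α x : ℝ} (hα : 0 ≤ α) (hx : 0 ≤ x) (M k : ℕ) :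
    ((k : ℝ) + 1) * (1 + x + ((M : ℝ) + 1 + k) * α) * weight M α x (k + 1) =
      ((M : ℝ) + 1 + k) * (x + k * α) * weight M α x k := by
  have hc : ((M : ℝ) + k + 1) * (Nat.choose (M + k) k : ℝ) =
      (Nat.choose (M + (k + 1)) (k + 1) : ℝ) * ((k : ℝ) + 1) := by
    exact_mod_cast Nat.add_one_mul_choose_eq (M + k) k
  have h3 := (denom_pos hα hx (M + 1 + k)).ne'
  have h4 : 1 + x + ((M : ℝ) + 1 + k) * α ≠ 0 := by positivity
  unfold weight
  rw [← add_assoc (M + 1) k 1, Finset.prod_range_succ (fun i : ℕ => 1 + x + (i : ℝ) * α) (M + 1 + k),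
    Finset.prod_range_succ (fun i : ℕ => x + (i : ℝ) * α) k]
  push_cast
  generalize (∏ i ∈ Finset.range (M + 1 + k), (1 + x + (i : ℝ) * α)) = D at *
  generalize (∏ i ∈ Finset.range (M + 1), (1 + (i : ℝ) * α)) = B at *
  generalize (∏ i ∈ Finset.range k, (x + (i : ℝ) * α)) = A at *
  generalize 1 + x + ((M : ℝ) + 1 + k) * α = Q at *
  field_simp
  linear_combination (-(A * B * (x + k * α))) * hc

lemma weight_succ_left {α x : ℝ} (hα : 0 ≤ α) (hx : 0 ≤ x) (M k : ℕ) :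
    ((M : ℝ) + 1) * (1 + x + ((M : ℝ) + 1 + k) * α) * weight (M + 1) α x k =
      ((M : ℝ) + 1 + k) * (1 + ((M : ℝ) + 1) * α) * weight M α x k := by
  have hc : ((M : ℝ) + k + 1) * (Nat.choose (M + k) k : ℝ) =
      (Nat.choose (M + 1 + k) k : ℝ) * ((M : ℝ) + 1) := by
    have h := Nat.add_one_mul_choose_eq (M + k) M
    rw [Nat.choose_symm_add, show M + k + 1 = (M + 1) + k by ring, Nat.choose_symm_add] at h
    have h' : (((M + 1 + k : ℕ) : ℝ)) * (Nat.choose (M + k) k : ℝ) =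
      (Nat.choose (M + 1 + k) k : ℝ) * ((M + 1 : ℕ) : ℝ) := by exact_mod_cast h
    push_cast at h'
    linear_combination h'
  have h3 := (denom_pos hα hx (M + 1 + k)).ne'
  have h4 : 1 + x + ((M : ℝ) + 1 + k) * α ≠ 0 := by positivity
  unfold weight
  rw [show M + 1 + 1 + k = M + 1 + k + 1 by ring,
    Finset.prod_range_succ (fun i : ℕ => 1 + x + (i : ℝ) * α) (M + 1 + k),
    Finset.prod_range_succ (fun i : ℕ => 1 + (i : ℝ) * α) (M + 1)]
  push_cast
  generalize (∏ i ∈ Finset.range (M + 1 + k), (1 + x + (i : ℝ) * α)) = D at *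
  generalize (∏ i ∈ Finset.range (M + 1), (1 + (i : ℝ) * α)) = B at *
  generalize (∏ i ∈ Finset.range k, (x + (i : ℝ) * α)) = A at *
  generalize 1 + x + ((M : ℝ) + 1 + k) * α = Q at *
  field_simp
  linear_combination (-(A * B)) * hc

/-! ### Moments of the weights -/

lemma summable_sq_mul_weight {α x : ℝ} (hα : 0 ≤ α) (hα2 : α < 1 / 2) (hx : 0 ≤ x) (M : ℕ) :
    Summable fun k : ℕ => (k : ℝ) ^ 2 * weight M α x k := by
  set b : ℕ → ℝ := fun k => (k : ℝ) ^ 2 * (1 + x + ((M : ℝ) + k) * α) * weight M α x k with hb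
  set c : ℝ := (1 - 2 * α) / 2 with hc
  have hc0 : 0 < c := by rw [hc]; linarith
  -- `A k + B` is the lower-order part of the polynomial in `k` in the increment of `b`
  set A : ℝ := ((M : ℝ) + 1) * x + x + ((M : ℝ) + 1) * α with hA
  set B : ℝ := ((M : ℝ) + 1) * x with hB
  have hA0 : 0 ≤ A := by rw [hA]; positivity
  have hB0 : 0 ≤ B := by rw [hB]; positivity
  obtain ⟨K, hK⟩ := exists_nat_ge ((A + B) / c + 1)
  have hstep : ∀ k ≥ K, c * ((k : ℝ) ^ 2 * weight M α x k) ≤ b k - b (k + 1) := by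
    intro k hk
    have hkK : (K : ℝ) ≤ k := by exact_mod_cast hk
    have h1 : (A + B) / c ≤ k := by linarith
    have h1' : A + B ≤ k * c := (div_le_iff₀ hc0).1 h1
    have h2 : (1 : ℝ) ≤ k := by
      have : 0 ≤ (A + B) / c := by positivity
      linarith
    have hr := weight_succ hα hx M k
    have hdiff : b k - b (k + 1) = (2 * c * (k : ℝ) ^ 2 - A * k - B) * weight M α x k := by
      simp only [hb, hc, hA, hB]
      push_cast
      linear_combination (-((k : ℝ) + 1)) * hr
    rw [hdiff, ← mul_assoc]
    apply mul_le_mul_of_nonneg_right _ (weight_nonneg hα hx M k)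
    nlinarith
  have hb0 : ∀ k, 0 ≤ b k := fun k => by
    have := weight_nonneg hα hx M k
    simp only [hb]; positivity
  rw [← summable_nat_add_iff K]
  rw [← summable_mul_left_iff hc0.ne']
  refine summable_of_sum_range_le (c := b K) (fun k => ?_) (fun j => ?_)
  · have := weight_nonneg hα hx M (k + K)
    positivity
  · have : ∑ i ∈ Finset.range j, c * ((((i + K : ℕ) : ℝ)) ^ 2 * weight M α x (i + K)) ≤
        ∑ i ∈ Finset.range j, (b (i + K) - b (i + 1 + K)) := by
      refine Finset.sum_le_sum fun i _ => ?_
      have := hstep (i + K) (by omega)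
      rwa [show i + K + 1 = i + 1 + K by ring] at this
    rw [Finset.sum_range_sub' (fun i => b (i + K))] at this
    have h := hb0 (j + K)
    simp only [zero_add] at this
    linarith

lemma summable_mul_weight {α x : ℝ} (hα : 0 ≤ α) (hα2 : α < 1 / 2) (hx : 0 ≤ x) (M : ℕ) :
    Summable fun k : ℕ => (k : ℝ) * weight M α x k := by
  refine Summable.of_nonneg_of_le (fun k => ?_) (fun k => ?_)
    (summable_sq_mul_weight hα hα2 hx M)
  · have := weight_nonneg hα hx M k
    positivity
  · apply mul_le_mul_of_nonneg_right _ (weight_nonneg hα hx M k)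
    exact_mod_cast Nat.le_self_pow (by norm_num) k

lemma summable_weight {α x : ℝ} (hα : 0 ≤ α) (hα2 : α < 1 / 2) (hx : 0 ≤ x) (M : ℕ) :
    Summable fun k : ℕ => weight M α x k := by
  rw [← summable_nat_add_iff 1]
  refine Summable.of_nonneg_of_le (fun k => weight_nonneg hα hx M _) (fun k => ?_)
    ((summable_nat_add_iff 1).2 (summable_mul_weight hα hα2 hx M))
  have := weight_nonneg hα hx M (k + 1)
  push_cast
  nlinarith [(Nat.cast_nonneg k : (0 : ℝ) ≤ k)]

/-- A summable series of increments of a null sequence. -/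
lemma hasSum_of_telescope {f b : ℕ → ℝ} (hf : Summable f) (h : ∀ k, f k = b k - b (k + 1))
    (hb : Filter.Tendsto b Filter.atTop (nhds 0)) : HasSum f (b 0) := by
  rw [hf.hasSum_iff_tendsto_nat]
  simp only [h, Finset.sum_range_sub' b]
  simpa using tendsto_const_nhds.sub hb

lemma hasSum_weight {α x : ℝ} (hα : 0 ≤ α) (hα2 : α < 1 / 2) (hx : 0 ≤ x) (M : ℕ) :
    HasSum (fun k : ℕ => weight M α x k) 1 := by
  induction M with
  | zero =>
    have hb : Filter.Tendsto (fun k : ℕ => (1 + x + k * α) * weight 0 α x k)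
        Filter.atTop (nhds 0) := by
      have h1 := (summable_weight hα hα2 hx 0).tendsto_atTop_zero.const_mul (1 + x)
      have h2 := (summable_mul_weight hα hα2 hx 0).tendsto_atTop_zero.const_mul α
      convert h1.add h2 using 2 <;> ring
    have h := hasSum_of_telescope (summable_weight hα hα2 hx 0) (fun k => ?_) hb
    · convert h using 1
      have : 1 + x ≠ 0 := by positivity
      simp [weight]
      field_simp
    · have hr := weight_succ hα hx 0 k
      have hk : (k : ℝ) + 1 ≠ 0 := by positivity
      push_cast at hr ⊢
      apply mul_left_cancel₀ hk
      linear_combination hr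
  | succ M ih =>
    have hM : (M : ℝ) + 1 ≠ 0 := by positivity
    have hb : Filter.Tendsto (fun k : ℕ => (k : ℝ) * weight M α x k / ((M : ℝ) + 1))
        Filter.atTop (nhds 0) := by
      simpa using (summable_mul_weight hα hα2 hx M).tendsto_atTop_zero.div_const ((M : ℝ) + 1)
    have h := hasSum_of_telescope
      ((summable_weight hα hα2 hx (M + 1)).sub (summable_weight hα hα2 hx M)) (fun k => ?_) hb
    · have h' := h.add ih
      simpa using h'
    · have h1 := weight_succ hα hx M k
      have h2 := weight_succ_left hα hx M k
      have h4 : 1 + x + ((M : ℝ) + 1 + k) * α ≠ 0 := by positivity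
      have h5 := mul_ne_zero hM h4
      apply mul_left_cancel₀ h5
      push_cast
      have e : ∀ y : ℝ, ((M : ℝ) + 1) * (y / ((M : ℝ) + 1)) = y := fun y => mul_div_cancel₀ y hM
      linear_combination h2 + h1 -
        (1 + x + ((M : ℝ) + 1 + k) * α) * e (k * weight M α x k) +
        (1 + x + ((M : ℝ) + 1 + k) * α) * e ((k + 1) * weight M α x (k + 1))

lemma hasSum_mul_weight {α x : ℝ} (hα : 0 ≤ α) (hα2 : α < 1 / 2) (hx : 0 ≤ x) (M : ℕ) :
    HasSum (fun k : ℕ => (k : ℝ) * weight M α x k) (((M : ℝ) + 1) * x / (1 - α)) := by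
  have s1 := summable_mul_weight hα hα2 hx M
  have s2 := summable_sq_mul_weight hα hα2 hx M
  have hb : Filter.Tendsto (fun k : ℕ => (k : ℝ) * (1 + x + ((M : ℝ) + k) * α) * weight M α x k)
      Filter.atTop (nhds 0) := by
    have h1 := s1.tendsto_atTop_zero.const_mul (1 + x + M * α)
    have h2 := s2.tendsto_atTop_zero.const_mul α
    convert h1.add h2 using 2 <;> ring
  have h := hasSum_of_telescope ((s1.mul_left (1 - α)).sub
    ((summable_weight hα hα2 hx M).mul_left (((M : ℝ) + 1) * x))) (fun k => ?_) hb
  · have h' := (h.add ((hasSum_weight hα hα2 hx M).mul_left (((M : ℝ) + 1) * x))).div_const (1 - α)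
    have h1 : 1 - α ≠ 0 := by linarith
    simpa [mul_div_cancel_left₀ _ h1] using h'
  · have hr := weight_succ hα hx M k
    push_cast
    linear_combination hr

/-! ### Taylor remainder and the bound -/

lemma taylor_remainder_le {g : ℝ → ℝ} (hg : ContDiff ℝ 2 g) {S : ℝ}
    (hS : ∀ u ≥ (0 : ℝ), |deriv (deriv g) u| ≤ S) {x t : ℝ} (hx : 0 ≤ x) (ht : 0 ≤ t) :
    |g t - g x - deriv g x * (t - x)| ≤ S * (t - x) ^ 2 := by
  have hg1 : Differentiable ℝ g := hg.differentiable (by norm_num)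
  have hg2 : Differentiable ℝ (deriv g) := by
    have : ContDiff ℝ 1 (deriv g) := by
      have h : ContDiff ℝ (1 + 1) g := by simpa [one_add_one_eq_two] using hg
      exact ((contDiff_succ_iff_deriv).1 h).2.2
    exact this.differentiable (by norm_num)
  have hS0 : 0 ≤ S := (abs_nonneg _).trans (hS 0 le_rfl)
  have hd : ∀ s ≥ (0 : ℝ), |deriv g s - deriv g x| ≤ S * |s - x| := fun s hs =>
    (convex_Ici (0 : ℝ)).norm_image_sub_le_of_norm_deriv_le (fun u _ => hg2 u)
      (fun u hu => hS u hu) hx hs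
  have h := (convex_uIcc x t).norm_image_sub_le_of_norm_hasDerivWithin_le
    (f := fun s => g s - deriv g x * s) (f' := fun s => deriv g s - deriv g x)
    (C := S * |t - x|) (x := x) (y := t)
    (fun s _ => by
      have := ((hg1 s).hasDerivAt.sub ((hasDerivAt_id s).const_mul (deriv g x))).hasDerivWithinAt
        (s := Set.uIcc x t)
      simpa [Pi.sub_def] using this)
    (fun s hs => by
      have hs0 : 0 ≤ s := (le_min hx ht).trans hs.1
      refine (hd s hs0).trans (mul_le_mul_of_nonneg_left ?_ hS0)
      exact Set.abs_sub_left_of_mem_uIcc hs)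
    Set.left_mem_uIcc Set.right_mem_uIcc
  simp only [Real.norm_eq_abs] at h
  calc |g t - g x - deriv g x * (t - x)| = |g t - deriv g x * t - (g x - deriv g x * x)| := by
        congr 1; ring
    _ ≤ S * |t - x| * |t - x| := h
    _ = S * (t - x) ^ 2 := by rw [mul_assoc, abs_mul_abs_self]; ring

/-- bound for the auxiliary operator
`L̂_n^{(α)}(g;x) = L_n^{(α)}(g;x) + g(x) - g((n+p)x/(n(1-α)))` applied to a twice
continuously differentiable function `g` which, together with `g'` and `g''`, is
bounded on `[0,∞)`:
`|L̂_n^{(α)}(g;x) - g(x)| ≤ ψ_n^{(α)}(x) · sup_{u ≥ 0} |g''(u)|`. -/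
theorem auxiliary_operator_bound (n p : ℕ) (hn : 1 ≤ n) (α : ℝ) (hα : 0 ≤ α)
    (hα2 : α < 1/2) (g : ℝ → ℝ) (hg : ContDiff ℝ 2 g)
    (hgb : ∃ M : ℝ, ∀ u ≥ (0 : ℝ), |g u| ≤ M)
    (hgb' : ∃ M : ℝ, ∀ u ≥ (0 : ℝ), |deriv g u| ≤ M)
    (hgb'' : ∃ M : ℝ, ∀ u ≥ (0 : ℝ), |deriv (deriv g) u| ≤ M)
    (x : ℝ) (hx : 0 ≤ x) :
    |((∑' k : ℕ, w0 n p α x k * g ((k : ℝ) / n)) + g x -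
          g (((n : ℝ) + p) * x / ((n : ℝ) * (1 - α)))) - g x| ≤
      ((∑' k : ℕ, w0 n p α x k * ((k : ℝ) / n - x) ^ 2) +
          (x * ((p : ℝ) + (n : ℝ) * α) / ((n : ℝ) * (1 - α))) ^ 2) *
        ⨆ u : Set.Ici (0 : ℝ), |deriv (deriv g) u| := by
  obtain ⟨M, hM⟩ : ∃ M, n + p = M + 1 := ⟨n + p - 1, by omega⟩
  have hMr : (n : ℝ) + p = M + 1 := by exact_mod_cast hM
  simp only [w0_eq_weight hM]
  set S : ℝ := ⨆ u : Set.Ici (0 : ℝ), |deriv (deriv g) u| with hSdef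
  have hS : ∀ u ≥ (0 : ℝ), |deriv (deriv g) u| ≤ S := by
    obtain ⟨C, hC⟩ := hgb''
    intro u hu
    refine le_ciSup (f := fun u : Set.Ici (0 : ℝ) => |deriv (deriv g) u|) ⟨C, ?_⟩ ⟨u, hu⟩
    rintro _ ⟨v, rfl⟩
    exact hC v v.2
  have hn0 : (0 : ℝ) < n := by exact_mod_cast hn
  have h1α : 0 < 1 - α := by linarith
  set m : ℝ := ((n : ℝ) + p) * x / ((n : ℝ) * (1 - α)) with hm
  have hm0 : 0 ≤ m := by rw [hm]; positivity
  have hmx : x * ((p : ℝ) + (n : ℝ) * α) / ((n : ℝ) * (1 - α)) = m - x := by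
    rw [hm]; field_simp; ring
  rw [hmx]
  have H0 := hasSum_weight hα hα2 hx M
  have H1 : HasSum (fun k : ℕ => weight M α x k * ((k : ℝ) / n - x)) (m - x) := by
    convert ((hasSum_mul_weight hα hα2 hx M).div_const (n : ℝ)).sub (H0.mul_left x) using 1
    · rfl
    · funext k; ring
    · rw [hm, hMr]; field_simp
  have s2 : Summable fun k : ℕ => weight M α x k * ((k : ℝ) / n - x) ^ 2 := by
    convert ((summable_sq_mul_weight hα hα2 hx M).div_const ((n : ℝ) ^ 2)).sub
      (((summable_mul_weight hα hα2 hx M).mul_left (2 * x / n)).sub (H0.summable.mul_left (x ^ 2)))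
      using 1
    · rfl
    · funext k; field_simp; ring
  set ρ : ℝ → ℝ := fun t => g t - g x - deriv g x * (t - x) with hρ
  have hρle : ∀ t ≥ (0 : ℝ), |ρ t| ≤ S * (t - x) ^ 2 := fun t ht =>
    taylor_remainder_le hg hS hx ht
  have hterm : ∀ k : ℕ, ‖weight M α x k * ρ ((k : ℝ) / n)‖ ≤
      weight M α x k * ((k : ℝ) / n - x) ^ 2 * S := fun k => by
    have hw := weight_nonneg hα hx M k
    rw [norm_mul, Real.norm_of_nonneg hw, mul_assoc, mul_comm (_ ^ 2) S]
    exact mul_le_mul_of_nonneg_left (hρle _ (by positivity)) hw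
  have hle := tsum_of_norm_bounded (s2.hasSum.mul_right S) hterm
  have sρ : Summable fun k : ℕ => weight M α x k * ρ ((k : ℝ) / n) :=
    Summable.of_norm_bounded (s2.mul_right S) hterm
  -- the expectation of `g` is the affine Taylor part at the mean plus the averaged remainder
  have hg' : HasSum (fun k : ℕ => weight M α x k * g ((k : ℝ) / n))
      ((∑' k : ℕ, weight M α x k * ρ ((k : ℝ) / n)) + (g x + deriv g x * (m - x))) := by
    convert sρ.hasSum.add ((H0.mul_left (g x)).add (H1.mul_left (deriv g x))) using 1
    · funext k; simp only [hρ]; ring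
    · ring
  rw [hg'.tsum_eq]
  have hmρ := hρle m hm0
  rw [Real.norm_eq_abs] at hle
  calc _ = |(∑' k : ℕ, weight M α x k * ρ ((k : ℝ) / n)) - ρ m| := by
        congr 1; simp only [hρ]; ring
    _ ≤ |∑' k : ℕ, weight M α x k * ρ ((k : ℝ) / n)| + |ρ m| := abs_sub _ _
    _ ≤ _ := by linarith
end

section
/- There is a constant C > 0 such that for every integer n ≥ 1, every nonnegative integer p, every real α with 0 ≤ α < 1/2, every bounded continuous function f : [0,∞) → ℝ and every x ≥ 0, |L_n^{(α)}(f;x) - f(x)| ≤ ω(f, x(p + nα)/(n(1-α))) + C·ω₂(f, √(ψ_n^{(α)}(x))/2), where ψ_n^{(α)}(x) = Σ_{k=0}^{∞} w_{n,k}^{(α)}(x)·(k/n - x)² + ( x(p + nα)/(n(1-α)) )². -/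
/-- First modulus of continuity of `f` on `[0,∞)`:
`ω(f,δ) = sup{ |f(x+h) - f(x)| : x ≥ 0, 0 < h ≤ δ }` (with `ω(f,0) = 0`,
the supremum of the empty set in ℝ being `0`). -/
noncomputable def omega1 (f : ℝ → ℝ) (δ : ℝ) : ℝ :=
  sSup {y : ℝ | ∃ x ≥ (0 : ℝ), ∃ h : ℝ, 0 < h ∧ h ≤ δ ∧ y = |f (x + h) - f x|}

/-- Second modulus of smoothness of `f` on `[0,∞)`:
`ω₂(f,δ) = sup{ |f(x+2h) - 2f(x+h) + f(x)| : x ≥ 0, 0 < h ≤ δ }` (with `ω₂(f,0) = 0`). -/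
noncomputable def omega2 (f : ℝ → ℝ) (δ : ℝ) : ℝ :=
  sSup {y : ℝ | ∃ x ≥ (0 : ℝ), ∃ h : ℝ, 0 < h ∧ h ≤ δ ∧
    y = |f (x + 2 * h) - 2 * f (x + h) + f x|}

/-! ### The weights and their recurrences -/

/-- The weights `w0`, which depend on `n` and `p` only through `N = n + p`. -/
noncomputable def wt (N : ℕ) (α x : ℝ) (k : ℕ) : ℝ :=
  (Nat.choose (N + k - 1) k : ℝ) * (∏ i ∈ Finset.range k, (x + (i : ℝ) * α)) *
    (∏ i ∈ Finset.range N, (1 + (i : ℝ) * α)) /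
    (∏ i ∈ Finset.range (N + k), (1 + x + (i : ℝ) * α))

lemma den_pos {α x : ℝ} (hα : 0 ≤ α) (hx : 0 ≤ x) (m : ℕ) :
    0 < ∏ i ∈ Finset.range m, (1 + x + (i : ℝ) * α) :=
  Finset.prod_pos fun i _ => by positivity

lemma wt_nonneg {α x : ℝ} (hα : 0 ≤ α) (hx : 0 ≤ x) (N k : ℕ) : 0 ≤ wt N α x k := by
  unfold wt
  have h1 : 0 ≤ ∏ i ∈ Finset.range k, (x + (i : ℝ) * α) :=
    Finset.prod_nonneg fun i _ => by positivity
  have h2 : 0 ≤ ∏ i ∈ Finset.range N, (1 + (i : ℝ) * α) :=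
    Finset.prod_nonneg fun i _ => by positivity
  have h3 := den_pos hα hx (N + k)
  positivity

lemma wt_zero_left (α x : ℝ) (k : ℕ) : wt 0 α x k = if k = 0 then 1 else 0 := by
  rcases k with _ | k
  · simp [wt]
  · simp [wt]

lemma wt_succ {α x : ℝ} (hα : 0 ≤ α) (hx : 0 ≤ x) (N k : ℕ) :
    ((k : ℝ) + 1) * (1 + x + ((N : ℝ) + 1 + k) * α) * wt (N + 1) α x (k + 1)
      = ((N : ℝ) + 1 + k) * (x + k * α) * wt (N + 1) α x k := by
  have hD := (den_pos hα hx (N + 1 + k)).ne'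
  have hl : (1 + x + ((N : ℝ) + 1 + k) * α) ≠ 0 := by positivity
  have hc : ((Nat.choose (N + k + 1) (k + 1) : ℕ) : ℝ) * ((k : ℝ) + 1)
      = ((N : ℝ) + k + 1) * (Nat.choose (N + k) k : ℕ) := by
    exact_mod_cast (Nat.add_one_mul_choose_eq (N + k) k).symm
  unfold wt
  rw [show N + 1 + (k + 1) - 1 = N + k + 1 by omega, show N + 1 + k - 1 = N + k by omega,
    show N + 1 + (k + 1) = (N + 1 + k) + 1 by omega, Finset.prod_range_succ _ k,
    Finset.prod_range_succ _ (N + 1 + k)]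
  push_cast
  generalize ∏ i ∈ Finset.range (N + 1 + k), (1 + x + (i : ℝ) * α) = D at *
  generalize ∏ i ∈ Finset.range (N + 1), (1 + (i : ℝ) * α) = B at *
  generalize ∏ i ∈ Finset.range k, (x + (i : ℝ) * α) = A at *
  field_simp
  linear_combination (A * (x + k * α) * B) * hc

/-- The boundary term of the recurrence in `N`: in the urn model, the probability of reaching `N`
successes and `k` failures and then failing once more. -/
noncomputable def bd (N : ℕ) (α x : ℝ) (k : ℕ) : ℝ :=
  wt (N + 1) α x k * (x + k * α) / (1 + N * α)

lemma wt_pascal_zero {α x : ℝ} (hα : 0 ≤ α) (hx : 0 ≤ x) (N : ℕ) :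
    wt (N + 1) α x 0 + bd N α x 0 = wt N α x 0 := by
  have hD := (den_pos hα hx N).ne'
  have hl : (1 + x + (N : ℝ) * α) ≠ 0 := by positivity
  have hl' : (1 + (N : ℝ) * α) ≠ 0 := by positivity
  unfold bd wt
  simp only [Nat.add_zero, Nat.choose_zero_right, Finset.prod_range_succ, Finset.prod_range_zero]
  push_cast
  generalize ∏ i ∈ Finset.range N, (1 + x + (i : ℝ) * α) = D at *
  generalize ∏ i ∈ Finset.range N, (1 + (i : ℝ) * α) = B at *
  field_simp
  ring

lemma wt_pascal {α x : ℝ} (hα : 0 ≤ α) (hx : 0 ≤ x) (N k : ℕ) :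
    wt (N + 1) α x (k + 1) + bd N α x (k + 1) = wt N α x (k + 1) + bd N α x k := by
  have hD := (den_pos hα hx (N + k + 1)).ne'
  have hl : (1 + x + ((N : ℝ) + k + 1) * α) ≠ 0 := by positivity
  have hl' : (1 + (N : ℝ) * α) ≠ 0 := by positivity
  have hc : ((Nat.choose (N + k + 1) (k + 1) : ℕ) : ℝ)
      = (Nat.choose (N + k) k : ℕ) + (Nat.choose (N + k) (k + 1) : ℕ) := by
    exact_mod_cast Nat.choose_succ_succ (N + k) k
  unfold bd wt
  rw [show N + 1 + (k + 1) - 1 = N + k + 1 by omega, show N + 1 + k - 1 = N + k by omega,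
    show N + (k + 1) - 1 = N + k by omega,
    show N + 1 + (k + 1) = (N + k + 1) + 1 by omega, show N + (k + 1) = N + k + 1 by omega,
    show N + 1 + k = N + k + 1 by omega, Finset.prod_range_succ _ k,
    Finset.prod_range_succ _ N, Finset.prod_range_succ _ (N + k + 1), hc]
  push_cast
  generalize ∏ i ∈ Finset.range (N + k + 1), (1 + x + (i : ℝ) * α) = D at *
  generalize ∏ i ∈ Finset.range N, (1 + (i : ℝ) * α) = B at *
  generalize ∏ i ∈ Finset.range k, (x + (i : ℝ) * α) = A at *
  field_simp
  ring

lemma sum_wt_succ {α x : ℝ} (hα : 0 ≤ α) (hx : 0 ≤ x) (N K : ℕ) :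
    ∑ k ∈ Finset.range (K + 1), wt (N + 1) α x k + bd N α x K
      = ∑ k ∈ Finset.range (K + 1), wt N α x k := by
  induction K with
  | zero => simpa using wt_pascal_zero hα hx N
  | succ K ih =>
    rw [Finset.sum_range_succ, Finset.sum_range_succ (fun k => wt N α x k) (K + 1), ← ih]
    linarith [wt_pascal hα hx N K]

lemma bd_nonneg {α x : ℝ} (hα : 0 ≤ α) (hx : 0 ≤ x) (N k : ℕ) : 0 ≤ bd N α x k := by
  have := wt_nonneg hα hx (N + 1) k
  unfold bd
  positivity

lemma sum_wt_le_one {α x : ℝ} (hα : 0 ≤ α) (hx : 0 ≤ x) (N K : ℕ) :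
    ∑ k ∈ Finset.range K, wt N α x k ≤ 1 := by
  have key : ∀ K, ∑ k ∈ Finset.range (K + 1), wt N α x k ≤ 1 := by
    intro K
    induction N with
    | zero => simp [wt_zero_left]
    | succ N ih => linarith [sum_wt_succ hα hx N K, bd_nonneg hα hx N K]
  rcases K with _ | K
  · simp
  · exact key K

/-! ### Moments of the weights -/

lemma summable_wt {α x : ℝ} (hα : 0 ≤ α) (hx : 0 ≤ x) (N : ℕ) : Summable (wt N α x) :=
  summable_of_sum_range_le (wt_nonneg hα hx N) (sum_wt_le_one hα hx N)

/-- Telescoping identity behind the second moment; the cubic terms in `k` cancel. -/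
lemma sum_sq_telescope {α x : ℝ} (hα : 0 ≤ α) (hx : 0 ≤ x) (N K : ℕ) :
    ∑ k ∈ Finset.range K, (-(1 - 2 * α) * (k : ℝ) ^ 2 + (((N : ℝ) + 2) * x + (N + 1) * α) * k
        + (N + 1) * x) * wt (N + 1) α x k
      = (K : ℝ) ^ 2 * (1 + x + ((N : ℝ) + K) * α) * wt (N + 1) α x K := by
  induction K with
  | zero => simp
  | succ K ih =>
    rw [Finset.sum_range_succ, ih]
    push_cast
    linear_combination -((K : ℝ) + 1) * wt_succ hα hx N K

lemma sum_lin_telescope {α x : ℝ} (hα : 0 ≤ α) (hx : 0 ≤ x) (N K : ℕ) :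
    ∑ k ∈ Finset.range K, (((N : ℝ) + 1) * x - (1 - α) * k) * wt (N + 1) α x k
      = (K : ℝ) * (1 + x + ((N : ℝ) + K) * α) * wt (N + 1) α x K := by
  induction K with
  | zero => simp
  | succ K ih =>
    rw [Finset.sum_range_succ, ih]
    push_cast
    linear_combination -wt_succ hα hx N K

lemma summable_sq {α x : ℝ} (hα : 0 ≤ α) (hα2 : α < 1 / 2) (hx : 0 ≤ x) (N : ℕ) :
    Summable fun k : ℕ => (k : ℝ) ^ 2 * wt (N + 1) α x k := by
  have he : 0 < 1 - 2 * α := by linarith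
  set e := 1 - 2 * α with hedef
  set b := ((N : ℝ) + 2) * x + (N + 1) * α with hb
  set c := ((N : ℝ) + 1) * x with hc
  have hc0 : 0 ≤ c := by positivity
  refine summable_of_sum_range_le (c := (b ^ 2 / (2 * e) + c) / (e / 2))
    (fun k => mul_nonneg (by positivity) (wt_nonneg hα hx _ _)) (fun K => ?_)
  rw [le_div_iff₀ (by positivity)]
  have h0 := sum_sq_telescope hα hx N K
  have h1 : 0 ≤ (K : ℝ) ^ 2 * (1 + x + ((N : ℝ) + K) * α) * wt (N + 1) α x K :=
    mul_nonneg (by positivity) (wt_nonneg hα hx _ _)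
  rw [← h0] at h1
  have h2 : ∑ k ∈ Finset.range K, (-e * (k : ℝ) ^ 2 + b * k + c) * wt (N + 1) α x k
      ≤ ∑ k ∈ Finset.range K, ((b ^ 2 / (2 * e) + c) * wt (N + 1) α x k
        - (e / 2) * ((k : ℝ) ^ 2 * wt (N + 1) α x k)) := by
    refine Finset.sum_le_sum fun k _ => ?_
    have hw := wt_nonneg hα hx (N + 1) k
    -- The linear term is absorbed by half of the quadratic one.
    have hq : b * k ≤ b ^ 2 / (2 * e) + e / 2 * (k : ℝ) ^ 2 := by
      have : b ^ 2 / (2 * e) + e / 2 * (k : ℝ) ^ 2 - b * k = (b - e * k) ^ 2 / (2 * e) := by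
        field_simp
        ring
      have : 0 ≤ (b - e * k) ^ 2 / (2 * e) := by positivity
      linarith
    nlinarith [mul_le_mul_of_nonneg_right hq hw]
  rw [Finset.sum_sub_distrib, ← Finset.mul_sum, ← Finset.mul_sum] at h2
  have h3 : (b ^ 2 / (2 * e) + c) * ∑ k ∈ Finset.range K, wt (N + 1) α x k
      ≤ (b ^ 2 / (2 * e) + c) * 1 :=
    mul_le_mul_of_nonneg_left (sum_wt_le_one hα hx _ _) (by positivity)
  linarith

lemma summable_lin {α x : ℝ} (hα : 0 ≤ α) (hα2 : α < 1 / 2) (hx : 0 ≤ x) (N : ℕ) :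
    Summable fun k : ℕ => (k : ℝ) * wt (N + 1) α x k := by
  refine (summable_sq hα hα2 hx N).of_nonneg_of_le
    (fun k => mul_nonneg (by positivity) (wt_nonneg hα hx _ _)) (fun k => ?_)
  refine mul_le_mul_of_nonneg_right ?_ (wt_nonneg hα hx _ _)
  exact_mod_cast Nat.le_self_pow two_ne_zero k

lemma bd_tendsto {α x : ℝ} (hα : 0 ≤ α) (hα2 : α < 1 / 2) (hx : 0 ≤ x) (N : ℕ) :
    Filter.Tendsto (bd N α x) Filter.atTop (nhds 0) := by
  have h0 := (summable_wt hα hx (N + 1)).tendsto_atTop_zero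
  have h1 := (summable_lin hα hα2 hx N).tendsto_atTop_zero
  have h2 := ((h0.const_mul x).add (h1.const_mul α)).div_const (1 + N * α)
  simp only [mul_zero, add_zero, zero_div] at h2
  refine h2.congr fun k => ?_
  unfold bd
  ring

lemma wt_hasSum_one {α x : ℝ} (hα : 0 ≤ α) (hα2 : α < 1 / 2) (hx : 0 ≤ x) (N : ℕ) :
    HasSum (wt N α x) 1 := by
  induction N with
  | zero =>
    have : wt 0 α x = fun k => if k = 0 then 1 else 0 := funext (wt_zero_left α x)
    rw [this]
    exact hasSum_ite_eq 0 1
  | succ N ih =>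
    rw [(summable_wt hα hx _).hasSum_iff_tendsto_nat, ← Filter.tendsto_add_atTop_iff_nat 1]
    have h := (((Filter.tendsto_add_atTop_iff_nat 1).2 ih.tendsto_sum_nat).sub
      (bd_tendsto hα hα2 hx N))
    rw [sub_zero] at h
    refine h.congr fun K => ?_
    linarith [sum_wt_succ hα hx N K]

lemma wt_mean {α x : ℝ} (hα : 0 ≤ α) (hα2 : α < 1 / 2) (hx : 0 ≤ x) (N : ℕ) :
    HasSum (fun k : ℕ => (k : ℝ) * wt (N + 1) α x k) (((N : ℝ) + 1) * x / (1 - α)) := by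
  have h0 := (summable_lin hα hα2 hx N).tendsto_atTop_zero
  have h1 := (summable_sq hα hα2 hx N).tendsto_atTop_zero
  have h2 := (h0.const_mul (1 + x + N * α)).add (h1.const_mul α)
  simp only [mul_zero, add_zero] at h2
  have hs := ((wt_hasSum_one hα hα2 hx (N + 1)).mul_left (((N : ℝ) + 1) * x)).sub
    ((summable_lin hα hα2 hx N).hasSum.mul_left (1 - α))
  have h3 := hs.tendsto_sum_nat
  have h4 := tendsto_nhds_unique h3 (h2.congr fun K => by
    calc _ = (K : ℝ) * (1 + x + ((N : ℝ) + K) * α) * wt (N + 1) α x K := by ring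
      _ = _ := (sum_lin_telescope hα hx N K).symm
      _ = _ := Finset.sum_congr rfl fun k _ => by ring)
  have h5 : 1 - α ≠ 0 := by linarith
  have h6 : ((N : ℝ) + 1) * x / (1 - α) = ∑' k : ℕ, (k : ℝ) * wt (N + 1) α x k := by
    rw [div_eq_iff h5]
    linarith
  rw [h6]
  exact (summable_lin hα hα2 hx N).hasSum

/-! ### Functions with bounded second differences -/

lemma seq_bound {a : ℕ → ℝ} {ω : ℝ} {m : ℕ} (h0 : |a 0| ≤ 2 * ω)
    (h1 : |a 1| ≤ 2 * ω) (h : ∀ i, i + 2 ≤ m → |a (i + 2) - 2 * a (i + 1) + a i| ≤ ω) :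
    |a m| ≤ (2 + 4 * m + (m : ℝ) ^ 2) * ω := by
  have hω : 0 ≤ ω := by linarith [abs_nonneg (a 0)]
  have hd : ∀ i, i + 1 ≤ m → |a (i + 1) - a i| ≤ (4 + (i : ℝ)) * ω := by
    intro i
    induction i with
    | zero =>
      intro _
      have := abs_sub (a 1) (a 0)
      simp only [zero_add, Nat.cast_zero, add_zero]
      linarith
    | succ i ih =>
      intro hi
      have e := ih (by omega)
      have := h i (by omega)
      have h3 := abs_add_le (a (i + 2) - 2 * a (i + 1) + a i) (a (i + 1) - a i)
      rw [show a (i + 2) - 2 * a (i + 1) + a i + (a (i + 1) - a i) = a (i + 1 + 1) - a (i + 1) by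
        ring_nf] at h3
      push_cast
      linarith
  have hb : ∀ i, i ≤ m → |a i| ≤ (2 + 4 * i + (i : ℝ) ^ 2) * ω := by
    intro i
    induction i with
    | zero => intro _; simpa using h0
    | succ i ih =>
      intro hi
      have e1 := ih (by omega)
      have e2 := hd i hi
      have h3 := abs_add_le (a i) (a (i + 1) - a i)
      rw [add_sub_cancel] at h3
      push_cast
      have : 0 ≤ (i : ℝ) * ω := by positivity
      nlinarith
  exact hb m le_rfl

/-- A function vanishing at both ends of `[μ, μ + h]` is bounded there by its second differences:
at a maximum of `|F|`, reflect the nearer end point through it. -/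
lemma interval_bound {F : ℝ → ℝ} {μ h ω : ℝ} (hμ : 0 ≤ μ) (hω : 0 ≤ ω)
    (hF : ContinuousOn F (Set.Ici 0)) (hF0 : F μ = 0) (hF1 : F (μ + h) = 0)
    (H : ∀ y s : ℝ, 0 ≤ y → 0 < s → s ≤ h → |F (y + 2 * s) - 2 * F (y + s) + F y| ≤ ω)
    {t : ℝ} (ht : t ∈ Set.Icc μ (μ + h)) : |F t| ≤ ω := by
  have hsub : Set.Icc μ (μ + h) ⊆ Set.Ici 0 := fun y hy => hμ.trans hy.1
  obtain ⟨s, hs, hmax⟩ := isCompact_Icc.exists_isMaxOn ⟨t, ht⟩ (hF.mono hsub).abs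
  refine (hmax ht).trans ?_
  change |F s| ≤ ω
  rcases eq_or_lt_of_le hs.1 with e | hs1
  · rw [← e, hF0]; simpa using hω
  rcases eq_or_lt_of_le hs.2 with e | hs2
  · rw [e, hF1]; simpa using hω
  rcases le_total s (μ + h / 2) with hle | hle
  · have e := H μ (s - μ) hμ (by linarith) (by linarith)
    have e2 : |F (μ + 2 * (s - μ))| ≤ |F s| :=
      hmax ⟨by linarith, by linarith⟩
    rw [hF0, show μ + (s - μ) = s by ring] at e
    rw [abs_le] at *
    rcases abs_cases (F s) with ⟨e3, _⟩ | ⟨e3, _⟩ <;> constructor <;> linarith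
  · have e := H (2 * s - (μ + h)) (μ + h - s) (by linarith) (by linarith) (by linarith)
    have e2 : |F (2 * s - (μ + h))| ≤ |F s| :=
      hmax ⟨by linarith, by linarith⟩
    rw [show 2 * s - (μ + h) + 2 * (μ + h - s) = μ + h by ring, hF1,
      show 2 * s - (μ + h) + (μ + h - s) = s by ring] at e
    rw [abs_le] at *
    rcases abs_cases (F s) with ⟨e3, _⟩ | ⟨e3, _⟩ <;> constructor <;> linarith

/-- Growth bound for a function vanishing at `μ` and `μ + h`, obtained by walking from
`[μ, μ + 2h]` to `t` in steps of length `h`. -/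
lemma growth_bound {F : ℝ → ℝ} {μ h ω : ℝ} (hμ : 0 ≤ μ) (hh : 0 < h) (hω : 0 ≤ ω)
    (hF : ContinuousOn F (Set.Ici 0)) (hF0 : F μ = 0) (hF1 : F (μ + h) = 0)
    (H : ∀ y s : ℝ, 0 ≤ y → 0 < s → s ≤ h → |F (y + 2 * s) - 2 * F (y + s) + F y| ≤ ω)
    {t : ℝ} (ht : 0 ≤ t) : |F t| ≤ 20 * ω * (1 + ((t - μ) / h) ^ 2) := by
  have hI : ∀ y, μ ≤ y → y ≤ μ + h → |F y| ≤ ω := fun y h1 h2 =>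
    interval_bound hμ hω hF hF0 hF1 H ⟨h1, h2⟩
  have hI2 : ∀ y, μ + h ≤ y → y ≤ μ + 2 * h → |F y| ≤ 2 * ω := by
    intro y h1 h2
    rcases eq_or_lt_of_le h1 with e | h1
    · rw [← e, hF1]; simpa using hω
    have e := H (2 * (μ + h) - y) (y - (μ + h)) (by linarith) (by linarith) (by linarith)
    have e2 := hI (2 * (μ + h) - y) (by linarith) (by linarith)
    rw [show 2 * (μ + h) - y + 2 * (y - (μ + h)) = y by ring,
      show 2 * (μ + h) - y + (y - (μ + h)) = μ + h by ring, hF1] at e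
    rw [abs_le] at *
    constructor <;> linarith
  rcases le_total μ t with hle | hle
  · set z := (t - μ) / h with hz
    have hz0 : 0 ≤ z := div_nonneg (by linarith) hh.le
    have hzt : z * h = t - μ := div_mul_cancel₀ _ hh.ne'
    set m := ⌊z⌋₊ with hm
    have hm1 : (m : ℝ) ≤ z := Nat.floor_le hz0
    have hm2 : z < m + 1 := Nat.lt_floor_add_one z
    have hm1' := mul_le_mul_of_nonneg_right hm1 hh.le
    have hm2' := mul_le_mul_of_nonneg_right hm2.le hh.le
    have key := seq_bound (a := fun i => F (t - m * h + i * h)) (ω := ω) (m := m)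
      (by
        have := hI (t - m * h) (by linarith) (by linarith)
        simp only [Nat.cast_zero, zero_mul, add_zero]
        linarith)
      (by
        simp only [Nat.cast_one, one_mul]
        exact hI2 _ (by linarith) (by linarith))
      (fun i _ => by
        have h3 : 0 ≤ (i : ℝ) * h := by positivity
        have := H (t - m * h + i * h) h (by linarith) hh le_rfl
        rw [show t - m * h + i * h + 2 * h = t - m * h + (i + 2) * h by ring,
          show t - m * h + i * h + h = t - m * h + (i + 1) * h by ring] at this
        push_cast
        exact this)
    simp only [sub_add_cancel] at key
    refine key.trans ?_
    rw [mul_comm (20 * ω), ← mul_assoc]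
    refine mul_le_mul_of_nonneg_right ?_ hω
    have : (0 : ℝ) ≤ m := by positivity
    nlinarith [sq_nonneg (z - 1)]
  · set z := (μ - t) / h with hz
    have hz0 : 0 ≤ z := div_nonneg (by linarith) hh.le
    have hzt : z * h = μ - t := div_mul_cancel₀ _ hh.ne'
    have hzz : (t - μ) / h = -z := by rw [hz, ← neg_sub, neg_div]
    rw [hzz]
    set m := ⌈z⌉₊ with hm
    have hm1 : z ≤ m := Nat.le_ceil z
    have hm2 : (m : ℝ) < z + 1 := Nat.ceil_lt_add_one hz0
    have hm1' := mul_le_mul_of_nonneg_right hm1 hh.le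
    have hm2' := mul_le_mul_of_nonneg_right hm2.le hh.le
    have key := seq_bound (a := fun i => F (t + (m + 1) * h - i * h)) (ω := ω) (m := m + 1)
      (by
        simp only [Nat.cast_zero, zero_mul, sub_zero]
        exact hI2 _ (by linarith) (by linarith))
      (by
        have := hI (t + (m + 1) * h - 1 * h) (by linarith) (by linarith)
        simp only [Nat.cast_one]
        linarith)
      (fun i hi => by
        have h3 : ((i : ℝ) + 2) ≤ m + 1 := by exact_mod_cast hi
        have h4 := mul_le_mul_of_nonneg_right h3 hh.le
        have := H (t + (m + 1) * h - (i + 2) * h) h (by linarith) hh le_rfl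
        rw [show t + (m + 1) * h - (i + 2) * h + 2 * h = t + (m + 1) * h - i * h by ring,
          show t + (m + 1) * h - (i + 2) * h + h = t + (m + 1) * h - (i + 1) * h by ring] at this
        push_cast
        rw [abs_le] at *
        constructor <;> linarith)
    push_cast at key
    rw [add_sub_cancel_right] at key
    refine key.trans ?_
    rw [mul_comm (20 * ω), ← mul_assoc]
    refine mul_le_mul_of_nonneg_right ?_ hω
    have : (0 : ℝ) ≤ m := by positivity
    nlinarith [sq_nonneg (z - 1)]

lemma chord_bound {f : ℝ → ℝ} {μ h ω : ℝ} (hμ : 0 ≤ μ) (hh : 0 < h) (hω : 0 ≤ ω)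
    (hf : ContinuousOn f (Set.Ici 0))
    (H : ∀ y s : ℝ, 0 ≤ y → 0 < s → s ≤ h → |f (y + 2 * s) - 2 * f (y + s) + f y| ≤ ω) :
    ∃ c : ℝ, ∀ t, 0 ≤ t →
      |f t - f μ - c * (t - μ)| ≤ 20 * ω * (1 + ((t - μ) / h) ^ 2) := by
  refine ⟨(f (μ + h) - f μ) / h, fun t ht => ?_⟩
  refine growth_bound (F := fun t => f t - f μ - (f (μ + h) - f μ) / h * (t - μ)) hμ hh hω
    (by fun_prop) (by ring) (by field_simp; ring) (fun y s hy hs hsh => ?_) ht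
  have := H y s hy hs hsh
  convert this using 2
  ring

/-! ### Combining moments and second differences -/

lemma omega2_spec {f : ℝ → ℝ} {M δ : ℝ} (hM : ∀ t ≥ (0 : ℝ), |f t| ≤ M) (y s : ℝ) (hy : 0 ≤ y)
    (hs : 0 < s) (hsδ : s ≤ δ) : |f (y + 2 * s) - 2 * f (y + s) + f y| ≤ omega2 f δ := by
  refine le_csSup ⟨4 * M, ?_⟩ ⟨y, hy, s, hs, hsδ, rfl⟩
  rintro _ ⟨x, hx, h, hh, -, rfl⟩
  have h1 := hM (x + 2 * h) (by positivity)
  have h2 := hM (x + h) (by positivity)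
  have h3 := hM x hx
  rw [abs_le] at *
  constructor <;> linarith

lemma omega1_spec {f : ℝ → ℝ} {M δ : ℝ} (hM : ∀ t ≥ (0 : ℝ), |f t| ≤ M) (y : ℝ) (hy : 0 ≤ y)
    (hδ : 0 ≤ δ) : |f (y + δ) - f y| ≤ omega1 f δ := by
  rcases eq_or_lt_of_le hδ with e | hδ
  · rw [← e, add_zero, sub_self, abs_zero]
    apply Real.sSup_nonneg
    rintro _ ⟨x, _, h, _, _, rfl⟩
    positivity
  refine le_csSup ⟨2 * M, ?_⟩ ⟨y, hy, δ, hδ, le_rfl, rfl⟩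
  rintro _ ⟨x, hx, h, hh, -, rfl⟩
  have h2 := hM (x + h) (by positivity)
  have h3 := hM x hx
  rw [abs_le] at *
  constructor <;> linarith

lemma omega2_nonneg (f : ℝ → ℝ) (δ : ℝ) : 0 ≤ omega2 f δ := by
  apply Real.sSup_nonneg
  rintro _ ⟨x, _, h, _, _, rfl⟩
  positivity

/-- The estimate for an arbitrary discrete probability distribution `w` on the points `y k ≥ 0`
with mean `x + β`. -/
lemma discrete_estimate {w y : ℕ → ℝ} {x β M : ℝ} {f : ℝ → ℝ} (hw : ∀ k, 0 ≤ w k)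
    (hy : ∀ k, 0 ≤ y k) (hx : 0 ≤ x) (hβ : 0 ≤ β) (h1 : HasSum w 1)
    (hm : HasSum (fun k => w k * y k) (x + β))
    (hv : Summable fun k => w k * (y k - x) ^ 2)
    (hf : ContinuousOn f (Set.Ici 0)) (hM : ∀ t ≥ (0 : ℝ), |f t| ≤ M) :
    |(∑' k, w k * f (y k)) - f x| ≤
      omega1 f β + 180 * omega2 f (Real.sqrt ((∑' k, w k * (y k - x) ^ 2) + β ^ 2) / 2) := by
  set v := ∑' k, w k * (y k - x) ^ 2 with hvdef
  have hv0 : 0 ≤ v := tsum_nonneg fun k => mul_nonneg (hw k) (sq_nonneg _)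
  set h := Real.sqrt (v + β ^ 2) / 2 with hh
  have hh4 : 4 * h ^ 2 = v + β ^ 2 := by
    rw [hh, div_pow, Real.sq_sqrt (by positivity)]
    ring
  have hfs : Summable fun k => w k * f (y k) := by
    refine Summable.of_norm_bounded (h1.summable.mul_left M) fun k => ?_
    rw [Real.norm_eq_abs, abs_mul, abs_of_nonneg (hw k), mul_comm]
    exact mul_le_mul_of_nonneg_right (hM _ (hy k)) (hw k)
  have hω2 := omega2_nonneg f h
  have hω1 := omega1_spec hM x hx hβ
  have hh0 : 0 ≤ h := by positivity
  rcases eq_or_lt_of_le hh0 with e | hpos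
  · -- If `ψ = 0`, the distribution is concentrated at `x`.
    have hvz : v = 0 := by rw [← e] at hh4; nlinarith [sq_nonneg β]
    have hz : ∀ k, w k * (y k - x) ^ 2 = 0 := by
      have := (hasSum_zero_iff_of_nonneg (fun k => mul_nonneg (hw k) (sq_nonneg (y k - x)))).1
        (by simpa [← hvdef, hvz] using hv.hasSum)
      exact fun k => congrFun this k
    have hk : ∀ k, w k * f (y k) = w k * f x := by
      intro k
      rcases mul_eq_zero.1 (hz k) with h0 | h0
      · simp [h0]
      · rw [sub_eq_zero.1 (pow_eq_zero_iff two_ne_zero |>.1 h0)]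
    rw [tsum_congr hk, tsum_mul_right, h1.tsum_eq, one_mul, sub_self, abs_zero]
    linarith [abs_nonneg (f (x + β) - f x)]
  obtain ⟨c, hc⟩ := chord_bound (μ := x + β) (by positivity) hpos hω2 hf (omega2_spec hM)
  -- The linear part of the chord has zero expectation at the mean.
  have hS : HasSum (fun k => w k * (f (y k) - f (x + β) - c * (y k - (x + β))))
      ((∑' k, w k * f (y k)) - f (x + β)) := by
    have := ((hfs.hasSum.sub (h1.mul_right (f (x + β)))).sub (hm.mul_left c)).add
      (h1.mul_right (c * (x + β)))
    rw [show (∑' k, w k * f (y k)) - 1 * f (x + β) - c * (x + β) + 1 * (c * (x + β))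
      = (∑' k, w k * f (y k)) - f (x + β) by ring] at this
    exact this.congr_fun fun k => by ring
  have hB : HasSum (fun k => 20 * omega2 f h * (w k + (2 * (w k * (y k - x) ^ 2)
      + w k * (2 * β ^ 2)) / h ^ 2)) (20 * omega2 f h * (1 + (2 * v + 1 * (2 * β ^ 2)) / h ^ 2)) :=
    (h1.add (((hv.hasSum.mul_left 2).add (h1.mul_right (2 * β ^ 2))).div_const _)).mul_left _
  have hle : ∀ k, ‖w k * (f (y k) - f (x + β) - c * (y k - (x + β)))‖ ≤
      20 * omega2 f h * (w k + (2 * (w k * (y k - x) ^ 2) + w k * (2 * β ^ 2)) / h ^ 2) := by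
    intro k
    rw [Real.norm_eq_abs, abs_mul, abs_of_nonneg (hw k)]
    have e1 := mul_le_mul_of_nonneg_left (hc (y k) (hy k)) (hw k)
    have e2 : ((y k - (x + β)) / h) ^ 2 ≤ (2 * (y k - x) ^ 2 + 2 * β ^ 2) / h ^ 2 := by
      rw [div_pow]
      refine div_le_div_of_nonneg_right ?_ (by positivity)
      nlinarith [sq_nonneg (y k - x + β)]
    refine e1.trans ?_
    have e3 := mul_le_mul_of_nonneg_left e2 (mul_nonneg (hw k) hω2)
    calc _ = 20 * (w k * omega2 f h) + 20 * (w k * omega2 f h * ((y k - (x + β)) / h) ^ 2) := by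
          ring
      _ ≤ 20 * (w k * omega2 f h) + 20 * (w k * omega2 f h *
          ((2 * (y k - x) ^ 2 + 2 * β ^ 2) / h ^ 2)) := by linarith
      _ = _ := by ring
  have hmain := hS.norm_le_of_bounded hB hle
  have hval : 20 * omega2 f h * (1 + (2 * v + 1 * (2 * β ^ 2)) / h ^ 2) = 180 * omega2 f h := by
    rw [show 2 * v + 1 * (2 * β ^ 2) = 8 * h ^ 2 by linarith, mul_div_cancel_right₀ _ (by positivity)]
    ring
  rw [hval, Real.norm_eq_abs] at hmain
  calc _ ≤ |f (x + β) - f x| + |(∑' k, w k * f (y k)) - f (x + β)| := by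
        rw [add_comm]; exact abs_sub_le _ _ _
    _ ≤ _ := add_le_add hω1 hmain

/-- there is `C > 0` such that for all `n ≥ 1`, `p`, `0 ≤ α < 1/2`,
every bounded continuous `f : [0,∞) → ℝ` and every `x ≥ 0`,
`|L_n^{(α)}(f;x) - f(x)| ≤ ω(f, x(p+nα)/(n(1-α))) + C·ω₂(f, √(ψ_n^{(α)}(x))/2)`. -/
theorem direct_local_estimate :
    ∃ C > (0 : ℝ), ∀ n p : ℕ, 1 ≤ n → ∀ α : ℝ, 0 ≤ α → α < 1/2 →
      ∀ f : ℝ → ℝ, ContinuousOn f (Set.Ici 0) → (∃ M : ℝ, ∀ t ≥ (0 : ℝ), |f t| ≤ M) →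
      ∀ x : ℝ, 0 ≤ x →
        |(∑' k : ℕ, w0 n p α x k * f ((k : ℝ) / n)) - f x| ≤
          omega1 f (x * ((p : ℝ) + (n : ℝ) * α) / ((n : ℝ) * (1 - α))) +
            C * omega2 f (Real.sqrt ((∑' k : ℕ, w0 n p α x k * ((k : ℝ) / n - x) ^ 2) +
              (x * ((p : ℝ) + (n : ℝ) * α) / ((n : ℝ) * (1 - α))) ^ 2) / 2) := by
  refine ⟨180, by norm_num, fun n p hn α hα hα2 f hf ⟨M, hM⟩ x hx => ?_⟩
  have hn0 : (0 : ℝ) < n := by exact_mod_cast hn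
  have h1α : 0 < 1 - α := by linarith
  obtain ⟨N, hN⟩ : ∃ N, n + p = N + 1 := ⟨n + p - 1, by omega⟩
  have hN' : (n : ℝ) + p = N + 1 := by exact_mod_cast hN
  have hwt : ∀ k, w0 n p α x k = wt (N + 1) α x k := fun k => by rw [← hN]; rfl
  simp only [hwt]
  refine discrete_estimate (y := fun k : ℕ => (k : ℝ) / n) (wt_nonneg hα hx _)
    (fun k => by positivity) hx (by positivity) (wt_hasSum_one hα hα2 hx _) ?_ ?_ hf hM
  · have := (wt_mean hα hα2 hx N).div_const (n : ℝ)
    rw [show ((N : ℝ) + 1) * x / (1 - α) / n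
      = x + x * ((p : ℝ) + n * α) / (n * (1 - α)) by rw [← hN']; field_simp; ring] at this
    exact this.congr_fun fun k => by ring
  · have := (((summable_sq hα hα2 hx N).mul_left (1 / (n : ℝ) ^ 2)).sub
      ((summable_lin hα hα2 hx N).mul_left (2 * x / n))).add
      ((summable_wt hα hx (N + 1)).mul_left (x ^ 2))
    refine this.congr fun k => ?_
    field_simp
    ring
end

section
/- There is a constant C > 0 such that for every integer n ≥ 1, every real α ≥ 0, every continuous function f : [0,1] → ℝ and every x ∈ [0,1], the Stancu operator B_n^{(α)}(f;x) = Σ_{k=0}^{n} C(n,k) · (∏_{i=0}^{k-1}(x+iα)) · (∏_{i=0}^{n-k-1}(1-x+iα)) / (∏_{i=0}^{n-1}(1+iα)) · f(k/n) satisfies |B_n^{(α)}(f;x) - f(x)| ≤ C·ω₂(f, √(φ_n^{(α)}(x))/2), where φ_n^{(α)}(x) = Σ_{k=0}^{n} C(n,k) · (∏_{i=0}^{k-1}(x+iα)) · (∏_{i=0}^{n-k-1}(1-x+iα)) / (∏_{i=0}^{n-1}(1+iα)) · (k/n - x)². -/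
/-!
The weights `w k = stancuWeight n α x k` form a probability distribution on the nodes `k / n` with
mean `x` (a Chu–Vandermonde identity for rising factorials of step `α`), and its variance is
`φ = σ²`. The estimate holds for every such distribution.

Put `h = σ / 2` and `ω = ω₂(f, h)`. If `h > 0`, choose an interval `[a, a + 2h] ⊆ [0, 1]` containing
`x`, and let `g` be `f` minus its affine interpolant at `a` and `a + 2h`; second differences of `g`
and `f` agree. At a maximum of `|g|` on `[a, a + 2h]`, the second difference reaching to
the nearer endpoint gives `|g| ≤ ω` on that interval (`abs_le_of_secondDiff`). Outside it, summing
second differences of step `h` twice gives quadratic growth, `|g t| ≤ ω (7 + 6 (t - x)² / h²)`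
(`growth_right`). Averaging and using `σ² = 4h²` gives `|∑ w k * g (k / n)| ≤ 31 ω`. As affine
functions are reproduced, `∑ w k * f (k / n) - f x = ∑ w k * g (k / n) - g x`, whose absolute value
is at most `32 ω`. If `h = 0`, the distribution is concentrated at `x`.
-/

/-- The weight of the Stancu operator based on the Pólya–Eggenberger distribution. -/
noncomputable def stancuWeight (n : ℕ) (α x : ℝ) (k : ℕ) : ℝ :=
  (Nat.choose n k : ℝ) * (∏ i ∈ Finset.range k, (x + (i : ℝ) * α)) *
    (∏ i ∈ Finset.range (n - k), (1 - x + (i : ℝ) * α)) /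
    (∏ i ∈ Finset.range n, (1 + (i : ℝ) * α))

/-- The Stancu operator `B_n^{(α)}(f;x)`. -/
noncomputable def stancuOp (n : ℕ) (α : ℝ) (f : ℝ → ℝ) (x : ℝ) : ℝ :=
  ∑ k ∈ Finset.range (n + 1), stancuWeight n α x k * f ((k : ℝ) / n)

/-- Second modulus of smoothness of `f` on `[0,1]`:
`ω₂(f,δ) = sup{ |f(x+2h) - 2f(x+h) + f(x)| : 0 < h ≤ δ, x ≥ 0, x + 2h ≤ 1 }`
(with `ω₂(f,0) = 0`, the supremum of the empty set in ℝ being `0`). -/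
noncomputable def omega2I (f : ℝ → ℝ) (δ : ℝ) : ℝ :=
  sSup {y : ℝ | ∃ x ≥ (0 : ℝ), ∃ h : ℝ, 0 < h ∧ h ≤ δ ∧ x + 2 * h ≤ 1 ∧
    y = |f (x + 2 * h) - 2 * f (x + h) + f x|}

/-- The rising factorial `x (x + α) ⋯ (x + (k - 1) α)` of step `α`. -/
noncomputable def risingFact (α x : ℝ) (k : ℕ) : ℝ :=
  ∏ i ∈ Finset.range k, (x + (i : ℝ) * α)

lemma risingFact_succ (α x : ℝ) (k : ℕ) :
    risingFact α x (k + 1) = risingFact α x k * (x + k * α) := by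
  simp [risingFact, Finset.prod_range_succ]

lemma risingFact_succ' (α x : ℝ) (k : ℕ) :
    risingFact α x (k + 1) = x * risingFact α (x + α) k := by
  simp only [risingFact, Finset.prod_range_succ']
  rw [mul_comm]
  congr 1
  · simp
  · refine Finset.prod_congr rfl fun i _ => ?_
    push_cast
    ring

/-- The Chu–Vandermonde identity. -/
lemma vandermonde (α x y : ℝ) (n : ℕ) :
    ∑ p ∈ Finset.HasAntidiagonal.antidiagonal n,
      (n.choose p.1 : ℝ) * (risingFact α x p.1 * risingFact α y p.2)
      = risingFact α (x + y) n := by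
  induction n with
  | zero => simp [risingFact]
  | succ n ih =>
    rw [Finset.sum_antidiagonal_choose_succ_mul
      (fun i j => risingFact α x i * risingFact α y j) n, risingFact_succ, ← ih, Finset.sum_mul,
      ← Finset.sum_add_distrib]
    refine Finset.sum_congr rfl fun p hp => ?_
    have hp' : p.1 + p.2 = n := Finset.HasAntidiagonal.mem_antidiagonal.mp hp
    have hc : (n : ℝ) = p.1 + p.2 := by rw [← hp']; push_cast; ring
    have hch : n.choose p.2 = n.choose p.1 := by
      rw [← hp']; exact (Nat.choose_symm_add).symm
    rw [hch, risingFact_succ, risingFact_succ, hc]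
    ring

lemma vandermonde_range (α x y : ℝ) (n : ℕ) :
    ∑ k ∈ Finset.range (n + 1),
      (n.choose k : ℝ) * (risingFact α x k * risingFact α y (n - k))
      = risingFact α (x + y) n := by
  rw [← vandermonde, Finset.Nat.sum_antidiagonal_eq_sum_range_succ
    (fun i j => (n.choose i : ℝ) * (risingFact α x i * risingFact α y j))]

lemma risingFact_pos {α x : ℝ} (hα : 0 ≤ α) (hx : 0 < x) (k : ℕ) : 0 < risingFact α x k :=
  Finset.prod_pos fun i _ => by positivity

lemma risingFact_nonneg {α x : ℝ} (hα : 0 ≤ α) (hx : 0 ≤ x) (k : ℕ) : 0 ≤ risingFact α x k :=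
  Finset.prod_nonneg fun i _ => by positivity

lemma stancuWeight_eq (n : ℕ) (α x : ℝ) (k : ℕ) :
    stancuWeight n α x k = (n.choose k : ℝ) * (risingFact α x k * risingFact α (1 - x) (n - k)) /
      risingFact α 1 n := by
  simp only [stancuWeight, risingFact, mul_assoc]

lemma stancuWeight_nonneg (n : ℕ) {α x : ℝ} (hα : 0 ≤ α) (hx : x ∈ Set.Icc (0 : ℝ) 1) (k : ℕ) :
    0 ≤ stancuWeight n α x k := by
  rw [stancuWeight_eq]
  have h1 := risingFact_nonneg hα hx.1 k
  have h2 := risingFact_nonneg hα (sub_nonneg.mpr hx.2) (n - k)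
  have h3 := risingFact_nonneg hα zero_le_one n
  positivity

lemma sum_stancuWeight (n : ℕ) {α : ℝ} (x : ℝ) (hα : 0 ≤ α) :
    ∑ k ∈ Finset.range (n + 1), stancuWeight n α x k = 1 := by
  simp only [stancuWeight_eq]
  rw [← Finset.sum_div, vandermonde_range, add_sub_cancel]
  exact div_self (risingFact_pos hα one_pos n).ne'

lemma mean_stancuWeight (n : ℕ) (hn : 1 ≤ n) {α : ℝ} (x : ℝ) (hα : 0 ≤ α) :
    ∑ k ∈ Finset.range (n + 1), stancuWeight n α x k * ((k : ℝ) / n) = x := by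
  obtain ⟨m, rfl⟩ : ∃ m, n = m + 1 := ⟨n - 1, by omega⟩
  have hpos := risingFact_pos hα one_pos (m + 1)
  have hm : ((m + 1 : ℕ) : ℝ) ≠ 0 := by positivity
  rw [Finset.sum_range_succ']
  -- `k C(m + 1, k) = (m + 1) C(m, k - 1)` reduces the mean to Chu–Vandermonde at `x + α`.
  have key : ∀ k ∈ Finset.range (m + 1),
      stancuWeight (m + 1) α x (k + 1) * (((k + 1 : ℕ) : ℝ) / ((m + 1 : ℕ) : ℝ))
      = x / risingFact α 1 (m + 1) *
        ((m.choose k : ℝ) * (risingFact α (x + α) k * risingFact α (1 - x) (m - k))) := by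
    intro k _
    have hc : ((m + 1 : ℕ) : ℝ) * (m.choose k : ℝ)
        = ((m + 1).choose (k + 1) : ℝ) * ((k + 1 : ℕ) : ℝ) := by
      exact_mod_cast Nat.add_one_mul_choose_eq m k
    rw [stancuWeight_eq, risingFact_succ' α x, Nat.add_sub_add_right]
    rw [div_mul_div_comm, div_mul_eq_mul_div, div_eq_div_iff (by positivity) hpos.ne']
    linear_combination (-(x * risingFact α (x + α) k * risingFact α (1 - x) (m - k) *
      risingFact α 1 (m + 1))) * hc
  rw [Finset.sum_congr rfl key, ← Finset.mul_sum, vandermonde_range]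
  have e : x + α + (1 - x) = 1 + α := by ring
  have e2 : risingFact α 1 (m + 1) = risingFact α (1 + α) m := by
    rw [risingFact_succ', one_mul]
  rw [e, ← e2]
  simp [div_mul_cancel₀ _ hpos.ne']

lemma omega2I_nonneg (f : ℝ → ℝ) (δ : ℝ) : 0 ≤ omega2I f δ := by
  apply Real.sSup_nonneg
  rintro y ⟨x, _, h, _, _, _, rfl⟩
  exact abs_nonneg _

/-- Continuity on `[0, 1]` makes the set defining `ω₂` bounded, so that each second difference is
at most `ω₂`. -/
lemma secondDiff_le_omega2I {f : ℝ → ℝ} (hf : ContinuousOn f (Set.Icc 0 1)) {δ x h : ℝ}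
    (hx : 0 ≤ x) (h0 : 0 < h) (hδ : h ≤ δ) (h1 : x + 2 * h ≤ 1) :
    |f (x + 2 * h) - 2 * f (x + h) + f x| ≤ omega2I f δ := by
  refine le_csSup ?_ ⟨x, hx, h, h0, hδ, h1, rfl⟩
  obtain ⟨M, hM⟩ := isCompact_Icc.exists_bound_of_continuousOn hf
  refine ⟨4 * M, ?_⟩
  rintro y ⟨x, hx, h, h0, -, h1, rfl⟩
  have b1 := abs_le.mp (hM (x + 2 * h) ⟨by linarith, by linarith⟩)
  have b2 := abs_le.mp (hM (x + h) ⟨by linarith, by linarith⟩)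
  have b3 := abs_le.mp (hM x ⟨by linarith, by linarith⟩)
  rw [abs_le]
  constructor <;> linarith [b1.1, b1.2, b2.1, b2.2, b3.1, b3.2]

/-- A continuous function on `[a, a + 2h]` vanishing at the endpoints is bounded by its second
differences. -/
lemma abs_le_of_secondDiff {g : ℝ → ℝ} {a h ω : ℝ} (hh : 0 < h) (hω : 0 ≤ ω)
    (hg : ContinuousOn g (Set.Icc a (a + 2 * h))) (ga : g a = 0) (gb : g (a + 2 * h) = 0)
    (hd : ∀ y s, a ≤ y → 0 < s → s ≤ h → y + 2 * s ≤ a + 2 * h →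
      |g (y + 2 * s) - 2 * g (y + s) + g y| ≤ ω) :
    ∀ t ∈ Set.Icc a (a + 2 * h), |g t| ≤ ω := by
  obtain ⟨m, hm, hmax⟩ := isCompact_Icc.exists_isMaxOn
    (Set.nonempty_Icc.mpr (by linarith : a ≤ a + 2 * h)) hg.abs
  have hmax' : ∀ t ∈ Set.Icc a (a + 2 * h), |g t| ≤ |g m| := fun t ht => hmax ht
  intro t ht
  refine (hmax' t ht).trans ?_
  have hfin : ∀ u v : ℝ, |u| ≤ |g m| → v = 0 → |u - 2 * g m + v| ≤ ω → |g m| ≤ ω := by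
    intro u v hu hv hs
    have h2 : |2 * g m| ≤ |u - 2 * g m + v| + |u| := by
      have := abs_sub u (u - 2 * g m + v)
      rw [hv] at this ⊢
      have e : u - (u - 2 * g m + 0) = 2 * g m := by ring
      rw [e] at this
      linarith
    rw [abs_mul, abs_two] at h2
    linarith
  rcases le_total m (a + h) with hc | hc
  · rcases hm.1.eq_or_lt with he | hlt
    · rw [← he, ga]; simpa using hω
    · have h1 := hd a (m - a) le_rfl (by linarith) (by linarith) (by linarith)
      rw [show a + (m - a) = m by ring] at h1
      exact hfin _ _ (hmax' _ ⟨by linarith, by linarith⟩) ga h1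
  · rcases hm.2.eq_or_lt with he | hlt
    · rw [he, gb]; simpa using hω
    · set s := a + 2 * h - m with hs
      have h1 := hd (m - s) s (by linarith) (by linarith) (by linarith) (by linarith)
      rw [show m - s + s = m by ring, show m - s + 2 * s = a + 2 * h by rw [hs]; ring] at h1
      refine hfin (g (m - s)) _ (hmax' _ ⟨by linarith, by linarith⟩) gb ?_
      convert h1 using 2
      ring

/-- Quadratic growth to the right of `[a, a + 2h]`: first differences of step `h` grow by at most
`ω` per step, hence values grow at most quadratically. -/
lemma growth_right {g : ℝ → ℝ} {a B h ω : ℝ} (hh : 0 < h) (hω : 0 ≤ ω)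
    (hI : ∀ t ∈ Set.Icc a (a + 2 * h), |g t| ≤ ω)
    (hd : ∀ y, a ≤ y → y + 2 * h ≤ B → |g (y + 2 * h) - 2 * g (y + h) + g y| ≤ ω)
    {x t : ℝ} (hx : x ∈ Set.Icc a (a + 2 * h)) (hat : a ≤ t) (htB : t ≤ B) :
    |g t| ≤ ω * (7 + 6 * ((t - x) / h) ^ 2) := by
  rcases le_total t (a + 2 * h) with hc | hc
  · have := hI t ⟨hat, hc⟩
    nlinarith [sq_nonneg ((t - x) / h)]
  have step : ∀ j : ℕ, ∀ s, a + h ≤ s → s ≤ a + 2 * h → s + j * h ≤ B →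
      |g (s + j * h) - g (s + j * h - h)| ≤ (2 + j) * ω ∧
      |g (s + j * h)| ≤ (1 + 3 * (j : ℝ) ^ 2) * ω := by
    intro j
    induction j with
    | zero =>
      intro s h1 h2 _
      have b1 := hI s ⟨by linarith, h2⟩
      have b2 := hI (s - h) ⟨by linarith, by linarith⟩
      have b3 := abs_sub (g s) (g (s - h))
      constructor
      · simpa using (by linarith : |g s - g (s - h)| ≤ 2 * ω)
      · simpa using b1
    | succ j ih =>
      intro s h1 h2 h3
      push_cast at h3 ⊢
      obtain ⟨i1, i2⟩ := ih s h1 h2 (by linarith)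
      have hj : 0 ≤ (j : ℝ) * h := by positivity
      have d := hd (s + j * h - h) (by linarith) (by linarith)
      rw [show s + j * h - h + 2 * h = s + (j + 1) * h by ring,
        show s + j * h - h + h = s + j * h by ring] at d
      rw [show s + ((j : ℝ) + 1) * h - h = s + j * h by ring]
      rw [abs_le] at i1 i2 d
      have hjω : 0 ≤ (j : ℝ) * ω := by positivity
      constructor <;> rw [abs_le] <;> constructor <;> nlinarith
  -- Write `t = s + j h` with `s ∈ [a + h, a + 2h)`; then `j ≤ 1 + (t - x) / h`.
  set q := (t - (a + h)) / h with hq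
  have hq0 : 0 ≤ q := div_nonneg (by linarith) hh.le
  have hqh : q * h = t - (a + h) := div_mul_cancel₀ _ hh.ne'
  set j := ⌊q⌋₊ with hj
  have j1 : (j : ℝ) ≤ q := Nat.floor_le hq0
  have j2 : q < j + 1 := Nat.lt_floor_add_one q
  have m1 : (j : ℝ) * h ≤ q * h := by gcongr
  have m2 : q * h ≤ (j + 1) * h := by gcongr
  have hfin := (step j (t - j * h) (by linarith) (by linarith) (by linarith)).2
  rw [sub_add_cancel] at hfin
  set u := (t - x) / h with hu
  have huh : u * h = t - x := div_mul_cancel₀ _ hh.ne'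
  have hju : (j : ℝ) ≤ 1 + u := by
    have : q ≤ 1 + u := by
      refine le_of_mul_le_mul_right ?_ hh
      rw [hqh, add_mul, huh]
      linarith [hx.2]
    linarith
  have hj2 : (j : ℝ) ^ 2 ≤ 2 + 2 * u ^ 2 := by
    have : (0 : ℝ) ≤ j := by positivity
    nlinarith [sq_nonneg (1 - u)]
  refine hfin.trans ?_
  rw [mul_comm ω]
  exact mul_le_mul_of_nonneg_right (by linarith) hω

/-- there is `C > 0` such that for every `n ≥ 1`, `α ≥ 0`, continuous
`f : [0,1] → ℝ` and `x ∈ [0,1]`,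
`|B_n^{(α)}(f;x) - f(x)| ≤ C·ω₂(f, √(φ_n^{(α)}(x))/2)`, where
`φ_n^{(α)}(x) = Σ_{k=0}^n (Stancu weight)·(k/n - x)²`. -/
theorem stancu_direct_estimate :
    ∃ C > (0 : ℝ), ∀ n : ℕ, 1 ≤ n → ∀ α : ℝ, 0 ≤ α →
      ∀ f : ℝ → ℝ, ContinuousOn f (Set.Icc 0 1) → ∀ x ∈ Set.Icc (0 : ℝ) 1,
        |stancuOp n α f x - f x| ≤
          C * omega2I f (Real.sqrt
            (∑ k ∈ Finset.range (n + 1), stancuWeight n α x k * ((k : ℝ) / n - x) ^ 2) / 2) := by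
  refine ⟨32, by norm_num, ?_⟩
  intro n hn α hα f hf x hx
  have hw := stancuWeight_nonneg n hα hx
  have hsum := sum_stancuWeight n x hα
  have hmean := mean_stancuWeight n hn x hα
  have hnode : ∀ k ∈ Finset.range (n + 1), (k : ℝ) / n ∈ Set.Icc (0 : ℝ) 1 := by
    intro k hk
    have hkn : (k : ℝ) ≤ n := by
      exact_mod_cast Nat.lt_succ_iff.mp (Finset.mem_range.mp hk)
    exact ⟨by positivity, div_le_one_of_le₀ hkn (by positivity)⟩
  unfold stancuOp
  generalize stancuWeight n α x = w at *
  set φ := ∑ k ∈ Finset.range (n + 1), w k * ((k : ℝ) / n - x) ^ 2 with hφ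
  have hterm : ∀ k ∈ Finset.range (n + 1), 0 ≤ w k * ((k : ℝ) / n - x) ^ 2 :=
    fun k _ => mul_nonneg (hw k) (sq_nonneg _)
  have hφ0 : 0 ≤ φ := Finset.sum_nonneg hterm
  have hφ1 : φ ≤ 1 := by
    rw [← hsum]
    refine Finset.sum_le_sum fun k hk => mul_le_of_le_one_right (hw k) ?_
    have := hnode k hk
    rw [sq_le_one_iff_abs_le_one, abs_le]
    constructor <;> linarith [this.1, this.2, hx.1, hx.2]
  set h := Real.sqrt φ / 2 with hh
  have hω := omega2I_nonneg f h
  rcases hφ0.eq_or_lt with hz | hpos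
  · have hall := (Finset.sum_eq_zero_iff_of_nonneg hterm).mp (hφ.symm.trans hz.symm)
    have : ∑ k ∈ Finset.range (n + 1), w k * f ((k : ℝ) / n) = f x := by
      calc _ = ∑ k ∈ Finset.range (n + 1), w k * f x := by
            refine Finset.sum_congr rfl fun k hk => ?_
            rcases mul_eq_zero.mp (hall k hk) with h0 | h0
            · rw [h0, zero_mul, zero_mul]
            · rw [sub_eq_zero.mp (pow_eq_zero_iff two_ne_zero |>.mp h0)]
        _ = f x := by rw [← Finset.sum_mul, hsum, one_mul]
    rw [this, sub_self, abs_zero]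
    positivity
  have hsq : Real.sqrt φ ^ 2 = φ := Real.sq_sqrt hφ0
  have hh0 : 0 < h := by have := Real.sqrt_pos.mpr hpos; positivity
  have hh1 : 2 * h ≤ 1 := by
    have : Real.sqrt φ ≤ 1 := Real.sqrt_le_one.mpr hφ1
    linarith
  have hh2 : φ = 4 * h ^ 2 := by rw [hh]; linear_combination -hsq
  obtain ⟨a, ha0, ha1, hxa⟩ : ∃ a, 0 ≤ a ∧ a + 2 * h ≤ 1 ∧ x ∈ Set.Icc a (a + 2 * h) := by
    rcases le_total x (1 - 2 * h) with hc | hc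
    · exact ⟨x, hx.1, by linarith, le_rfl, by linarith⟩
    · exact ⟨1 - 2 * h, by linarith, by linarith, hc, by linarith [hx.2]⟩
  set c := (f (a + 2 * h) - f a) / (2 * h) with hc
  have hch : c * (2 * h) = f (a + 2 * h) - f a := div_mul_cancel₀ _ (by positivity)
  obtain ⟨g, hg⟩ : ∃ g : ℝ → ℝ, ∀ t, g t = f t - (f a + c * (t - a)) := ⟨_, fun _ => rfl⟩
  have hdiff : ∀ y s, 0 ≤ y → 0 < s → s ≤ h → y + 2 * s ≤ 1 →
      |g (y + 2 * s) - 2 * g (y + s) + g y| ≤ omega2I f h := by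
    intro y s h1 h2 h3 h4
    convert secondDiff_le_omega2I hf h1 h2 h3 h4 using 2
    simp only [hg]
    ring
  have hgc : ContinuousOn g (Set.Icc a (a + 2 * h)) := by
    have : g = fun t => f t - (f a + c * (t - a)) := funext hg
    rw [this]
    refine (hf.mono (Set.Icc_subset_Icc ha0 ha1)).sub ?_
    fun_prop
  have hI := abs_le_of_secondDiff hh0 hω hgc (by rw [hg]; ring)
    (by rw [hg]; linear_combination -hch)
    (fun y s h1 h2 h3 h4 => hdiff y s (by linarith) h2 h3 (by linarith))
  have hgrow : ∀ t ∈ Set.Icc (0 : ℝ) 1,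
      |g t| ≤ omega2I f h * (7 + 6 * ((t - x) / h) ^ 2) := by
    intro t ht
    rcases le_total a t with hat | hat
    · exact growth_right (B := 1) hh0 hω hI
        (fun y h1 h2 => hdiff y h (by linarith) hh0 le_rfl h2) hxa hat ht.2
    · -- To the left of `a`, reflect.
      have := growth_right (g := fun t => g (-t)) (a := -(a + 2 * h)) (B := 0) (x := -x) (t := -t)
        hh0 hω (fun s hs => hI (-s) ⟨by linarith [hs.2], by linarith [hs.1]⟩)
        (fun y h1 h2 => by
          have := hdiff (-(y + 2 * h)) h (by linarith) hh0 le_rfl (by linarith)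
          rw [show -(y + 2 * h) + 2 * h = -y by ring,
            show -(y + 2 * h) + h = -(y + h) by ring] at this
          convert this using 2
          ring)
        ⟨by linarith [hxa.2], by linarith [hxa.1]⟩ (by linarith) (by linarith [ht.1])
      simp only [neg_neg] at this
      convert this using 4
      ring
  have hsplit : ∑ k ∈ Finset.range (n + 1), w k * f ((k : ℝ) / n) - f x
      = ∑ k ∈ Finset.range (n + 1), w k * g ((k : ℝ) / n) - g x := by
    have : ∑ k ∈ Finset.range (n + 1), w k * g ((k : ℝ) / n)
        = ∑ k ∈ Finset.range (n + 1), w k * f ((k : ℝ) / n)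
          - (f a - c * a) * ∑ k ∈ Finset.range (n + 1), w k
          - c * ∑ k ∈ Finset.range (n + 1), w k * ((k : ℝ) / n) := by
      rw [Finset.mul_sum, Finset.mul_sum, ← Finset.sum_sub_distrib, ← Finset.sum_sub_distrib]
      refine Finset.sum_congr rfl fun k _ => ?_
      rw [hg]
      ring
    rw [this, hsum, hmean, hg x]
    ring
  have hE : |∑ k ∈ Finset.range (n + 1), w k * g ((k : ℝ) / n)| ≤ 31 * omega2I f h := by
    calc _ ≤ ∑ k ∈ Finset.range (n + 1), |w k * g ((k : ℝ) / n)| :=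
          Finset.abs_sum_le_sum_abs _ _
      _ ≤ ∑ k ∈ Finset.range (n + 1),
            w k * (omega2I f h * (7 + 6 * (((k : ℝ) / n - x) / h) ^ 2)) := by
          refine Finset.sum_le_sum fun k hk => ?_
          rw [abs_mul, abs_of_nonneg (hw k)]
          exact mul_le_mul_of_nonneg_left (hgrow _ (hnode k hk)) (hw k)
      _ = omega2I f h * 7 * ∑ k ∈ Finset.range (n + 1), w k + omega2I f h * (6 / h ^ 2) * φ := by
          rw [hφ, Finset.mul_sum, Finset.mul_sum, ← Finset.sum_add_distrib]
          refine Finset.sum_congr rfl fun k _ => ?_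
          rw [div_pow]
          ring
      _ = 31 * omega2I f h := by
          rw [hsum, hh2]
          field_simp
          ring
  rw [hsplit]
  have := abs_sub (∑ k ∈ Finset.range (n + 1), w k * g ((k : ℝ) / n)) (g x)
  linarith [hI x hxa]
end

section
/- Fix an integer n ≥ 1, a nonnegative integer p and a real α with 0 ≤ α < 1/2. Let M > 0, β ∈ (0,1], and let f : [0,∞) → ℝ be a bounded continuous function satisfying |f(t) - f(s)| ≤ M·|t - s|^β/(t + s)^{β/2} for all t, s > 0. Then for every x > 0, |L_n^{(α)}(f;x) - f(x)| ≤ M·( φ_n^{(α)}(x)/x )^{β/2}, where φ_n^{(α)}(x) = Σ_{k=0}^{∞} w_{n,k}^{(α)}(x)·(k/n - x)². -/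
/-- The weight `w0 n p α x k` with `n + p = m + 1`; this form avoids subtraction on `ℕ`. -/
noncomputable def urnWeight (m : ℕ) (α x : ℝ) (k : ℕ) : ℝ :=
  (Nat.choose (m + k) k : ℝ) * (∏ i ∈ Finset.range k, (x + (i : ℝ) * α)) *
    (∏ i ∈ Finset.range (m + 1), (1 + (i : ℝ) * α)) /
    (∏ i ∈ Finset.range (m + 1 + k), (1 + x + (i : ℝ) * α))

lemma w0_eq_urnWeight (n p m : ℕ) (h : n + p = m + 1) (α x : ℝ) (k : ℕ) :
    w0 n p α x k = urnWeight m α x k := by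
  unfold w0 urnWeight
  rw [h, show m + 1 + k - 1 = m + k by omega]

lemma urnWeight_pos (m : ℕ) {α x : ℝ} (hα : 0 ≤ α) (hx : 0 < x) (k : ℕ) :
    0 < urnWeight m α x k := by
  unfold urnWeight
  have h1 : (0 : ℝ) < (Nat.choose (m + k) k : ℝ) := by
    exact_mod_cast Nat.choose_pos (by omega)
  have h2 : 0 < ∏ i ∈ Finset.range k, (x + (i : ℝ) * α) :=
    Finset.prod_pos fun i _ => by positivity
  have h3 : 0 < ∏ i ∈ Finset.range (m + 1), (1 + (i : ℝ) * α) :=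
    Finset.prod_pos fun i _ => by positivity
  have h4 : 0 < ∏ i ∈ Finset.range (m + 1 + k), (1 + x + (i : ℝ) * α) :=
    Finset.prod_pos fun i _ => by positivity
  positivity

lemma urnWeight_succ_right (m : ℕ) {α x : ℝ} (hα : 0 ≤ α) (hx : 0 < x) (k : ℕ) :
    ((k : ℝ) + 1) * (1 + x + (m + 1 + k) * α) * urnWeight m α x (k + 1) =
      (m + 1 + k) * (x + k * α) * urnWeight m α x k := by
  unfold urnWeight
  have hc : ((k : ℝ) + 1) * (Nat.choose (m + (k + 1)) (k + 1) : ℝ) =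
      (m + 1 + k) * (Nat.choose (m + k) k : ℝ) := by
    have := Nat.add_one_mul_choose_eq (m + k) k
    have h2 : ((m + k + 1 : ℕ) : ℝ) * ((m + k).choose k : ℝ) =
        ((m + k + 1).choose (k + 1) : ℝ) * ((k + 1 : ℕ) : ℝ) := by exact_mod_cast this
    push_cast at h2
    rw [← add_assoc]
    linarith
  have h4 : ∏ i ∈ Finset.range (m + 1 + k), (1 + x + (i : ℝ) * α) ≠ 0 :=
    (Finset.prod_pos fun i _ => by positivity).ne'
  have h5 : (1 + x + ((m : ℝ) + 1 + k) * α) ≠ 0 := by positivity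
  rw [← add_assoc (m + 1) k 1, Finset.prod_range_succ _ (m + 1 + k), Finset.prod_range_succ _ k]
  push_cast
  rw [mul_div_assoc', mul_div_assoc', div_eq_div_iff (mul_ne_zero h4 h5) h4]
  linear_combination (1 + x + ((m : ℝ) + 1 + k) * α) * (x + k * α) *
    (∏ i ∈ Finset.range k, (x + (i : ℝ) * α)) * (∏ i ∈ Finset.range (m + 1), (1 + (i : ℝ) * α)) *
    (∏ i ∈ Finset.range (m + 1 + k), (1 + x + (i : ℝ) * α)) * hc

lemma urnWeight_succ_left (m : ℕ) {α x : ℝ} (hα : 0 ≤ α) (hx : 0 < x) (k : ℕ) :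
    ((m : ℝ) + 1) * (1 + x + (m + 1 + k) * α) * urnWeight (m + 1) α x k =
      (m + 1 + k) * (1 + (m + 1) * α) * urnWeight m α x k := by
  unfold urnWeight
  have hc : ((m : ℝ) + 1) * (Nat.choose (m + 1 + k) k : ℝ) =
      (m + 1 + k) * (Nat.choose (m + k) k : ℝ) := by
    have := Nat.add_one_mul_choose_eq (m + k) m
    rw [Nat.choose_symm_add, show m + k + 1 = (m + 1) + k by ring, Nat.choose_symm_add] at this
    have h2 : ((m + 1 + k : ℕ) : ℝ) * ((m + k).choose k : ℝ) =
        ((m + 1 + k).choose k : ℝ) * ((m + 1 : ℕ) : ℝ) := by exact_mod_cast this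
    push_cast at h2
    linarith
  have h4 : ∏ i ∈ Finset.range (m + 1 + k), (1 + x + (i : ℝ) * α) ≠ 0 :=
    (Finset.prod_pos fun i _ => by positivity).ne'
  have h5 : (1 + x + ((m : ℝ) + 1 + k) * α) ≠ 0 := by positivity
  rw [show m + 1 + 1 + k = m + 1 + k + 1 by ring, Finset.prod_range_succ _ (m + 1 + k),
    Finset.prod_range_succ _ (m + 1)]
  push_cast
  rw [mul_div_assoc', mul_div_assoc', div_eq_div_iff (mul_ne_zero h4 h5) h4]
  linear_combination (1 + x + ((m : ℝ) + 1 + k) * α) * (1 + (m + 1) * α) *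
    (∏ i ∈ Finset.range k, (x + (i : ℝ) * α)) * (∏ i ∈ Finset.range (m + 1), (1 + (i : ℝ) * α)) *
    (∏ i ∈ Finset.range (m + 1 + k), (1 + x + (i : ℝ) * α)) * hc

/-- Telescoping criterion: a nonnegative series eventually dominated by the decrements of a
nonnegative sequence converges. -/
lemma summable_of_le_sub_succ {g u : ℕ → ℝ} (hg : ∀ k, 0 ≤ g k) (hu : ∀ k, 0 ≤ u k) (K : ℕ)
    (h : ∀ k ≥ K, g k ≤ u k - u (k + 1)) : Summable g := by
  rw [← summable_nat_add_iff K]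
  refine summable_of_sum_range_le (c := u K) (fun k => hg _) fun N => ?_
  have : ∑ i ∈ Finset.range N, g (i + K) ≤ u K - u (N + K) := by
    induction N with
    | zero => simp
    | succ N ih =>
      rw [Finset.sum_range_succ]
      have := h (N + K) (by omega)
      rw [show N + K + 1 = N + 1 + K by ring] at this
      linarith
  linarith [hu (N + K)]

/-- The second moment of the weights is finite; this is where `α < 1/2` enters, through the leading
coefficient `1 - 2α` of the decrement of `k² (1 + x + (m + k) α) w k`. -/
lemma summable_sq_mul_urnWeight (m : ℕ) {α x : ℝ} (hα : 0 ≤ α) (hα2 : α < 1 / 2) (hx : 0 < x) :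
    Summable fun k : ℕ => (k : ℝ) ^ 2 * urnWeight m α x k := by
  set δ : ℝ := (1 - 2 * α) / 2 with hδ
  have hδ0 : 0 < δ := by rw [hδ]; linarith
  set D : ℝ := (m + 2) * x + (m + 1) * α + (m + 1) * x with hD
  have key : Summable fun k : ℕ => δ * ((k : ℝ) ^ 2 * urnWeight m α x k) := by
    refine summable_of_le_sub_succ
      (u := fun k : ℕ => (k : ℝ) ^ 2 * (1 + x + (m + k) * α) * urnWeight m α x k)
      (fun k => ?_) (fun k => ?_) (⌈D / δ⌉₊ + 1) fun k hk => ?_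
    · have := urnWeight_pos m hα hx k
      positivity
    · have := urnWeight_pos m hα hx k
      positivity
    · have hw := urnWeight_pos m hα hx k
      have hr := urnWeight_succ_right m hα hx k
      have hkD : D ≤ δ * k := by
        have h1 : D / δ ≤ k := (Nat.le_ceil _).trans (by exact_mod_cast (by omega))
        rw [div_le_iff₀ hδ0] at h1
        linarith
      have hk1 : (1 : ℝ) ≤ k := by exact_mod_cast (by omega : 1 ≤ k)
      have hpoly : 0 ≤ (k : ℝ) ^ 2 * (1 + x + (m + k) * α)
          - (k + 1) * ((m + 1 + k) * (x + k * α)) - δ * k ^ 2 := by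
        have e : (k : ℝ) ^ 2 * (1 + x + (m + k) * α)
          - (k + 1) * ((m + 1 + k) * (x + k * α)) - δ * k ^ 2
          = k * (δ * k - D) + (m + 1) * x * (k - 1) := by
          rw [hδ, hD]; ring
        rw [e]
        have h1 : 0 ≤ δ * k - D := by linarith
        have h2 : 0 ≤ (k : ℝ) - 1 := by linarith
        positivity
      have hmul := mul_nonneg hpoly hw.le
      push_cast
      linear_combination hmul + ((k : ℝ) + 1) * hr
  exact (summable_mul_left_iff hδ0.ne').1 key

lemma summable_urnWeight (m : ℕ) {α x : ℝ} (hα : 0 ≤ α) (hα2 : α < 1 / 2) (hx : 0 < x) :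
    Summable fun k : ℕ => urnWeight m α x k := by
  rw [← summable_nat_add_iff 1]
  refine Summable.of_nonneg_of_le (fun k => (urnWeight_pos m hα hx _).le) (fun k => ?_)
    ((summable_nat_add_iff 1).2 (summable_sq_mul_urnWeight m hα hα2 hx))
  have hw := urnWeight_pos m hα hx (k + 1)
  refine le_mul_of_one_le_left hw.le (one_le_pow₀ ?_)
  push_cast
  linarith [(Nat.cast_nonneg k : (0 : ℝ) ≤ k)]

lemma summable_mul_urnWeight (m : ℕ) {α x : ℝ} (hα : 0 ≤ α) (hα2 : α < 1 / 2) (hx : 0 < x) :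
    Summable fun k : ℕ => (k : ℝ) * urnWeight m α x k := by
  refine Summable.of_nonneg_of_le
    (fun k => mul_nonneg (Nat.cast_nonneg k) (urnWeight_pos m hα hx _).le) (fun k => ?_)
    (summable_sq_mul_urnWeight m hα hα2 hx)
  have hk : (k : ℝ) ≤ (k : ℝ) ^ 2 := by exact_mod_cast Nat.le_self_pow two_ne_zero k
  exact mul_le_mul_of_nonneg_right hk (urnWeight_pos m hα hx k).le

/-- For `m = 0` the weight `w k` is the decrement of `(1 + x + k α) w k`. -/
lemma sum_range_urnWeight_zero {α x : ℝ} (hα : 0 ≤ α) (hx : 0 < x) (K : ℕ) :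
    ∑ k ∈ Finset.range K, urnWeight 0 α x k = 1 - (1 + x + K * α) * urnWeight 0 α x K := by
  induction K with
  | zero =>
    have : 1 + x ≠ 0 := by positivity
    simp [urnWeight, this]
  | succ K ih =>
    rw [Finset.sum_range_succ, ih]
    have hr := urnWeight_succ_right 0 hα hx K
    have hK : ((K : ℝ) + 1) ≠ 0 := by positivity
    have hr' : (1 + x + (1 + K) * α) * urnWeight 0 α x (K + 1) =
        (x + K * α) * urnWeight 0 α x K := by
      apply mul_left_cancel₀ hK
      push_cast at hr
      linear_combination hr
    push_cast
    linear_combination hr'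

/-- In the urn picture, the difference is the probability that the `(m + 1)`-st success has come
before the `K`-th failure, but the `(m + 2)`-nd has not. -/
lemma sum_range_urnWeight_succ (m : ℕ) {α x : ℝ} (hα : 0 ≤ α) (hx : 0 < x) (K : ℕ) :
    ∑ k ∈ Finset.range K, urnWeight (m + 1) α x k =
      ∑ k ∈ Finset.range K, urnWeight m α x k - K * urnWeight m α x K / (m + 1) := by
  induction K with
  | zero => simp
  | succ K ih =>
    rw [Finset.sum_range_succ, Finset.sum_range_succ, ih]
    have hr := urnWeight_succ_right m hα hx K
    have hl := urnWeight_succ_left m hα hx K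
    have hm : ((m : ℝ) + 1) ≠ 0 := by positivity
    have h5 : (1 + x + ((m : ℝ) + 1 + K) * α) ≠ 0 := by positivity
    have : ((m : ℝ) + 1) * urnWeight (m + 1) α x K + (K + 1) * urnWeight m α x (K + 1) =
        (m + 1 + K) * urnWeight m α x K := by
      apply mul_left_cancel₀ h5
      linear_combination hr + hl
    push_cast
    field_simp
    linear_combination this

lemma hasSum_urnWeight (m : ℕ) {α x : ℝ} (hα : 0 ≤ α) (hα2 : α < 1 / 2) (hx : 0 < x) :
    HasSum (fun k : ℕ => urnWeight m α x k) 1 := by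
  rw [(summable_urnWeight m hα hα2 hx).hasSum_iff_tendsto_nat]
  induction m with
  | zero =>
    have h0 := (summable_urnWeight 0 hα hα2 hx).tendsto_atTop_zero
    have h1 := (summable_mul_urnWeight 0 hα hα2 hx).tendsto_atTop_zero
    have h := ((h0.const_mul (1 + x)).add (h1.const_mul α)).const_sub 1
    simp only [mul_zero, add_zero, sub_zero] at h
    refine h.congr fun K => ?_
    rw [sum_range_urnWeight_zero hα hx]
    ring
  | succ m ih =>
    have h1 := (summable_mul_urnWeight m hα hα2 hx).tendsto_atTop_zero
    have h := ih.sub (h1.div_const ((m : ℝ) + 1))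
    simp only [zero_div, sub_zero] at h
    exact h.congr fun K => (sum_range_urnWeight_succ m hα hx K).symm

/-- The Lipschitz condition in the form used below, including `t = 0`. -/
lemma abs_sub_le_of_lipschitz_type {M β : ℝ} (hM : 0 < M) (hβ0 : 0 < β)
    {f : ℝ → ℝ} (hfc : ContinuousOn f (Set.Ici 0))
    (hlip : ∀ t > (0 : ℝ), ∀ s > (0 : ℝ),
      |f t - f s| ≤ M * |t - s| ^ β / (t + s) ^ (β / 2))
    {x : ℝ} (hx : 0 < x) {t : ℝ} (ht : 0 ≤ t) :
    |f t - f x| ≤ M * ((t - x) ^ 2 / x) ^ (β / 2) := by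
  have hpos : ∀ t ∈ Set.Ioi (0 : ℝ), |f t - f x| ≤ M * ((t - x) ^ 2 / x) ^ (β / 2) := by
    intro t ht
    have ht : 0 < t := ht
    refine (hlip t ht x hx).trans ?_
    have e : |t - x| ^ β = ((t - x) ^ 2) ^ (β / 2) := by
      rw [← sq_abs, ← Real.rpow_natCast, ← Real.rpow_mul (abs_nonneg _)]
      congr 1
      push_cast
      ring
    rw [e, Real.div_rpow (sq_nonneg _) hx.le, mul_div_assoc]
    gcongr
    linarith
  -- Both sides are continuous on `[0, ∞)`, the closure of `(0, ∞)`.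
  have hcl : t ∈ closure (Set.Ioi (0 : ℝ)) := by rwa [closure_Ioi]
  refine le_on_closure hpos ?_ ?_ hcl
  · rw [closure_Ioi]
    exact (hfc.sub continuousOn_const).abs
  · refine Continuous.continuousOn (continuous_const.mul ?_)
    exact Continuous.rpow_const (by fun_prop) fun _ => Or.inr (by positivity)

/-- The concave power `r ∈ [0, 1]` lies below its tangent line at `c > 0`. -/
lemma rpow_le_tangent {r c y : ℝ} (hr0 : 0 ≤ r) (hr1 : r ≤ 1) (hc : 0 < c) (hy : 0 ≤ y) :
    y ^ r ≤ c ^ r * (1 - r) + c ^ r * r / c * y := by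
  have h := rpow_one_add_le_one_add_mul_self (s := y / c - 1)
    (by have : 0 ≤ y / c := by positivity
        linarith) hr0 hr1
  rw [add_sub_cancel, Real.div_rpow hy hc.le, div_le_iff₀ (by positivity)] at h
  refine h.trans (le_of_eq ?_)
  field_simp
  ring

/-- Lipschitz-type estimate. If `f : [0,∞) → ℝ` is bounded,
continuous and satisfies `|f(t) - f(s)| ≤ M|t-s|^β/(t+s)^{β/2}` for `t,s > 0`,
then for every `x > 0`,
`|L_n^{(α)}(f;x) - f(x)| ≤ M·(φ_n^{(α)}(x)/x)^{β/2}`. -/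
theorem lipschitz_type_estimate (n p : ℕ) (hn : 1 ≤ n) (α : ℝ) (hα : 0 ≤ α)
    (hα2 : α < 1/2) (M β : ℝ) (hM : 0 < M) (hβ0 : 0 < β) (hβ1 : β ≤ 1)
    (f : ℝ → ℝ) (hfc : ContinuousOn f (Set.Ici 0))
    (hfb : ∃ B : ℝ, ∀ t ≥ (0 : ℝ), |f t| ≤ B)
    (hlip : ∀ t > (0 : ℝ), ∀ s > (0 : ℝ),
      |f t - f s| ≤ M * |t - s| ^ β / (t + s) ^ (β / 2))
    (x : ℝ) (hx : 0 < x) :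
    |(∑' k : ℕ, w0 n p α x k * f ((k : ℝ) / n)) - f x| ≤
      M * ((∑' k : ℕ, w0 n p α x k * ((k : ℝ) / n - x) ^ 2) / x) ^ (β / 2) := by
  obtain ⟨m, hm⟩ : ∃ m, n + p = m + 1 := ⟨n + p - 1, by omega⟩
  simp only [w0_eq_urnWeight n p m hm]
  have hn0 : (0 : ℝ) < n := by exact_mod_cast hn
  have hw : ∀ k, 0 < urnWeight m α x k := urnWeight_pos m hα hx
  have hs1 := hasSum_urnWeight m hα hα2 hx
  have hsφ : Summable fun k : ℕ => urnWeight m α x k * ((k : ℝ) / n - x) ^ 2 := by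
    have h := (((summable_sq_mul_urnWeight m hα hα2 hx).mul_left (1 / (n : ℝ) ^ 2)).sub
      ((summable_mul_urnWeight m hα hα2 hx).mul_left (2 * x / n))).add
      (hs1.summable.mul_left (x ^ 2))
    refine h.congr fun k => ?_
    field_simp
    ring
  set φ := ∑' k : ℕ, urnWeight m α x k * ((k : ℝ) / n - x) ^ 2 with hφ
  -- The term `k = 0` is `w 0 * x ^ 2 > 0`.
  have hφ0 : 0 < φ := hsφ.tsum_pos
    (fun k => mul_nonneg (hw k).le (sq_nonneg _)) 0
    (mul_pos (hw 0) (by simp only [Nat.cast_zero, zero_div, zero_sub, neg_sq]; positivity))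
  set c := φ / x with hc
  have hc0 : 0 < c := by positivity
  set r := β / 2 with hr
  have hbound : ∀ k : ℕ, ‖urnWeight m α x k * (f ((k : ℝ) / n) - f x)‖ ≤
      M * (c ^ r * (1 - r)) * urnWeight m α x k +
        M * (c ^ r * r / c / x) * (urnWeight m α x k * ((k : ℝ) / n - x) ^ 2) := by
    intro k
    have h1 := abs_sub_le_of_lipschitz_type hM hβ0 hfc hlip hx
      (t := (k : ℝ) / n) (by positivity)
    have h2 := rpow_le_tangent (r := r) (c := c) (y := ((k : ℝ) / n - x) ^ 2 / x)
      (by positivity) (by rw [hr]; linarith) hc0 (by positivity)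
    rw [Real.norm_eq_abs, abs_mul, abs_of_pos (hw k)]
    calc urnWeight m α x k * |f ((k : ℝ) / n) - f x|
        ≤ urnWeight m α x k *
          (M * (c ^ r * (1 - r) + c ^ r * r / c * (((k : ℝ) / n - x) ^ 2 / x))) :=
          mul_le_mul_of_nonneg_left (h1.trans (mul_le_mul_of_nonneg_left h2 hM.le)) (hw k).le
      _ = _ := by ring
  have hsum := (hs1.mul_left (M * (c ^ r * (1 - r)))).add
    (hsφ.hasSum.mul_left (M * (c ^ r * r / c / x)))
  have hsd : Summable fun k : ℕ => urnWeight m α x k * (f ((k : ℝ) / n) - f x) :=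
    Summable.of_norm_bounded hsum.summable hbound
  have hd : (∑' k : ℕ, urnWeight m α x k * f ((k : ℝ) / n)) - f x =
      ∑' k : ℕ, urnWeight m α x k * (f ((k : ℝ) / n) - f x) := by
    have h := hsd.hasSum.add (hs1.mul_right (f x))
    rw [one_mul] at h
    rw [sub_eq_iff_eq_add, ← h.tsum_eq]
    refine tsum_congr fun k => ?_
    ring
  rw [hd]
  refine (tsum_of_norm_bounded hsum hbound).trans (le_of_eq ?_)
  have hφc : φ = c * x := by rw [hc]; field_simp
  rw [← hφ, hφc]
  field_simp
  ring
end

section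
/- Fix an integer n ≥ 1, a nonnegative integer p and a real α with 0 ≤ α < 1/2. Let f : [0,∞) → ℝ be continuous with |f(t)| ≤ M_f·(1+t²) for all t ≥ 0, where M_f > 0. Then for every b > 0 and every x ∈ [0,b], |L_n^{(α)}(f;x) - f(x)| ≤ 4·M_f·(1+b²)·φ_n^{(α)}(x) + 2·ω_{b+1}(f, √(φ_n^{(α)}(x))), where φ_n^{(α)}(x) = Σ_{k=0}^{∞} w_{n,k}^{(α)}(x)·(k/n - x)². -/
/-- The usual modulus of continuity of `f` on `[0,b]`:
`ω_b(f,δ) = sup{ |f(t) - f(x)| : x, t ∈ [0,b], |t - x| ≤ δ }`. -/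
noncomputable def omegaOn (f : ℝ → ℝ) (b δ : ℝ) : ℝ :=
  sSup {y : ℝ | ∃ x ∈ Set.Icc (0 : ℝ) b, ∃ t ∈ Set.Icc (0 : ℝ) b,
    |t - x| ≤ δ ∧ y = |f t - f x|}

open Filter Topology Finset

/-! ### The weights -/

/-- The weight `w_{n,k}^{(α)}(x)` with `n + p = m + 1`; the shift by one removes the truncated
subtraction in the binomial coefficient. -/
noncomputable def W (m : ℕ) (α x : ℝ) (k : ℕ) : ℝ :=
  (Nat.choose (m + k) k : ℝ) * (∏ i ∈ range k, (x + (i : ℝ) * α)) *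
    (∏ i ∈ range (m + 1), (1 + (i : ℝ) * α)) /
    (∏ i ∈ range (m + 1 + k), (1 + x + (i : ℝ) * α))

lemma w0_eq_W (n p m : ℕ) (h : n + p = m + 1) (α x : ℝ) (k : ℕ) :
    w0 n p α x k = W m α x k := by
  unfold w0 W
  rw [h, show m + 1 + k - 1 = m + k by omega]

section Weights

variable {α x : ℝ}

lemma W_nonneg (hα : 0 ≤ α) (hx : 0 ≤ x) (m k : ℕ) : 0 ≤ W m α x k := by
  unfold W
  have h1 : 0 ≤ ∏ i ∈ range k, (x + (i : ℝ) * α) := prod_nonneg fun i _ => by positivity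
  have h2 : 0 ≤ ∏ i ∈ range (m + 1), (1 + (i : ℝ) * α) := prod_nonneg fun i _ => by positivity
  have h3 : 0 ≤ ∏ i ∈ range (m + 1 + k), (1 + x + (i : ℝ) * α) :=
    prod_nonneg fun i _ => by positivity
  positivity

lemma W_succ (hα : 0 ≤ α) (hx : 0 ≤ x) (m k : ℕ) :
    (k + 1 : ℝ) * (1 + x + (m + 1 + k : ℝ) * α) * W m α x (k + 1)
      = (m + 1 + k : ℝ) * (x + k * α) * W m α x k := by
  have hch : (m + 1 + k : ℝ) * (Nat.choose (m + k) k : ℝ)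
      = (Nat.choose (m + (k + 1)) (k + 1) : ℝ) * (k + 1) := by
    have := Nat.add_one_mul_choose_eq (m + k) k
    have h2 : ((m + k + 1 : ℕ) : ℝ) * (Nat.choose (m + k) k : ℝ)
      = (Nat.choose (m + k + 1) (k + 1) : ℝ) * ((k + 1 : ℕ) : ℝ) := by exact_mod_cast this
    push_cast at h2
    rw [← add_assoc m k 1, ← h2]; ring
  have h3 : 0 < ∏ i ∈ range (m + 1 + k), (1 + x + (i : ℝ) * α) :=
    prod_pos fun i _ => by positivity
  have h4 : 0 < 1 + x + (m + 1 + k : ℝ) * α := by positivity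
  unfold W
  rw [← add_assoc (m + 1) k 1, prod_range_succ _ (m + 1 + k), prod_range_succ _ k]
  push_cast
  generalize (∏ i ∈ range k, (x + (i : ℝ) * α)) = P
  generalize (∏ i ∈ range (m + 1), (1 + (i : ℝ) * α)) = Q
  generalize (∏ i ∈ range (m + 1 + k), (1 + x + (i : ℝ) * α)) = R at h3
  rw [mul_div_assoc', mul_div_assoc', div_eq_div_iff (by positivity) (by positivity)]
  linear_combination (-P * (x + k * α) * Q * R * (1 + x + (m + 1 + k : ℝ) * α)) * hch

lemma W_succ_left (hα : 0 ≤ α) (hx : 0 ≤ x) (m k : ℕ) :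
    (m + 1 : ℝ) * (1 + x + (m + 1 + k : ℝ) * α) * W (m + 1) α x k
      = (m + 1 + k : ℝ) * (1 + (m + 1) * α) * W m α x k := by
  have hch : (m + 1 + k : ℝ) * (Nat.choose (m + k) k : ℝ)
      = (Nat.choose (m + 1 + k) k : ℝ) * (m + 1) := by
    have := Nat.add_one_mul_choose_eq (m + k) m
    rw [Nat.choose_symm_add, show m + k + 1 = (m + 1) + k by ring, Nat.choose_symm_add] at this
    have h2 : ((m + 1 + k : ℕ) : ℝ) * (Nat.choose (m + k) k : ℝ)
      = (Nat.choose (m + 1 + k) k : ℝ) * ((m + 1 : ℕ) : ℝ) := by exact_mod_cast this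
    push_cast at h2
    exact h2
  have h3 : 0 < ∏ i ∈ range (m + 1 + k), (1 + x + (i : ℝ) * α) :=
    prod_pos fun i _ => by positivity
  have h4 : 0 < 1 + x + (m + 1 + k : ℝ) * α := by positivity
  unfold W
  rw [show m + 1 + 1 + k = m + 1 + k + 1 by ring, prod_range_succ _ (m + 1 + k),
    prod_range_succ _ (m + 1)]
  push_cast
  generalize (∏ i ∈ range k, (x + (i : ℝ) * α)) = P
  generalize (∏ i ∈ range (m + 1), (1 + (i : ℝ) * α)) = Q
  generalize (∏ i ∈ range (m + 1 + k), (1 + x + (i : ℝ) * α)) = R at h3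
  rw [mul_div_assoc', mul_div_assoc', div_eq_div_iff (by positivity) (by positivity)]
  linear_combination (-P * (1 + (m + 1) * α) * Q * R * (1 + x + (m + 1 + k : ℝ) * α)) * hch

/-- The first moment: summing the recurrence, the gap is exactly `K (1+x+(m+K)α) w_K ≥ 0`. -/
lemma sum_mul_W_le (hα : 0 ≤ α) (hx : 0 ≤ x) (m K : ℕ) :
    (1 - α) * ∑ k ∈ range K, k * W m α x k ≤ (m + 1) * x * ∑ k ∈ range K, W m α x k := by
  have key : (m + 1) * x * ∑ k ∈ range K, W m α x k - (1 - α) * ∑ k ∈ range K, k * W m α x k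
      = K * (1 + x + (m + K) * α) * W m α x K := by
    induction K with
    | zero => simp
    | succ K ih =>
      rw [sum_range_succ, sum_range_succ]
      have := W_succ hα hx m K
      push_cast
      linear_combination ih - this
  have := W_nonneg hα hx m K
  have : 0 ≤ K * (1 + x + (m + K) * α) * W m α x K := by positivity
  linarith

/-- The second moment: the recurrence times `k + 1`, summed. -/
lemma sum_sq_mul_W_le (hα : 0 ≤ α) (hx : 0 ≤ x) (m K : ℕ) :
    (1 - 2 * α) * ∑ k ∈ range K, (k : ℝ) ^ 2 * W m α x k
      ≤ ((m + 1) * x + (m + 1) * α + x) * ∑ k ∈ range K, k * W m α x k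
        + (m + 1) * x * ∑ k ∈ range K, W m α x k := by
  have key : ((m + 1) * x + (m + 1) * α + x) * ∑ k ∈ range K, k * W m α x k
        + (m + 1) * x * ∑ k ∈ range K, W m α x k
        - (1 - 2 * α) * ∑ k ∈ range K, (k : ℝ) ^ 2 * W m α x k
      = K * (K * (1 + x + (m + K) * α) * W m α x K) := by
    induction K with
    | zero => simp
    | succ K ih =>
      rw [sum_range_succ, sum_range_succ, sum_range_succ]
      have := W_succ hα hx m K
      push_cast
      linear_combination ih - (K + 1) * this
  have := W_nonneg hα hx m K
  have : 0 ≤ K * (K * (1 + x + (m + K) * α) * W m α x K) := by positivity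
  linarith

lemma sum_W_zero (hα : 0 ≤ α) (hx : 0 ≤ x) (K : ℕ) :
    ∑ k ∈ range K, W 0 α x k = 1 - (1 + x + K * α) * W 0 α x K := by
  induction K with
  | zero =>
    have : 1 + x ≠ 0 := by positivity
    simp [W, this]
  | succ K ih =>
    rw [sum_range_succ, ih]
    have h := W_succ hα hx 0 K
    have hK : (K + 1 : ℝ) ≠ 0 := by positivity
    have hstep : (1 + x + (1 + K : ℝ) * α) * W 0 α x (K + 1) = (x + K * α) * W 0 α x K := by
      apply mul_left_cancel₀ hK
      push_cast at h
      linear_combination h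
    push_cast
    linear_combination hstep

/-- The partial sums for two consecutive values of `N = m + 1` differ by `K w_K / N`. -/
lemma sum_W_sub (hα : 0 ≤ α) (hx : 0 ≤ x) (m K : ℕ) :
    ∑ k ∈ range K, W (m + 1) α x k = ∑ k ∈ range K, W m α x k - K * W m α x K / (m + 1) := by
  induction K with
  | zero => simp
  | succ K ih =>
    rw [sum_range_succ, sum_range_succ, ih]
    have h1 := W_succ hα hx m K
    have h2 := W_succ_left hα hx m K
    have h4 : 0 < 1 + x + (m + 1 + K : ℝ) * α := by positivity
    have hm : (m + 1 : ℝ) ≠ 0 := by positivity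
    have h5 : (m + 1 : ℝ) * W (m + 1) α x K + (K + 1) * W m α x (K + 1)
        = (m + 1 + K) * W m α x K := by
      apply mul_left_cancel₀ h4.ne'
      linear_combination h1 + h2
    push_cast
    field_simp
    linear_combination h5

lemma sum_W_le_one (hα : 0 ≤ α) (hx : 0 ≤ x) (m K : ℕ) : ∑ k ∈ range K, W m α x k ≤ 1 := by
  induction m with
  | zero =>
    rw [sum_W_zero hα hx]
    have := W_nonneg hα hx 0 K
    have : 0 ≤ (1 + x + K * α) * W 0 α x K := by positivity
    linarith
  | succ m ih =>
    rw [sum_W_sub hα hx]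
    have := W_nonneg hα hx m K
    have : 0 ≤ K * W m α x K / (m + 1) := by positivity
    linarith

lemma summable_W (hα : 0 ≤ α) (hx : 0 ≤ x) (m : ℕ) : Summable (W m α x) :=
  summable_of_sum_range_le (W_nonneg hα hx m) (sum_W_le_one hα hx m)

lemma summable_mul_W (hα : 0 ≤ α) (hα2 : α < 1 / 2) (hx : 0 ≤ x) (m : ℕ) :
    Summable fun k : ℕ => (k : ℝ) * W m α x k := by
  refine summable_of_sum_range_le (c := (m + 1) * x / (1 - α))
    (fun k => mul_nonneg k.cast_nonneg (W_nonneg hα hx m k)) fun K => ?_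
  rw [le_div_iff₀' (by linarith)]
  refine (sum_mul_W_le hα hx m K).trans ?_
  exact mul_le_of_le_one_right (by positivity) (sum_W_le_one hα hx m K)

lemma summable_sq_mul_W (hα : 0 ≤ α) (hα2 : α < 1 / 2) (hx : 0 ≤ x) (m : ℕ) :
    Summable fun k : ℕ => (k : ℝ) ^ 2 * W m α x k := by
  refine summable_of_sum_range_le
    (c := (((m + 1) * x + (m + 1) * α + x) * (∑' k : ℕ, (k : ℝ) * W m α x k)
      + (m + 1) * x) / (1 - 2 * α))
    (fun k => mul_nonneg (by positivity) (W_nonneg hα hx m k)) fun K => ?_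
  rw [le_div_iff₀' (by linarith)]
  refine (sum_sq_mul_W_le hα hx m K).trans ?_
  have h1 := (summable_mul_W hα hα2 hx m).sum_le_tsum (range K)
    (fun k _ => mul_nonneg k.cast_nonneg (W_nonneg hα hx m k))
  have h2 : (m + 1) * x * ∑ k ∈ range K, W m α x k ≤ (m + 1) * x :=
    mul_le_of_le_one_right (by positivity) (sum_W_le_one hα hx m K)
  gcongr

lemma hasSum_W (hα : 0 ≤ α) (hα2 : α < 1 / 2) (hx : 0 ≤ x) (m : ℕ) :
    HasSum (W m α x) 1 := by
  rw [(summable_W hα hx m).hasSum_iff_tendsto_nat]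
  induction m with
  | zero =>
    have h1 := (summable_W hα hx 0).tendsto_atTop_zero
    have h2 := (summable_mul_W hα hα2 hx 0).tendsto_atTop_zero
    have h3 := ((h1.const_mul (1 + x)).add (h2.const_mul α)).const_sub 1
    simp only [mul_zero, add_zero, sub_zero] at h3
    refine h3.congr fun K => ?_
    rw [sum_W_zero hα hx]
    ring
  | succ m ih =>
    have h2 := ((summable_mul_W hα hα2 hx m).tendsto_atTop_zero).div_const (m + 1 : ℝ)
    have h3 := ih.sub h2
    simp only [zero_div, sub_zero] at h3
    exact h3.congr fun K => (sum_W_sub hα hx m K).symm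

lemma summable_W_sq_sub (hα : 0 ≤ α) (hα2 : α < 1 / 2) (hx : 0 ≤ x) (m n : ℕ) :
    Summable fun k : ℕ => W m α x k * ((k : ℝ) / n - x) ^ 2 := by
  have h0 := (summable_W hα hx m).mul_left (x ^ 2)
  have h1 := (summable_mul_W hα hα2 hx m).mul_left (-2 * x / n)
  have h2 := (summable_sq_mul_W hα hα2 hx m).mul_left (1 / (n : ℝ) ^ 2)
  refine ((h0.add h1).add h2).congr fun k => ?_
  ring

end Weights

/-! ### The modulus of continuity -/

section Modulus

variable {f : ℝ → ℝ} {B δ : ℝ}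

lemma omegaOn_nonneg : 0 ≤ omegaOn f B δ := by
  apply Real.sSup_nonneg
  rintro y ⟨x, _, t, _, _, rfl⟩
  exact abs_nonneg _

lemma le_omegaOn (hf : ContinuousOn f (Set.Icc 0 B)) {x t : ℝ} (hx : x ∈ Set.Icc 0 B)
    (ht : t ∈ Set.Icc 0 B) (h : |t - x| ≤ δ) : |f t - f x| ≤ omegaOn f B δ := by
  obtain ⟨C, hC⟩ := isCompact_Icc.exists_bound_of_continuousOn hf
  refine le_csSup ⟨C + C, ?_⟩ ⟨x, hx, t, ht, h, rfl⟩
  rintro y ⟨x, hx, t, ht, _, rfl⟩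
  exact (norm_sub_le (f t) (f x)).trans (add_le_add (hC t ht) (hC x hx))

lemma le_mul_omegaOn (hf : ContinuousOn f (Set.Icc 0 B)) (m : ℕ) {x t : ℝ}
    (hx : x ∈ Set.Icc 0 B) (ht : t ∈ Set.Icc 0 B) (h : |t - x| ≤ m * δ) :
    |f t - f x| ≤ m * omegaOn f B δ := by
  induction m generalizing t with
  | zero =>
    have : t - x = 0 := by simpa using h
    simp [sub_eq_zero.1 this]
  | succ m ih =>
    push_cast at h ⊢
    have hm : (0 : ℝ) < m + 1 := by positivity
    -- the intermediate point cuts off one of `m + 1` equal steps from `x` to `t`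
    set y := x + (m / (m + 1) : ℝ) * (t - x) with hy
    have hyx : y - x = (m / (m + 1) : ℝ) * (t - x) := by rw [hy]; ring
    have hty : t - y = (1 / (m + 1) : ℝ) * (t - x) := by rw [hy]; field_simp; ring
    have hyB : y ∈ Set.Icc 0 B := by
      have := (convex_Icc (0 : ℝ) B).add_smul_sub_mem hx ht (t := (m / (m + 1) : ℝ))
        ⟨by positivity, by rw [div_le_one hm]; linarith⟩
      simpa [hy] using this
    have h1 := ih hyB (by
      rw [hyx, abs_mul, abs_of_nonneg (by positivity), div_mul_eq_mul_div, div_le_iff₀ hm]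
      nlinarith [(Nat.cast_nonneg m : (0 : ℝ) ≤ m)])
    have h2 := le_omegaOn (δ := δ) hf hyB ht (by
      rw [hty, abs_mul, abs_of_nonneg (by positivity), div_mul_eq_mul_div, div_le_iff₀ hm]
      linarith)
    have h3 := abs_sub_le (f t) (f y) (f x)
    linarith

lemma le_one_add_mul_omegaOn (hf : ContinuousOn f (Set.Icc 0 B)) (hδ : 0 < δ) {x t : ℝ}
    (hx : x ∈ Set.Icc 0 B) (ht : t ∈ Set.Icc 0 B) :
    |f t - f x| ≤ (1 + (t - x) ^ 2 / δ ^ 2) * omegaOn f B δ := by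
  have hω : 0 ≤ omegaOn f B δ := omegaOn_nonneg
  set r := |t - x| / δ with hr
  have hr0 : 0 ≤ r := by positivity
  have hr2 : (t - x) ^ 2 / δ ^ 2 = r ^ 2 := by rw [hr, div_pow, sq_abs]
  have hrδ : |t - x| = r * δ := by rw [hr]; field_simp
  rw [hr2]
  rcases le_or_gt r 1 with h | h
  · have := le_omegaOn (δ := δ) hf hx ht (by rw [hrδ]; nlinarith)
    nlinarith [mul_nonneg (sq_nonneg r) hω]
  · have h1 := le_mul_omegaOn (δ := δ) hf ⌈r⌉₊ hx ht (by
      rw [hrδ]; exact mul_le_mul_of_nonneg_right (Nat.le_ceil r) hδ.le)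
    have h2 := Nat.ceil_lt_add_one hr0
    refine h1.trans (mul_le_mul_of_nonneg_right ?_ hω)
    nlinarith

lemma pointwise_bound (hfc : ContinuousOn f (Set.Ici 0)) {M : ℝ} (hM : 0 < M)
    (hfb : ∀ t ≥ (0 : ℝ), |f t| ≤ M * (1 + t ^ 2)) {b x t : ℝ}
    (hx : x ∈ Set.Icc 0 b) (ht : 0 ≤ t) (hδ : 0 < δ) :
    |f t - f x| ≤ 4 * M * (1 + b ^ 2) * (t - x) ^ 2
      + (1 + (t - x) ^ 2 / δ ^ 2) * omegaOn f (b + 1) δ := by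
  have hω : 0 ≤ omegaOn f (b + 1) δ := omegaOn_nonneg
  rcases le_or_gt t (b + 1) with h | h
  · have h1 := le_one_add_mul_omegaOn (hfc.mono Set.Icc_subset_Ici_self) hδ
      (⟨hx.1, by linarith [hx.2]⟩ : x ∈ Set.Icc 0 (b + 1)) ⟨ht, h⟩
    have : 0 ≤ 4 * M * (1 + b ^ 2) * (t - x) ^ 2 := by positivity
    linarith
  · have h1 : |f t - f x| ≤ M * (1 + t ^ 2) + M * (1 + x ^ 2) :=
      (abs_sub (f t) (f x)).trans (add_le_add (hfb t ht) (hfb x hx.1))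
    have h2 : 0 ≤ (1 + (t - x) ^ 2 / δ ^ 2) * omegaOn f (b + 1) δ := by positivity
    have hs : 1 ≤ (t - x) ^ 2 := by nlinarith [hx.2]
    have hxb : x ^ 2 ≤ b ^ 2 := by nlinarith [hx.1, hx.2]
    -- `t² ≤ 2 (t - x)² + 2 x²`, and every remaining constant is absorbed by `(t - x)² ≥ 1`
    have h3 : (1 + t ^ 2) + (1 + x ^ 2) ≤ 4 * (1 + b ^ 2) * (t - x) ^ 2 := by
      nlinarith [sq_nonneg (t - 2 * x), mul_nonneg (sq_nonneg b) (sub_nonneg.2 hs)]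
    have h4 := mul_le_mul_of_nonneg_left h3 hM.le
    linarith

end Modulus

/-! ### The estimate -/

/-- for `f : [0,∞) → ℝ` continuous with `|f(t)| ≤ M_f(1+t²)`,
for every `b > 0` and `x ∈ [0,b]`,
`|L_n^{(α)}(f;x) - f(x)| ≤ 4 M_f (1+b²) φ_n^{(α)}(x) + 2 ω_{b+1}(f, √(φ_n^{(α)}(x)))`. -/
theorem weighted_local_estimate (n p : ℕ) (hn : 1 ≤ n) (α : ℝ) (hα : 0 ≤ α)
    (hα2 : α < 1/2) (f : ℝ → ℝ) (hfc : ContinuousOn f (Set.Ici 0))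
    (Mf : ℝ) (hMf : 0 < Mf) (hfb : ∀ t ≥ (0 : ℝ), |f t| ≤ Mf * (1 + t ^ 2))
    (b : ℝ) (hb : 0 < b) (x : ℝ) (hx : x ∈ Set.Icc (0 : ℝ) b) :
    |(∑' k : ℕ, w0 n p α x k * f ((k : ℝ) / n)) - f x| ≤
      4 * Mf * (1 + b ^ 2) * (∑' k : ℕ, w0 n p α x k * ((k : ℝ) / n - x) ^ 2) +
        2 * omegaOn f (b + 1)
          (Real.sqrt (∑' k : ℕ, w0 n p α x k * ((k : ℝ) / n - x) ^ 2)) := by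
  obtain ⟨m, hm⟩ : ∃ m, n + p = m + 1 := ⟨n + p - 1, by omega⟩
  simp only [w0_eq_W n p m hm]
  have hx0 := hx.1
  have hW := W_nonneg hα hx0 m
  have hsum := hasSum_W hα hα2 hx0 m
  have hsq := summable_W_sq_sub hα hα2 hx0 m n
  set φ := ∑' k : ℕ, W m α x k * ((k : ℝ) / n - x) ^ 2 with hφ
  have hterm : ∀ k : ℕ, 0 ≤ W m α x k * ((k : ℝ) / n - x) ^ 2 :=
    fun k => mul_nonneg (hW k) (sq_nonneg _)
  have hφ0 : 0 ≤ φ := tsum_nonneg hterm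
  have hω : 0 ≤ omegaOn f (b + 1) (Real.sqrt φ) := omegaOn_nonneg
  rcases hφ0.eq_or_lt with h0 | hpos
  · -- zero variance: every atom of positive mass is the point `x` itself
    have hz : ∀ k : ℕ, W m α x k * ((k : ℝ) / n - x) ^ 2 = 0 :=
      congrFun ((hasSum_zero_iff_of_nonneg hterm).1 (by rw [h0]; exact hsq.hasSum))
    have heq : ∀ k : ℕ, W m α x k * f ((k : ℝ) / n) = W m α x k * f x := by
      intro k
      rcases mul_eq_zero.1 (hz k) with h | h
      · rw [h, zero_mul, zero_mul]
      · rw [sub_eq_zero.1 (pow_eq_zero_iff two_ne_zero |>.1 h)]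
    rw [tsum_congr heq, tsum_mul_right, hsum.tsum_eq, one_mul, sub_self, abs_zero]
    positivity
  · have hδ : 0 < Real.sqrt φ := Real.sqrt_pos.2 hpos
    set ω := omegaOn f (b + 1) (Real.sqrt φ)
    have hpt : ∀ k : ℕ, ‖W m α x k * (f ((k : ℝ) / n) - f x)‖
        ≤ (4 * Mf * (1 + b ^ 2) + ω / φ) * (W m α x k * ((k : ℝ) / n - x) ^ 2)
          + ω * W m α x k := by
      intro k
      have h := pointwise_bound hfc hMf hfb hx (by positivity : (0 : ℝ) ≤ (k : ℝ) / n) hδ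
      rw [Real.sq_sqrt hφ0] at h
      rw [norm_mul, Real.norm_of_nonneg (hW k), Real.norm_eq_abs]
      refine (mul_le_mul_of_nonneg_left h (hW k)).trans (le_of_eq ?_)
      ring
    have hbd := (hsq.hasSum.mul_left (4 * Mf * (1 + b ^ 2) + ω / φ)).add (hsum.mul_left ω)
    have hdiff : Summable fun k : ℕ => W m α x k * (f ((k : ℝ) / n) - f x) :=
      Summable.of_norm_bounded hbd.summable hpt
    have hfs : HasSum (fun k : ℕ => W m α x k * f ((k : ℝ) / n))
        ((∑' k : ℕ, W m α x k * (f ((k : ℝ) / n) - f x)) + 1 * f x) := by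
      refine (hdiff.hasSum.add (hsum.mul_right (f x))).congr_fun ?_
      intro k
      ring
    rw [hfs.tsum_eq, one_mul, add_sub_cancel_right]
    refine (tsum_of_norm_bounded hbd hpt).trans (le_of_eq ?_)
    rw [← hφ]
    field_simp
    ring
end

section
/- Fix a nonnegative integer p and a sequence of reals (α_n)_{n≥1} with α_n ≥ 0 for all n and α_n → 0 as n → ∞. Let f : [0,∞) → ℝ be continuous, suppose there is M_f > 0 with |f(t)| ≤ M_f·(1+t²) for all t ≥ 0, and suppose the limit lim_{x→∞} f(x)/(1+x²) exists and is finite. Then lim_{n→∞} sup_{x ≥ 0} |L_n^{(α_n)}(f;x) - f(x)|/(1+x²) = 0. -/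
open Finset Filter Topology

/-- The weights `w0` with `N` in place of `n + p` and with the constant `1` replaced by a
parameter `a`. -/
noncomputable def polyaW (N : ℕ) (α a x : ℝ) (k : ℕ) : ℝ :=
  (Nat.choose (N + k - 1) k : ℝ) * (∏ i ∈ range k, (x + (i : ℝ) * α)) *
    (∏ i ∈ range N, (a + (i : ℝ) * α)) / (∏ i ∈ range (N + k), (a + x + (i : ℝ) * α))

/-- In the Pólya urn (started with masses `a` for success, `x` for failure, reinforced by `α`), the
probability of moving from `N` successes and `k` failures to `N` successes and `k + 1` failures. -/
noncomputable def polyaR (N : ℕ) (α a x : ℝ) (k : ℕ) : ℝ :=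
  (Nat.choose (N + k) k : ℝ) * (∏ i ∈ range (k + 1), (x + (i : ℝ) * α)) *
    (∏ i ∈ range N, (a + (i : ℝ) * α)) / (∏ i ∈ range (N + k + 1), (a + x + (i : ℝ) * α))

lemma prod_shift_pos {α b : ℝ} (hα : 0 ≤ α) (hb : 0 < b) (m : ℕ) :
    0 < ∏ i ∈ range m, (b + (i : ℝ) * α) :=
  prod_pos fun i _ => by positivity

lemma prod_shift_nonneg {α b : ℝ} (hα : 0 ≤ α) (hb : 0 ≤ b) (m : ℕ) :
    0 ≤ ∏ i ∈ range m, (b + (i : ℝ) * α) :=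
  prod_nonneg fun i _ => by positivity

lemma polyaW_nonneg {α a x : ℝ} (hα : 0 ≤ α) (ha : 0 < a) (hx : 0 ≤ x) (N k : ℕ) :
    0 ≤ polyaW N α a x k := by
  have h1 := prod_shift_nonneg hα hx k
  have h2 := prod_shift_pos hα ha N
  have h3 := prod_shift_pos hα (show 0 < a + x by linarith) (N + k)
  unfold polyaW
  positivity

lemma polyaR_nonneg {α a x : ℝ} (hα : 0 ≤ α) (ha : 0 < a) (hx : 0 ≤ x) (N k : ℕ) :
    0 ≤ polyaR N α a x k := by
  have h1 := prod_shift_nonneg hα hx (k + 1)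
  have h2 := prod_shift_pos hα ha N
  have h3 := prod_shift_pos hα (show 0 < a + x by linarith) (N + k + 1)
  unfold polyaR
  positivity

/-- Conservation of probability at the urn state `(N, 0)`. -/
lemma polyaW_step_zero {α a x : ℝ} (hα : 0 ≤ α) (ha : 0 < a) (hx : 0 ≤ x) (N : ℕ) :
    polyaW (N + 1) α a x 0 + polyaR N α a x 0 = polyaW N α a x 0 := by
  have h3 := (prod_shift_pos hα (show 0 < a + x by linarith) N).ne'
  have h4 : a + x + (N : ℝ) * α ≠ 0 := by positivity
  simp only [polyaW, polyaR, Nat.choose_zero_right, prod_range_succ, range_zero, prod_empty,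
    add_zero]
  generalize ∏ i ∈ range N, (a + x + (i : ℝ) * α) = D at *
  generalize ∏ i ∈ range N, (a + (i : ℝ) * α) = B
  field_simp
  push_cast
  ring

/-- Conservation of probability at the urn state `(N, k + 1)`. -/
lemma polyaW_step_succ {α a x : ℝ} (hα : 0 ≤ α) (ha : 0 < a) (hx : 0 ≤ x) (N k : ℕ) :
    polyaW (N + 1) α a x (k + 1) + polyaR N α a x (k + 1)
      = polyaW N α a x (k + 1) + polyaR N α a x k := by
  have h3 := (prod_shift_pos hα (show 0 < a + x by linarith) (N + k + 1)).ne'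
  have h4 : a + x + ((N + k + 1 : ℕ) : ℝ) * α ≠ 0 := by positivity
  have e1 : N + 1 + (k + 1) - 1 = N + k + 1 := by omega
  have e2 : N + 1 + (k + 1) = N + k + 1 + 1 := by omega
  have e3 : N + (k + 1) - 1 = N + k := by omega
  have e4 : N + (k + 1) = N + k + 1 := by omega
  have hC : ((N + k + 1).choose (k + 1) : ℝ) = (N + k).choose k + (N + k).choose (k + 1) := by
    exact_mod_cast Nat.choose_succ_succ (N + k) k
  simp only [polyaW, polyaR]
  rw [e1, e3, e2, e4, hC, prod_range_succ _ (N + k + 1), prod_range_succ _ (k + 1),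
    prod_range_succ _ N]
  generalize ∏ i ∈ range (N + k + 1), (a + x + (i : ℝ) * α) = D at *
  generalize ∏ i ∈ range (k + 1), (x + (i : ℝ) * α) = A
  generalize ∏ i ∈ range N, (a + (i : ℝ) * α) = B
  push_cast at h4 ⊢
  field_simp
  ring

lemma polyaW_sum_succ {α a x : ℝ} (hα : 0 ≤ α) (ha : 0 < a) (hx : 0 ≤ x) (N K : ℕ) :
    ∑ k ∈ range (K + 1), polyaW (N + 1) α a x k
      = ∑ k ∈ range (K + 1), polyaW N α a x k - polyaR N α a x K := by
  induction K with
  | zero => simpa using eq_sub_of_add_eq (polyaW_step_zero hα ha hx N)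
  | succ K ih =>
    rw [sum_range_succ, ih, sum_range_succ _ (K + 1)]
    linarith [polyaW_step_succ hα ha hx N K]

lemma polyaW_zero_zero (α a x : ℝ) : polyaW 0 α a x 0 = 1 := by simp [polyaW]

lemma polyaW_zero_succ (α a x : ℝ) (k : ℕ) : polyaW 0 α a x (k + 1) = 0 := by simp [polyaW]

lemma polyaW_sum_le_one {α a x : ℝ} (hα : 0 ≤ α) (ha : 0 < a) (hx : 0 ≤ x) (N K : ℕ) :
    ∑ k ∈ range (K + 1), polyaW N α a x k ≤ 1 := by
  induction N with
  | zero => rw [sum_range_succ']; simp [polyaW_zero_zero, polyaW_zero_succ]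
  | succ N ih =>
    rw [polyaW_sum_succ hα ha hx]
    linarith [polyaR_nonneg hα ha hx N K]

lemma polyaW_summable {α a x : ℝ} (hα : 0 ≤ α) (ha : 0 < a) (hx : 0 ≤ x) (N : ℕ) :
    Summable (polyaW N α a x) := by
  refine summable_of_sum_range_le (c := 1) (polyaW_nonneg hα ha hx N) fun K => ?_
  refine le_trans ?_ (polyaW_sum_le_one hα ha hx N K)
  rw [sum_range_succ]
  linarith [polyaW_nonneg hα ha hx N K]

lemma prod_shift_succ (α b : ℝ) (m : ℕ) :
    ∏ i ∈ range (m + 1), (b + (i : ℝ) * α) = b * ∏ i ∈ range m, (b + α + (i : ℝ) * α) := by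
  rw [prod_range_succ', mul_comm]
  congr 1
  · simp
  · refine prod_congr rfl fun i _ => ?_
    push_cast
    ring

lemma polyaR_eq {α a x : ℝ} (haα : α < a) (N k : ℕ) :
    polyaR N α a x k = x / (a - α) * polyaW (N + 1) α (a - α) (x + α) k := by
  have h : a - α ≠ 0 := by linarith
  have e1 : N + 1 + k - 1 = N + k := by omega
  have e2 : N + 1 + k = N + k + 1 := by omega
  have e3 : a - α + (x + α) = a + x := by ring
  simp only [polyaR, polyaW]
  rw [e1, e2, e3, prod_shift_succ α x k, prod_shift_succ α (a - α) N, sub_add_cancel]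
  field_simp

lemma polyaW_shift {α a x : ℝ} (haα : α < a) (N k : ℕ) :
    ((k : ℝ) + 1) * polyaW N α a x (k + 1)
      = N * x / (a - α) * polyaW (N + 1) α (a - α) (x + α) k := by
  have hC : ((N + k).choose (k + 1) : ℝ) * (k + 1) = (N + k).choose k * N := by
    have := Nat.choose_succ_right_eq (N + k) k
    rw [Nat.add_sub_cancel] at this
    exact_mod_cast this
  have hR : ((k : ℝ) + 1) * polyaW N α a x (k + 1) = N * polyaR N α a x k := by
    have e : N + (k + 1) - 1 = N + k := by omega
    simp only [polyaR, polyaW]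
    rw [e, ← add_assoc, ← mul_div_assoc, ← mul_div_assoc]
    congr 1
    linear_combination ((∏ i ∈ range (k + 1), (x + (i : ℝ) * α)) *
      (∏ i ∈ range N, (a + (i : ℝ) * α))) * hC
  rw [hR, polyaR_eq haα]
  ring

lemma polyaW_hasSum {α a x : ℝ} (hα : 0 ≤ α) (haα : α < a) (hx : 0 ≤ x) (N : ℕ) :
    HasSum (polyaW N α a x) 1 := by
  have ha : 0 < a := hα.trans_lt haα
  induction N with
  | zero =>
    have := hasSum_single (f := polyaW 0 α a x) 0 (fun k hk => by
      obtain ⟨m, rfl⟩ := Nat.exists_eq_succ_of_ne_zero hk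
      exact polyaW_zero_succ α a x m)
    rwa [polyaW_zero_zero] at this
  | succ N ih =>
    have hR : Tendsto (polyaR N α a x) atTop (𝓝 0) := by
      have h := (polyaW_summable hα (sub_pos.2 haα) (add_nonneg hx hα)
        (N + 1)).tendsto_atTop_zero.const_mul (x / (a - α))
      rw [mul_zero] at h
      exact h.congr fun k => (polyaR_eq haα N k).symm
    have h1 := (tendsto_add_atTop_iff_nat 1).2 ih.tendsto_sum_nat
    have h2 := h1.sub hR
    rw [sub_zero] at h2
    have h3 := (tendsto_add_atTop_iff_nat 1).2
      (polyaW_summable hα ha hx (N + 1)).hasSum.tendsto_sum_nat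
    have h4 := tendsto_nhds_unique
      (h3.congr fun K => polyaW_sum_succ hα ha hx N K) h2
    rw [← h4]
    exact (polyaW_summable hα ha hx (N + 1)).hasSum

lemma polyaW_first_moment {α a x : ℝ} (hα : 0 ≤ α) (haα : 2 * α < a) (hx : 0 ≤ x) (N : ℕ) :
    HasSum (fun k : ℕ => (k : ℝ) * polyaW N α a x k) (N * x / (a - α)) := by
  have h := (polyaW_hasSum hα (show α < a - α by linarith) (add_nonneg hx hα)
    (N + 1)).mul_left (N * x / (a - α))
  rw [mul_one] at h
  rw [← hasSum_nat_add_iff' 1]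
  simp only [range_one, sum_singleton, Nat.cast_zero, zero_mul, sub_zero, Nat.cast_add,
    Nat.cast_one]
  exact h.congr_fun fun k => polyaW_shift (by linarith) N k

lemma polyaW_second_moment {α a x : ℝ} (hα : 0 ≤ α) (haα : 3 * α < a) (hx : 0 ≤ x) (N : ℕ) :
    HasSum (fun k : ℕ => (k : ℝ) * (k - 1) * polyaW N α a x k)
      (N * x / (a - α) * ((N + 1) * (x + α) / (a - 2 * α))) := by
  have h := (polyaW_first_moment hα (show 2 * α < a - α by linarith) (add_nonneg hx hα)
    (N + 1)).mul_left (N * x / (a - α))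
  have e : a - α - α = a - 2 * α := by ring
  rw [e, Nat.cast_add, Nat.cast_one] at h
  rw [← hasSum_nat_add_iff' 1]
  simp only [range_one, sum_singleton, Nat.cast_zero, zero_mul, sub_zero, Nat.cast_add,
    Nat.cast_one]
  refine h.congr_fun fun k => ?_
  linear_combination (k : ℝ) * polyaW_shift (x := x) (show α < a by linarith) N k

/-- The value of the operator on `t ^ 2` is `x * (x + α) * momA n p α + x * N / (n ^ 2 * (1 - α))`
with `N = n + p`. -/
noncomputable def momA (n p : ℕ) (α : ℝ) : ℝ :=
  ((n : ℝ) + p) * (n + p + 1) / (n ^ 2 * ((1 - α) * (1 - 2 * α)))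

/-- A bound, relative to `1 + x ^ 2`, for the second central moment of the operator: the sum of the
absolute values of its coefficients at `x ^ 2` and at `x`. -/
noncomputable def rho (n p : ℕ) (α : ℝ) : ℝ :=
  |momA n p α - 2 * (((n : ℝ) + p) / (n * (1 - α))) + 1|
    + |momA n p α * α + ((n : ℝ) + p) / (n ^ 2 * (1 - α))|

lemma w0_eq_polyaW (n p : ℕ) (α x : ℝ) (k : ℕ) : w0 n p α x k = polyaW (n + p) α 1 x k := rfl

lemma central_moment {n p : ℕ} {α x : ℝ} (hn : 0 < n) (hα : 0 ≤ α) (hα3 : 3 * α < 1)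
    (hx : 0 ≤ x) :
    ∃ m, HasSum (fun k : ℕ => w0 n p α x k * ((k : ℝ) / n - x) ^ 2) m ∧
      m ≤ rho n p α * (1 + x ^ 2) := by
  have hn' : (n : ℝ) ≠ 0 := by positivity
  have h0 := polyaW_hasSum (a := 1) hα (by linarith) hx (n + p)
  have h1 := polyaW_first_moment (a := 1) hα (by linarith) hx (n + p)
  have h2 := polyaW_second_moment (a := 1) hα hα3 hx (n + p)
  have h := ((h2.mul_left (1 / (n : ℝ) ^ 2)).add
    (h1.mul_left (1 / (n : ℝ) ^ 2 - 2 * x / n))).add (h0.mul_left (x ^ 2))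
  refine ⟨_, h.congr_fun fun k => ?_, ?_⟩
  · rw [w0_eq_polyaW]
    field_simp
    ring
  · have ha : 1 - α ≠ 0 := by linarith
    have hb : 1 - 2 * α ≠ 0 := by linarith
    have key : ∀ u v : ℝ, u * x ^ 2 + v * x ≤ (|u| + |v|) * (1 + x ^ 2) := fun u v => by
      have hxx : x ≤ 1 + x ^ 2 := by nlinarith
      have := mul_le_mul_of_nonneg_right (le_abs_self u) (sq_nonneg x)
      have := mul_le_mul_of_nonneg_right (le_abs_self v) hx
      have := mul_le_mul_of_nonneg_left hxx (abs_nonneg v)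
      nlinarith [abs_nonneg u]
    refine le_trans (le_of_eq ?_) (key _ _)
    unfold momA
    push_cast
    field_simp
    ring

lemma rho_tendsto (p : ℕ) {α : ℕ → ℝ} (hα0 : Tendsto α atTop (𝓝 0)) :
    Tendsto (fun n => rho n p (α n)) atTop (𝓝 0) := by
  have hi : Tendsto (fun n : ℕ => ((n : ℝ))⁻¹) atTop (𝓝 0) := tendsto_inv_atTop_nhds_zero_nat
  -- With `u = 1 / n`, `rho` is a function of `(u, α)` continuous at the origin.
  let F : ℝ × ℝ → ℝ := fun q =>
    |(1 + p * q.1) * (1 + (p + 1) * q.1) / ((1 - q.2) * (1 - 2 * q.2))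
        - 2 * ((1 + p * q.1) / (1 - q.2)) + 1|
      + |(1 + p * q.1) * (1 + (p + 1) * q.1) / ((1 - q.2) * (1 - 2 * q.2)) * q.2
        + q.1 * (1 + p * q.1) / (1 - q.2)|
  have hF : ContinuousAt F (0, 0) := by
    have h1 : ContinuousAt (fun q : ℝ × ℝ => (1 + p * q.1) * (1 + (p + 1) * q.1) /
        ((1 - q.2) * (1 - 2 * q.2))) (0, 0) :=
      ContinuousAt.div (by fun_prop) (by fun_prop) (by norm_num)
    have h2 : ContinuousAt (fun q : ℝ × ℝ => (1 + p * q.1) / (1 - q.2)) (0, 0) :=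
      ContinuousAt.div (by fun_prop) (by fun_prop) (by norm_num)
    have h3 : ContinuousAt (fun q : ℝ × ℝ => q.1 * (1 + p * q.1) / (1 - q.2)) (0, 0) :=
      ContinuousAt.div (by fun_prop) (by fun_prop) (by norm_num)
    exact (((h1.sub (h2.const_mul 2)).add continuousAt_const).abs).add
      (((h1.mul continuousAt_snd).add h3).abs)
  have hF0 : F (0, 0) = 0 := by norm_num [F]
  have h := hF.tendsto.comp (hi.prodMk_nhds hα0)
  rw [hF0] at h
  refine h.congr' ?_
  filter_upwards [eventually_gt_atTop 0,
    hα0.eventually (gt_mem_nhds (show (0 : ℝ) < 1 / 3 by norm_num))]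
    with n hn hαn
  have hn' : (n : ℝ) ≠ 0 := by positivity
  have ha : 1 - α n ≠ 0 := by linarith
  have hb : 1 - 2 * α n ≠ 0 := by linarith
  simp only [Function.comp, F, rho, momA]
  congr 2
  · field_simp
    ring
  · field_simp
    ring

/-- For a function which is `o(t ^ 2)` at infinity. Far from the diagonal, or close to it in a
compact set, `(t - x) ^ 2` or uniform continuity give the bound; elsewhere both values are small
compared with the weight. -/
lemma modulus_bound_of_littleO {h : ℝ → ℝ} (hc : ContinuousOn h (Set.Ici 0)) {M : ℝ} (hM : 0 ≤ M)
    (hb : ∀ t ≥ (0 : ℝ), |h t| ≤ M * (1 + t ^ 2))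
    (hlim : Tendsto (fun x : ℝ => h x / (1 + x ^ 2)) atTop (𝓝 0)) {ε : ℝ} (hε : 0 < ε) :
    ∃ C ≥ 0, ∀ t ≥ (0 : ℝ), ∀ x ≥ (0 : ℝ),
      |h t - h x| ≤ ε * (1 + x ^ 2) + ε * (1 + t ^ 2) + C * (t - x) ^ 2 := by
  obtain ⟨X, hX0, hX⟩ : ∃ X ≥ (0 : ℝ), ∀ t ≥ X, |h t| ≤ ε * (1 + t ^ 2) := by
    obtain ⟨X, hX⟩ := eventually_atTop.1 (Metric.tendsto_nhds.1 hlim ε hε)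
    refine ⟨max X 0, le_max_right _ _, fun t ht => ?_⟩
    have h1 := hX t (le_trans (le_max_left _ _) ht)
    have h2 : (0 : ℝ) < 1 + t ^ 2 := by positivity
    rw [dist_zero_right, Real.norm_eq_abs, abs_div, abs_of_pos h2, div_lt_iff₀ h2] at h1
    exact h1.le
  have huc : UniformContinuousOn h (Set.Icc 0 (X + 1)) :=
    isCompact_Icc.uniformContinuousOn_of_continuous (hc.mono Set.Icc_subset_Ici_self)
  obtain ⟨δ, hδ, hδ'⟩ := Metric.uniformContinuousOn_iff.1 huc ε hε
  set d := min δ 1 with hd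
  have hd0 : 0 < d := lt_min hδ one_pos
  have hdδ : d ≤ δ := min_le_left _ _
  have hd1 : d ≤ 1 := min_le_right _ _
  set B := M * (1 + X ^ 2) / d ^ 2 with hB
  have hB0 : 0 ≤ B := by positivity
  refine ⟨2 * B, by positivity, fun t ht x hx => ?_⟩
  rcases lt_or_ge |t - x| d with hlt | hge
  · have hlt' := abs_lt.1 hlt
    have hq : 0 ≤ 2 * B * (t - x) ^ 2 := by positivity
    by_cases hfar : X ≤ t ∧ X ≤ x
    · have := abs_sub (h t) (h x)
      linarith [hX t hfar.1, hX x hfar.2]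
    · have hmem : t ≤ X + 1 ∧ x ≤ X + 1 := by
        by_contra hcon
        apply hfar
        by_cases h1 : t ≤ X + 1
        · have h2 : X + 1 < x := by
            by_contra h3
            exact hcon ⟨h1, not_lt.1 h3⟩
          constructor <;> linarith
        · constructor <;> linarith
      have h1 := hδ' t ⟨ht, hmem.1⟩ x ⟨hx, hmem.2⟩ (by rw [Real.dist_eq]; linarith)
      rw [Real.dist_eq] at h1
      nlinarith [sq_nonneg x, sq_nonneg t, mul_nonneg hε.le (sq_nonneg x),
        mul_nonneg hε.le (sq_nonneg t)]
  · have hsq : d ^ 2 ≤ (t - x) ^ 2 := by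
      rw [← sq_abs (t - x)]
      exact pow_le_pow_left₀ hd0.le hge 2
    have hone : ∀ y ≥ (0 : ℝ), |h y| ≤ ε * (1 + y ^ 2) + B * (t - x) ^ 2 := by
      intro y hy
      rcases le_total X y with hXy | hXy
      · have : 0 ≤ B * (t - x) ^ 2 := by positivity
        linarith [hX y hXy]
      · have h1 : M * (1 + y ^ 2) ≤ M * (1 + X ^ 2) := by gcongr
        have h2 : M * (1 + X ^ 2) = B * d ^ 2 := by rw [hB]; field_simp
        have h3 : B * d ^ 2 ≤ B * (t - x) ^ 2 := by gcongr
        have h4 : 0 ≤ ε * (1 + y ^ 2) := by positivity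
        linarith [hb y hy]
    have := abs_sub (h t) (h x)
    linarith [hone t ht, hone x hx]

lemma modulus_bound {f : ℝ → ℝ} (hfc : ContinuousOn f (Set.Ici 0)) {M : ℝ} (hM : 0 < M)
    (hfb : ∀ t ≥ (0 : ℝ), |f t| ≤ M * (1 + t ^ 2)) {l : ℝ}
    (hlim : Tendsto (fun x : ℝ => f x / (1 + x ^ 2)) atTop (𝓝 l)) {ε : ℝ} (hε : 0 < ε) :
    ∃ C ≥ 0, ∀ t ≥ (0 : ℝ), ∀ x ≥ (0 : ℝ),
      |f t - f x| ≤ ε * (1 + x ^ 2) + C * (t - x) ^ 2 := by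
  -- Apply the previous bound to `h t = f t - l * (1 + t ^ 2)`.
  have hlim' : Tendsto (fun x : ℝ => (f x - l * (1 + x ^ 2)) / (1 + x ^ 2)) atTop (𝓝 0) := by
    have h1 := hlim.sub_const l
    rw [sub_self] at h1
    refine h1.congr fun x => ?_
    have : (1 : ℝ) + x ^ 2 ≠ 0 := by positivity
    field_simp
  obtain ⟨C, hC, hh⟩ := modulus_bound_of_littleO (h := fun t => f t - l * (1 + t ^ 2))
    (M := M + |l|) (hfc.sub (by fun_prop)) (by positivity)
    (fun t ht => by
      have h1 := abs_sub (f t) (l * (1 + t ^ 2))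
      rw [abs_mul, abs_of_pos (show (0 : ℝ) < 1 + t ^ 2 by positivity)] at h1
      linarith [hfb t ht]) hlim' (show 0 < ε / 6 by positivity)
  -- `η * |l| ≤ ε / 2`, so that `|l| * |t² - x²| ≤ |l| * (η x² + (1 + 1/η) (t - x)²)` is admissible.
  set η := ε / (2 * (|l| + 1)) with hη
  have hl : 0 ≤ |l| := abs_nonneg l
  have hη0 : 0 < η := by positivity
  have hηl : |l| * η ≤ ε / 2 := by
    have : (|l| + 1) * η = ε / 2 := by rw [hη]; field_simp
    nlinarith
  refine ⟨C + ε / 3 + |l| * (1 + 1 / η), by positivity, fun t ht x hx => ?_⟩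
  have h1 := hh t ht x hx
  have h2 : |t ^ 2 - x ^ 2| ≤ η * x ^ 2 + (1 + 1 / η) * (t - x) ^ 2 := by
    have e1 : 0 ≤ (η * x - (t - x)) ^ 2 / η := by positivity
    have e2 : 0 ≤ (η * x + (t - x)) ^ 2 / η := by positivity
    have e3 : (η * x - (t - x)) ^ 2 / η = η * x ^ 2 - 2 * x * (t - x) + 1 / η * (t - x) ^ 2 := by
      field_simp
      ring
    have e4 : (η * x + (t - x)) ^ 2 / η = η * x ^ 2 + 2 * x * (t - x) + 1 / η * (t - x) ^ 2 := by
      field_simp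
      ring
    rw [abs_le]
    constructor <;> nlinarith [sq_nonneg (t - x)]
  have h3 : |f t - f x| ≤ |(f t - l * (1 + t ^ 2)) - (f x - l * (1 + x ^ 2))|
      + |l| * |t ^ 2 - x ^ 2| := by
    rw [← abs_mul]
    refine le_trans (le_of_eq ?_) (abs_add_le _ _)
    congr 1
    ring
  have h4 := mul_le_mul_of_nonneg_left h2 hl
  have h5 : t ^ 2 ≤ 2 * x ^ 2 + 2 * (t - x) ^ 2 := by nlinarith [sq_nonneg (t - 2 * x)]
  have h6 := mul_le_mul_of_nonneg_right hηl (sq_nonneg x)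
  have h7 := mul_le_mul_of_nonneg_left h5 hε.le
  linarith

/-- weighted approximation. For `α_n ≥ 0` with `α_n → 0`, and `f`
continuous on `[0,∞)` with `|f(t)| ≤ M_f(1+t²)` and `f(x)/(1+x²)` having a finite
limit as `x → ∞`,
`lim_{n→∞} sup_{x ≥ 0} |L_n^{(α_n)}(f;x) - f(x)|/(1+x²) = 0`. -/
theorem weighted_convergence (p : ℕ) (α : ℕ → ℝ) (hα : ∀ n, 0 ≤ α n)
    (hα0 : Filter.Tendsto α Filter.atTop (nhds 0))
    (f : ℝ → ℝ) (hfc : ContinuousOn f (Set.Ici 0))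
    (Mf : ℝ) (hMf : 0 < Mf) (hfb : ∀ t ≥ (0 : ℝ), |f t| ≤ Mf * (1 + t ^ 2))
    (hlim : ∃ l : ℝ, Filter.Tendsto (fun x : ℝ => f x / (1 + x ^ 2))
      Filter.atTop (nhds l)) :
    Filter.Tendsto
      (fun n : ℕ => ⨆ x : Set.Ici (0 : ℝ),
        |(∑' k : ℕ, w0 n p (α n) (x : ℝ) k * f ((k : ℝ) / n)) - f x| / (1 + (x : ℝ) ^ 2))
      Filter.atTop (nhds 0) := by
  obtain ⟨l, hl⟩ := hlim
  rw [Metric.tendsto_nhds]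
  intro ε hε
  obtain ⟨C, hC, hf⟩ := modulus_bound hfc hMf hfb hl (show 0 < ε / 2 by positivity)
  have hρ := (rho_tendsto p hα0).const_mul C
  rw [mul_zero] at hρ
  filter_upwards [eventually_gt_atTop 0,
    hα0.eventually (gt_mem_nhds (show (0 : ℝ) < 1 / 3 by norm_num)),
    hρ.eventually (gt_mem_nhds (show 0 < ε / 4 by positivity))] with n hn hαn hρn
  have hnonneg : 0 ≤ ⨆ x : Set.Ici (0 : ℝ),
      |(∑' k : ℕ, w0 n p (α n) (x : ℝ) k * f ((k : ℝ) / n)) - f x| / (1 + (x : ℝ) ^ 2) :=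
    Real.iSup_nonneg fun x => by positivity
  rw [dist_zero_right, Real.norm_eq_abs, abs_of_nonneg hnonneg]
  refine lt_of_le_of_lt (b := 3 * ε / 4) (Real.iSup_le ?_ (by positivity)) (by linarith)
  rintro ⟨x, hx⟩
  have hx : 0 ≤ x := hx
  simp only
  have hpos : (0 : ℝ) < 1 + x ^ 2 := by positivity
  obtain ⟨m, hm, hmle⟩ := central_moment (p := p) hn (hα n) (by linarith) hx
  have hw : ∀ k, 0 ≤ w0 n p (α n) x k := fun k => polyaW_nonneg (hα n) one_pos hx (n + p) k
  have h0 : HasSum (w0 n p (α n) x) 1 := polyaW_hasSum (hα n) (by linarith) hx (n + p)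
  have hbd := (h0.mul_left (ε / 2 * (1 + x ^ 2))).add (hm.mul_left C)
  have hle : ∀ k : ℕ, ‖w0 n p (α n) x k * (f ((k : ℝ) / n) - f x)‖
      ≤ ε / 2 * (1 + x ^ 2) * w0 n p (α n) x k
        + C * (w0 n p (α n) x k * ((k : ℝ) / n - x) ^ 2) := fun k => by
    rw [norm_mul, Real.norm_eq_abs, Real.norm_eq_abs, abs_of_nonneg (hw k)]
    have := mul_le_mul_of_nonneg_left (hf ((k : ℝ) / n) (by positivity) x hx) (hw k)
    linarith
  have hs : Summable fun k : ℕ => w0 n p (α n) x k * (f ((k : ℝ) / n) - f x) :=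
    Summable.of_norm_bounded hbd.summable hle
  have htot : (∑' k : ℕ, w0 n p (α n) x k * f ((k : ℝ) / n)) - f x
      = ∑' k : ℕ, w0 n p (α n) x k * (f ((k : ℝ) / n) - f x) := by
    have h1 := hs.hasSum.add (h0.mul_right (f x))
    rw [one_mul] at h1
    rw [sub_eq_iff_eq_add, ← h1.tsum_eq]
    exact tsum_congr fun k => by ring
  rw [htot, div_le_iff₀ hpos, ← Real.norm_eq_abs]
  refine (tsum_of_norm_bounded hbd hle).trans ?_
  have h1 := mul_le_mul_of_nonneg_left hmle hC
  have h2 := mul_le_mul_of_nonneg_right hρn.le hpos.le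
  linarith
end
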